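/- arXiv:1506.06495 — 6 statements merged into one kernel-verified Lean document; each statement's English description precedes it below -/
import Mathlib

section
/- The quotient L/J is a torsion-free ℤ-module; that is, for every u ∈ L and every nonzero integer k, if k·u ∈ J then u ∈ J. -/
/-!
Put `a = x₁ + x₂`, `b = x₃ + x₄`, `c = x₅ + x₆`. Modulo `J`, the elements `x₁, x₃, x₅` act on
`a, b, c` by `ad x₁ : a ↦ 0, b ↦ [a, b], c ↦ 0`, `ad x₃ : a ↦ [b, a], b ↦ 0, c ↦ 0` and
`ad x₅ : a ↦ 0, b ↦ [c, b], c ↦ 0`, and these nine equations are equivalent to the nine relations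
`v = 0`, `v ∈ 𝒱`. Hence `L/J` is the semidirect sum of the free Lie algebra on `a, b, c` by the free
Lie algebra on `x₁, x₃, x₅`. Concretely, the elements `modelGen` of this semidirect sum satisfy the
relations (`rels_modelGen`), and any homomorphism from `L` whose values on the generators satisfy the
relations factors through the semidirect sum (`lift_eq_zero_of_toModel`), so `J` is the kernel of
`toModel`. It remains to see that a free Lie algebra over a domain `R` is torsion-free
(`free_torsionFree`).

For this, write `γ n` for the lower central series of the free Lie algebra `L(X)`, with `γ 0 = L(X)`.
Lazard elimination of a generator `a` writes an element `u` of `L(X)` as `ψ v + r a`, where `ψ` is the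
homomorphism from the free Lie algebra on the symbols `(n, b)`, `b ≠ a`, sending `(n, b)` to
`(ad a) ^ n b`, and where `v` and `r ∈ R` depend linearly on `u`. If `u` is torsion then `r = 0` and
`v` is torsion, so by induction `v ∈ γ n`. As the map `kill {a}`, which sends `a` to zero and fixes the
other generators, satisfies `kill {a} ∘ ψ = ψ` modulo `γ 1`, it follows that
`u - kill {a} u ∈ γ (n + 1)`. This holds for every generator `a`; killing one by one the generators
occurring in `u` gives `u ∈ γ (n + 1)` (`torsion_mem_lcs`). Finally, `⋂ γ n = 0`, by means of the
grading homomorphism `L(X) → R[t] ⊗ L(X)`, `a ↦ t a` (`eq_zero_of_mem_lcs`).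
-/

/-- `L`, the free Lie algebra over `ℤ` on six generators `x₁, …, x₆`
(indexed here by `Fin 6`, so `x (i-1)` is the paper's `xᵢ`). -/
abbrev L : Type := FreeLieAlgebra ℤ (Fin 6)

/-- The free generators of `L`. -/
noncomputable def x (i : Fin 6) : L := FreeLieAlgebra.of ℤ i

/-- The set `𝒱 = {y₁, y₂, y₃, y₆+y₇, y₇+y₅, y₉+y₈, y₁₀+y₈, y₁₂+y₁₃, y₁₅+y₁₃}`,
where `y₁ = [x₂,x₁]`, `y₂ = [x₄,x₃]`, `y₃ = [x₆,x₅]`, `y₅ = [x₄,x₁]`, `y₆ = [x₃,x₂]`,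
`y₇ = [x₄,x₂]`, `y₈ = [x₅,x₁]`, `y₉ = [x₆,x₁]`, `y₁₀ = [x₅,x₂]`, `y₁₂ = [x₅,x₃]`,
`y₁₃ = [x₆,x₃]`, `y₁₅ = [x₆,x₄]` (written with 0-based indices). -/
noncomputable def V : Set L :=
  {⁅x 1, x 0⁆, ⁅x 3, x 2⁆, ⁅x 5, x 4⁆,
   ⁅x 2, x 1⁆ + ⁅x 3, x 1⁆, ⁅x 3, x 1⁆ + ⁅x 3, x 0⁆,
   ⁅x 5, x 0⁆ + ⁅x 4, x 0⁆, ⁅x 4, x 1⁆ + ⁅x 4, x 0⁆,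
   ⁅x 4, x 2⁆ + ⁅x 5, x 2⁆, ⁅x 5, x 3⁆ + ⁅x 5, x 2⁆}

/-- `J`, the Lie ideal of `L` generated by `𝒱`. -/
noncomputable def J : LieIdeal ℤ L := LieSubmodule.lieSpan ℤ L V



namespace FreeLieTF

open TensorProduct Polynomial

variable {R : Type*} [CommRing R]

/-! ### Derivations of free Lie algebras -/

/-- A property that holds on the generators and is stable under the Lie algebra operations holds on
the whole free Lie algebra. -/
theorem free_induction {X : Type*} {p : FreeLieAlgebra R X → Prop}
    (of : ∀ a, p (FreeLieAlgebra.of R a)) (zero : p 0) (add : ∀ a b, p a → p b → p (a + b))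
    (smul : ∀ (r : R) a, p a → p (r • a)) (lie : ∀ a b, p a → p b → p ⁅a, b⁆)
    (u : FreeLieAlgebra R X) : p u := by
  let S : LieSubalgebra R (FreeLieAlgebra R X) :=
    { carrier := {a | p a}
      add_mem' := fun {a b} ha hb => add a b ha hb
      zero_mem' := zero
      smul_mem' := fun r a ha => smul r a ha
      lie_mem' := fun {a b} ha hb => lie a b ha hb }
  let F : FreeLieAlgebra R X →ₗ⁅R⁆ S := FreeLieAlgebra.lift R fun a => ⟨FreeLieAlgebra.of R a, of a⟩
  have h : S.incl.comp F = LieHom.id := by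
    ext a
    simp [F]
  have h2 := LieHom.congr_fun h u
  rw [show u = (F u : FreeLieAlgebra R X) from h2.symm]
  exact (F u).2

section Derivation

variable (K : Type*)

/-- The dual numbers `K[ε]`, `ε² = 0`, over a Lie algebra `K`: the pair `(a, b)` stands for
`a + ε b`. -/
structure Dual where
  fst : K
  snd : K

variable {K}

namespace Dual

@[ext] theorem ext' {p q : Dual K} (h1 : p.fst = q.fst) (h2 : p.snd = q.snd) : p = q := by
  cases p; cases q; simp_all

/-- The underlying bijection with `K × K`, along which the module structure is transported. -/
def toProd : Dual K ≃ K × K where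
  toFun p := (p.fst, p.snd)
  invFun p := ⟨p.1, p.2⟩
  left_inv _ := rfl
  right_inv _ := rfl

variable [LieRing K] [LieAlgebra R K]

instance : AddCommGroup (Dual K) := toProd.addCommGroup
instance : Module R (Dual K) := toProd.module R
instance : Bracket (Dual K) (Dual K) :=
  ⟨fun p q => ⟨⁅p.fst, q.fst⁆, ⁅p.fst, q.snd⁆ + ⁅p.snd, q.fst⁆⟩⟩

@[simp] theorem zero_fst : (0 : Dual K).fst = 0 := rfl
@[simp] theorem zero_snd : (0 : Dual K).snd = 0 := rfl
@[simp] theorem add_fst (p q : Dual K) : (p + q).fst = p.fst + q.fst := rfl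
@[simp] theorem add_snd (p q : Dual K) : (p + q).snd = p.snd + q.snd := rfl
@[simp] theorem smul_fst (r : R) (p : Dual K) : (r • p).fst = r • p.fst := rfl
@[simp] theorem smul_snd (r : R) (p : Dual K) : (r • p).snd = r • p.snd := rfl
@[simp] theorem lie_fst (p q : Dual K) : ⁅p, q⁆.fst = ⁅p.fst, q.fst⁆ := rfl
@[simp] theorem lie_snd (p q : Dual K) : ⁅p, q⁆.snd = ⁅p.fst, q.snd⁆ + ⁅p.snd, q.fst⁆ := rfl

instance : LieRing (Dual K) where
  add_lie _ _ _ := by ext <;> simp; abel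
  lie_add _ _ _ := by ext <;> simp; abel
  lie_self p := by
    ext
    · simp
    · rw [lie_snd, ← lie_skew p.fst, neg_add_cancel, zero_snd]
  leibniz_lie p q r := by
    ext
    · simp
    · simp only [lie_fst, lie_snd, add_snd, lie_add]
      rw [leibniz_lie p.fst q.fst r.snd, leibniz_lie p.fst q.snd r.fst,
        leibniz_lie p.snd q.fst r.fst, add_lie]
      abel

instance : LieAlgebra R (Dual K) where
  lie_smul _ _ _ := by ext <;> simp

end Dual

variable (R) in
/-- The homomorphism `u ↦ u + ε D u`, where `D` is the derivation with `D a = d a` on generators. -/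
noncomputable def dualLift {X : Type*} (d : X → FreeLieAlgebra R X) :
    FreeLieAlgebra R X →ₗ⁅R⁆ Dual (FreeLieAlgebra R X) :=
  FreeLieAlgebra.lift R fun a => ⟨FreeLieAlgebra.of R a, d a⟩

theorem dualLift_fst {X : Type*} (d : X → FreeLieAlgebra R X) (u : FreeLieAlgebra R X) :
    (dualLift R d u).fst = u := by
  induction u using free_induction with
  | of a => simp [dualLift]
  | zero => simp
  | add a b ha hb => simp [ha, hb]
  | smul r a ha => simp [ha]
  | lie a b ha hb => simp [ha, hb]

variable (R) in
/-- The derivation of the free Lie algebra with prescribed values `d` on the generators. -/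
noncomputable def freeDer {X : Type*} (d : X → FreeLieAlgebra R X) :
    LieDerivation R (FreeLieAlgebra R X) (FreeLieAlgebra R X) where
  toFun u := (dualLift R d u).snd
  map_add' _ _ := by simp
  map_smul' _ _ := by simp
  leibniz' a b := by
    change (dualLift R d ⁅a, b⁆).snd = ⁅a, (dualLift R d b).snd⁆ - ⁅b, (dualLift R d a).snd⁆
    rw [LieHom.map_lie, Dual.lie_snd, dualLift_fst, dualLift_fst, ← lie_skew b, sub_neg_eq_add]

@[simp] theorem freeDer_of {X : Type*} (d : X → FreeLieAlgebra R X) (a : X) :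
    freeDer R d (FreeLieAlgebra.of R a) = d a := by
  change (dualLift R d (FreeLieAlgebra.of R a)).snd = d a
  simp [dualLift]

end Derivation

/-! ### Homomorphisms out of semidirect sums -/

section SemiDirect

variable {K H M : Type*} [LieRing K] [LieAlgebra R K] [LieRing H] [LieAlgebra R H]
  [LieRing M] [LieAlgebra R M]

/-- The universal property of the semidirect sum `K ⋊ H`: homomorphisms `f` on `K` and `g` on `H`
assemble to one on `K ⋊ H` when `f` intertwines the action of `H` with `ad ∘ g`. -/
def semiLift {D : H →ₗ⁅R⁆ LieDerivation R K K} (f : K →ₗ⁅R⁆ M) (g : H →ₗ⁅R⁆ M)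
    (hfg : ∀ h k, f (D h k) = ⁅g h, f k⁆) :
    LieAlgebra.SemiDirectSum K H D →ₗ⁅R⁆ M where
  toFun p := f p.left + g p.right
  map_add' p q := by simp; abel
  map_smul' r p := by simp
  map_lie' {p q} := by
    simp [hfg]
    rw [← lie_skew (f p.left) (g q.right)]
    abel

@[simp] theorem semiLift_apply {D : H →ₗ⁅R⁆ LieDerivation R K K} (f : K →ₗ⁅R⁆ M) (g : H →ₗ⁅R⁆ M)
    (hfg : ∀ h k, f (D h k) = ⁅g h, f k⁆) (p) :
    semiLift f g hfg p = f p.left + g p.right := rfl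

/-- For free Lie algebras, the compatibility required by `semiLift` need only be checked on pairs
of generators. -/
theorem free_hfg {X Y : Type*}
    {D : FreeLieAlgebra R Y →ₗ⁅R⁆ LieDerivation R (FreeLieAlgebra R X) (FreeLieAlgebra R X)}
    (f : FreeLieAlgebra R X →ₗ⁅R⁆ M) (g : FreeLieAlgebra R Y →ₗ⁅R⁆ M)
    (h : ∀ b a, f (D (.of R b) (.of R a)) = ⁅g (.of R b), f (.of R a)⁆) (v u) :
    f (D v u) = ⁅g v, f u⁆ := by
  induction v using free_induction generalizing u with
  | of b =>
    induction u using free_induction with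
    | of a => exact h b a
    | zero => simp
    | add a b ha hb => simp [ha, hb]
    | smul r a ha => simp [ha]
    | lie a b ha hb =>
      rw [LieDerivation.apply_lie_eq_add, map_add, LieHom.map_lie, LieHom.map_lie, LieHom.map_lie,
        ha, hb, leibniz_lie (g _), add_comm]
  | zero => simp
  | add a b ha hb => simp [ha, hb]
  | smul r a ha => simp [ha]
  | lie a b ha hb => simp [ha, hb]

end SemiDirect

/-! ### Lower central series and residual nilpotence -/

section Residual

variable {X : Type*}

local notation "γ" => LieModule.lowerCentralSeries R (FreeLieAlgebra R X) (FreeLieAlgebra R X)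

/-- Every element of `γ (n + 1)` is a linear combination of brackets `⁅a, b⁆` with `b ∈ γ n`. -/
theorem lcs_induction {K : Type*} [LieRing K] [LieAlgebra R K] {n : ℕ} {p : K → Prop}
    (zero : p 0) (add : ∀ a b, p a → p b → p (a + b)) (smul : ∀ (r : R) a, p a → p (r • a))
    (lie : ∀ a : K, ∀ b ∈ LieModule.lowerCentralSeries R K K n, p ⁅a, b⁆)
    {u : K} (hu : u ∈ LieModule.lowerCentralSeries R K K (n + 1)) : p u := by
  rw [LieModule.lowerCentralSeries_succ, ← LieSubmodule.mem_toSubmodule,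
    LieSubmodule.lieIdeal_oper_eq_linear_span'] at hu
  induction hu using Submodule.span_induction with
  | mem y hy =>
    obtain ⟨a, _, b, hb, rfl⟩ := hy
    exact lie a b hb
  | zero => exact zero
  | add a b _ _ ha hb => exact add a b ha hb
  | smul r a _ ha => exact smul r a ha

theorem lie_mem_lcs {K : Type*} [LieRing K] [LieAlgebra R K] {n : ℕ} (a : K) {b : K}
    (hb : b ∈ LieModule.lowerCentralSeries R K K n) :
    ⁅a, b⁆ ∈ LieModule.lowerCentralSeries R K K (n + 1) := by
  rw [LieModule.lowerCentralSeries_succ]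
  exact LieSubmodule.lie_mem_lie (LieSubmodule.mem_top _) hb

/-- The inclusion `⁅γ 1, γ n⁆ ⊆ γ (n + 2)`, by the Jacobi identity. -/
theorem lie_mem_lcs_one {K : Type*} [LieRing K] [LieAlgebra R K] {n : ℕ} {a b : K}
    (ha : a ∈ LieModule.lowerCentralSeries R K K 1)
    (hb : b ∈ LieModule.lowerCentralSeries R K K n) :
    ⁅a, b⁆ ∈ LieModule.lowerCentralSeries R K K (n + 2) := by
  refine lcs_induction (n := 0) (p := fun a => ⁅a, b⁆ ∈ LieModule.lowerCentralSeries R K K (n + 2))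
    ?_ ?_ ?_ ?_ ha
  · simp
  · intro a b ha hb
    rw [add_lie]; exact add_mem ha hb
  · intro r a ha
    rw [smul_lie]; exact Submodule.smul_mem _ r ha
  · intro c d _
    rw [lie_lie]
    exact sub_mem (lie_mem_lcs _ (lie_mem_lcs _ hb)) (lie_mem_lcs _ (lie_mem_lcs _ hb))

theorem hom_mem_lcs {K M : Type*} [LieRing K] [LieAlgebra R K] [LieRing M] [LieAlgebra R M]
    (f : K →ₗ⁅R⁆ M) (n : ℕ) {u : K} (hu : u ∈ LieModule.lowerCentralSeries R K K n) :
    f u ∈ LieModule.lowerCentralSeries R M M n := by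
  induction n generalizing u with
  | zero => simp
  | succ n ih =>
    refine lcs_induction (p := fun u => f u ∈ LieModule.lowerCentralSeries R M M (n + 1))
      ?_ ?_ ?_ ?_ hu
    · simp
    · intro a b ha hb
      rw [map_add]; exact add_mem ha hb
    · intro r a ha
      rw [map_smul]; exact Submodule.smul_mem _ r ha
    · intro a b hb
      rw [LieHom.map_lie]; exact lie_mem_lcs _ (ih hb)

/-- Two homomorphisms that agree modulo `γ 1` agree on `γ n` modulo `γ (n + 1)`: in an
`(n + 1)`-fold bracket, each replacement of one entry changes the value by an element of
`γ (n + 1)`. -/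
theorem sub_mem_lcs {K M : Type*} [LieRing K] [LieAlgebra R K] [LieRing M] [LieAlgebra R M]
    (f g : K →ₗ⁅R⁆ M) (h : ∀ a, f a - g a ∈ LieModule.lowerCentralSeries R M M 1) (n : ℕ) {u : K}
    (hu : u ∈ LieModule.lowerCentralSeries R K K n) :
    f u - g u ∈ LieModule.lowerCentralSeries R M M (n + 1) := by
  induction n generalizing u with
  | zero => exact h u
  | succ n ih =>
    refine lcs_induction (p := fun u => f u - g u ∈ LieModule.lowerCentralSeries R M M (n + 1 + 1))
      ?_ ?_ ?_ ?_ hu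
    · simp
    · intro a b ha hb
      rw [map_add, map_add, add_sub_add_comm]; exact add_mem ha hb
    · intro r a ha
      rw [map_smul, map_smul, ← smul_sub]; exact Submodule.smul_mem _ r ha
    · intro a b hb
      have : f ⁅a, b⁆ - g ⁅a, b⁆ = ⁅f a - g a, f b⁆ + ⁅g a, f b - g b⁆ := by simp
      rw [this]
      exact add_mem (lie_mem_lcs_one (h a) (hom_mem_lcs f n hb)) (lie_mem_lcs _ (ih hb))

variable (R) in
/-- The grading homomorphism to `R[t] ⊗ L(X)`, sending each generator `a` to `t a`; it multiplies the
homogeneous elements of degree `d` by `t ^ d`. -/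
noncomputable def grade : FreeLieAlgebra R X →ₗ⁅R⁆ R[X] ⊗[R] FreeLieAlgebra R X :=
  FreeLieAlgebra.lift R fun a => (Polynomial.X : R[X]) ⊗ₜ FreeLieAlgebra.of R a

theorem grade_eq_smul (u : FreeLieAlgebra R X) :
    ∃ w, grade R u = (Polynomial.X : R[X]) • w := by
  induction u using free_induction with
  | of a => exact ⟨1 ⊗ₜ FreeLieAlgebra.of R a, by simp [grade, TensorProduct.smul_tmul']⟩
  | zero => exact ⟨0, by simp⟩
  | add a b ha hb =>
    obtain ⟨w, hw⟩ := ha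
    obtain ⟨z, hz⟩ := hb
    exact ⟨w + z, by simp [hw, hz]⟩
  | smul r a ha =>
    obtain ⟨w, hw⟩ := ha
    exact ⟨r • w, by rw [map_smul, hw, smul_comm]⟩
  | lie a b ha hb =>
    obtain ⟨w, hw⟩ := ha
    obtain ⟨z, hz⟩ := hb
    exact ⟨⁅w, (Polynomial.X : R[X]) • z⁆, by rw [LieHom.map_lie, hw, hz]; exact smul_lie (R := R[X]) (L := R[X] ⊗[R] FreeLieAlgebra R X) (M := R[X] ⊗[R] FreeLieAlgebra R X) _ _ _⟩

/-- The grading homomorphism maps `γ n` to multiples of `t ^ n`. -/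
theorem grade_lcs (n : ℕ) {u : FreeLieAlgebra R X} (hu : u ∈ γ n) :
    ∃ w, grade R u = (Polynomial.X ^ n : R[X]) • w := by
  induction n generalizing u with
  | zero => exact ⟨grade R u, by simp⟩
  | succ n ih =>
    refine lcs_induction (p := fun u => ∃ w, grade R u = (Polynomial.X ^ (n + 1) : R[X]) • w)
      ?_ ?_ ?_ ?_ hu
    · exact ⟨0, by simp⟩
    · rintro a b ⟨w, hw⟩ ⟨z, hz⟩
      exact ⟨w + z, by simp [hw, hz]⟩
    · rintro r a ⟨w, hw⟩
      exact ⟨r • w, by rw [map_smul, hw, smul_comm]⟩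
    · intro a b hb
      obtain ⟨w, hw⟩ := grade_eq_smul a
      obtain ⟨z, hz⟩ := ih hb
      exact ⟨⁅w, z⁆, by
        rw [LieHom.map_lie, hw, hz, pow_succ', mul_smul]
        exact (smul_lie (R := R[X]) (L := R[X] ⊗[R] FreeLieAlgebra R X)
          (M := R[X] ⊗[R] FreeLieAlgebra R X) _ _ _).trans (congrArg _ (lie_smul (R := R[X])
            (L := R[X] ⊗[R] FreeLieAlgebra R X) (M := R[X] ⊗[R] FreeLieAlgebra R X) _ _ _))⟩

variable (R) in
/-- The map `R[t] ⊗ M → M` induced by a linear functional `l` on `R[t]`. With `l = lcoeff R i` this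
extracts the coefficient of `t ^ i`; with `l = leval 1` it sets `t = 1`. -/
noncomputable def coeffMap (M : Type*) [AddCommGroup M] [Module R M] (l : R[X] →ₗ[R] R) :
    R[X] ⊗[R] M →ₗ[R] M :=
  (TensorProduct.lid R M).toLinearMap ∘ₗ l.rTensor M

@[simp] theorem coeffMap_tmul (M : Type*) [AddCommGroup M] [Module R M] (l : R[X] →ₗ[R] R)
    (p : R[X]) (m : M) : coeffMap R M l (p ⊗ₜ m) = l p • m := by
  simp [coeffMap]

theorem coeffMap_X_pow_smul (M : Type*) [AddCommGroup M] [Module R M] {i n : ℕ} (h : i < n)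
    (w : R[X] ⊗[R] M) : coeffMap R M (lcoeff R i) ((Polynomial.X ^ n : R[X]) • w) = 0 := by
  induction w using TensorProduct.induction_on with
  | zero => simp
  | tmul p m => simp [TensorProduct.smul_tmul', Polynomial.coeff_X_pow_mul', h.not_ge]
  | add a b ha hb => rw [smul_add, map_add, ha, hb, add_zero]

/-- The value at `t = 1` is the sum of the coefficients. -/
theorem eval_eq_sum (M : Type*) [AddCommGroup M] [Module R M] (w : R[X] ⊗[R] M) :
    ∃ N, ∀ n ≥ N, coeffMap R M (leval 1) w =
      ∑ i ∈ Finset.range n, coeffMap R M (lcoeff R i) w := by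
  induction w using TensorProduct.induction_on with
  | zero => exact ⟨0, by simp⟩
  | tmul p m =>
    refine ⟨p.natDegree + 1, fun n hn => ?_⟩
    simp [← Finset.sum_smul, Polynomial.eval_eq_sum_range' (show p.natDegree < n from hn)]
  | add a b ha hb =>
    obtain ⟨N, hN⟩ := ha
    obtain ⟨N', hN'⟩ := hb
    refine ⟨max N N', fun n hn => ?_⟩
    simp [hN n (by omega), hN' n (by omega), Finset.sum_add_distrib]

/-- Setting `t = 1` respects brackets. -/
theorem eval_lie (M : Type*) [LieRing M] [LieAlgebra R M] (w z : R[X] ⊗[R] M) :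
    coeffMap R M (leval 1) ⁅w, z⁆ = ⁅coeffMap R M (leval 1) w, coeffMap R M (leval 1) z⁆ := by
  induction w using TensorProduct.induction_on with
  | zero =>
    have : ⁅(0 : R[X] ⊗[R] M), z⁆ = 0 := zero_lie z
    simp [this]
  | tmul p m =>
    induction z using TensorProduct.induction_on with
    | zero =>
      have : ⁅p ⊗ₜ[R] m, (0 : R[X] ⊗[R] M)⁆ = 0 := lie_zero (L := R[X] ⊗[R] M) (M := R[X] ⊗[R] M) _
      simp [this]
    | tmul q m' => simp [smul_smul, mul_comm]
    | add a b ha hb =>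
      have : ⁅p ⊗ₜ[R] m, a + b⁆ = ⁅p ⊗ₜ[R] m, a⁆ + ⁅p ⊗ₜ[R] m, b⁆ := LieRing.lie_add _ _ _
      rw [this, map_add, map_add, lie_add, ha, hb]
  | add a b ha hb =>
    have : ⁅a + b, z⁆ = ⁅a, z⁆ + ⁅b, z⁆ := LieRing.add_lie _ _ _
    rw [this, map_add, map_add, add_lie, ha, hb]

theorem eval_grade (u : FreeLieAlgebra R X) : coeffMap R _ (leval 1) (grade R u) = u := by
  induction u using free_induction with
  | of a => simp [grade]
  | zero => simp
  | add a b ha hb => simp [ha, hb]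
  | smul r a ha => simp [ha]
  | lie a b ha hb => rw [LieHom.map_lie, eval_lie, ha, hb]

/-- A free Lie algebra over any commutative ring is residually nilpotent: all the coefficients of
`grade u` vanish when `u` lies in every `γ n`, and their sum is `u`. -/
theorem eq_zero_of_mem_lcs {u : FreeLieAlgebra R X} (hu : ∀ n, u ∈ γ n) : u = 0 := by
  rw [← eval_grade u]
  obtain ⟨N, hN⟩ := eval_eq_sum _ (grade R u)
  rw [hN N le_rfl]
  refine Finset.sum_eq_zero fun i _ => ?_
  obtain ⟨w, hw⟩ := grade_lcs (i + 1) (hu _)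
  rw [hw, coeffMap_X_pow_smul _ (Nat.lt_succ_self i)]

end Residual

/-! ### Lazard elimination and torsion -/

section Elimination

variable {X : Type*}

open Classical in
/-- The endomorphism of the free Lie algebra that sends the generators in `S` to zero and fixes the
others. -/
noncomputable def kill (S : Finset X) : FreeLieAlgebra R X →ₗ⁅R⁆ FreeLieAlgebra R X :=
  FreeLieAlgebra.lift R fun a => if a ∈ S then 0 else FreeLieAlgebra.of R a

/-- Only finitely many generators occur in `u`, and killing them kills `u`. -/
theorem exists_kill_eq_zero (u : FreeLieAlgebra R X) :
    ∃ S : Finset X, ∀ T, S ⊆ T → kill T u = 0 := by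
  classical
  induction u using free_induction with
  | of a => exact ⟨{a}, fun T hT => by simp [kill, Finset.singleton_subset_iff.1 hT]⟩
  | zero => exact ⟨∅, by simp⟩
  | add a b ha hb =>
    obtain ⟨S, hS⟩ := ha
    obtain ⟨S', hS'⟩ := hb
    refine ⟨S ∪ S', fun T hT => ?_⟩
    rw [map_add, hS T (Finset.union_subset_left hT), hS' T (Finset.union_subset_right hT), add_zero]
  | smul r a ha =>
    obtain ⟨S, hS⟩ := ha
    exact ⟨S, fun T hT => by rw [map_smul, hS T hT, smul_zero]⟩
  | lie a b ha _ =>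
    obtain ⟨S, hS⟩ := ha
    exact ⟨S, fun T hT => by rw [LieHom.map_lie, hS T hT, zero_lie]⟩

theorem kill_insert [DecidableEq X] (a : X) (S : Finset X) (u : FreeLieAlgebra R X) :
    kill (insert a S) u = kill S (kill {a} u) := by
  suffices h : kill (R := R) (insert a S) = (kill S).comp (kill {a}) from LieHom.congr_fun h u
  ext b
  by_cases h1 : b = a <;> by_cases h2 : b ∈ S <;> simp [kill, h1, h2]

/-- If killing any single generator changes `u` only by an element of `γ n`, then `u ∈ γ n`: kill,
one at a time, all the generators that occur in `u`. -/
theorem mem_lcs_of_sub_kill {u : FreeLieAlgebra R X} {n : ℕ}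
    (h : ∀ a, u - kill {a} u ∈
      LieModule.lowerCentralSeries R (FreeLieAlgebra R X) (FreeLieAlgebra R X) n) :
    u ∈ LieModule.lowerCentralSeries R (FreeLieAlgebra R X) (FreeLieAlgebra R X) n := by
  classical
  have key : ∀ S : Finset X, u - kill S u ∈
      LieModule.lowerCentralSeries R (FreeLieAlgebra R X) (FreeLieAlgebra R X) n := by
    intro S
    induction S using Finset.induction_on with
    | empty =>
      have : kill (R := R) (∅ : Finset X) = LieHom.id := by ext; simp [kill]
      simp [this]
    | insert a S _ ih =>
      have := add_mem ih (hom_mem_lcs (kill S) n (h a))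
      rwa [map_sub, sub_add_sub_cancel, ← kill_insert] at this
  obtain ⟨S, hS⟩ := exists_kill_eq_zero u
  simpa [hS S subset_rfl] using key S

/-- The free generators of the ideal of `L(X)` complementary to `R a`, in Lazard elimination: the pair
`(n, b)` stands for `(ad a) ^ n b`. -/
abbrev Elim (a : X) := ℕ × {b : X // b ≠ a}

variable (R) in
/-- The derivation `(n, b) ↦ (n + 1, b)` of `L(Elim a)`, which plays the role of `ad a`. -/
noncomputable def shift (a : X) :
    LieDerivation R (FreeLieAlgebra R (Elim a)) (FreeLieAlgebra R (Elim a)) :=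
  freeDer R fun b => FreeLieAlgebra.of R (b.1 + 1, b.2)

-- The base ring, with its zero commutator bracket, serves as the one-dimensional Lie algebra.
attribute [local instance] LieRing.ofAssociativeRing

variable (R) in
/-- The action of the one-dimensional Lie algebra `R` on `L(Elim a)` in which `1` acts by `shift`. -/
noncomputable def shiftHom (a : X) :
    R →ₗ⁅R⁆ LieDerivation R (FreeLieAlgebra R (Elim a)) (FreeLieAlgebra R (Elim a)) where
  __ := LinearMap.toSpanSingleton R _ (shift R a)
  map_lie' {r s} := by
    simp [LieRing.of_associative_ring_bracket, mul_comm]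

theorem shiftHom_apply (a : X) (r : R) (v : FreeLieAlgebra R (Elim a)) :
    shiftHom R a r v = r • shift R a v := rfl

variable (R) in
/-- Lazard elimination, `L(X) → L(Elim a) ⋊ R`, with `a ↦ (0, 1)` and `b ↦ ((0, b), 0)` for
`b ≠ a`. -/
noncomputable def toSemi (a : X) :
    FreeLieAlgebra R X →ₗ⁅R⁆
      LieAlgebra.SemiDirectSum (FreeLieAlgebra R (Elim a)) R (shiftHom R a) :=
  open Classical in
  FreeLieAlgebra.lift R fun b => if h : b = a then ⟨0, 1⟩ else ⟨FreeLieAlgebra.of R (0, ⟨b, h⟩), 0⟩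

variable (R) in
/-- The homomorphism `L(Elim a) → L(X)` sending `(n, b)` to `(ad a) ^ n b`. -/
noncomputable def elimHom (a : X) : FreeLieAlgebra R (Elim a) →ₗ⁅R⁆ FreeLieAlgebra R X :=
  FreeLieAlgebra.lift R fun b =>
    ((LieAlgebra.ad R _ (FreeLieAlgebra.of R a)) ^ b.1) (FreeLieAlgebra.of R b.2.1)

theorem elimHom_shift (a : X) (v : FreeLieAlgebra R (Elim a)) :
    elimHom R a (shift R a v) = ⁅FreeLieAlgebra.of R a, elimHom R a v⁆ := by
  induction v using free_induction with
  | of b => simp [shift, elimHom, pow_succ']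
  | zero => simp
  | add a b ha hb => simp [ha, hb]
  | smul r a ha => simp [ha]
  | lie a b ha hb =>
    rw [LieDerivation.apply_lie_eq_add, map_add, LieHom.map_lie, LieHom.map_lie, LieHom.map_lie,
      ha, hb, leibniz_lie (FreeLieAlgebra.of R _), add_comm]

/-- `u` is recovered from its Lazard components: the homomorphism `L(Elim a) ⋊ R → L(X)` given by
`elimHom` and `r ↦ r a` is a left inverse of `toSemi`. -/
theorem eq_elimHom_add (a : X) (u : FreeLieAlgebra R X) :
    u = elimHom R a (toSemi R a u).left + (toSemi R a u).right • FreeLieAlgebra.of R a := by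
  let g : R →ₗ⁅R⁆ FreeLieAlgebra R X :=
    { __ := LinearMap.toSpanSingleton R _ (FreeLieAlgebra.of R a)
      map_lie' := fun {r s} => by simp [LieRing.of_associative_ring_bracket, mul_comm] }
  have hg : ∀ r, g r = r • FreeLieAlgebra.of R a := fun _ => rfl
  let F := semiLift (D := shiftHom R a) (elimHom R a) g (fun r v => by
    rw [shiftHom_apply, map_smul, elimHom_shift, hg, smul_lie])
  have : F.comp (toSemi R a) = LieHom.id := by
    ext b
    by_cases h : b = a
    · simp [F, toSemi, h, hg]
    · simp [F, toSemi, h, hg, elimHom]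
  exact (LieHom.congr_fun this u).symm

/-- Modulo `γ 1`, killing `a` does not affect the image of `elimHom`: it fixes the images of the
generators `(0, b)`, and those of the generators `(n + 1, b)` already lie in `γ 1`. -/
theorem elimHom_sub_kill (a : X) (v : FreeLieAlgebra R (Elim a)) :
    elimHom R a v - kill {a} (elimHom R a v) ∈
      LieModule.lowerCentralSeries R (FreeLieAlgebra R X) (FreeLieAlgebra R X) 1 := by
  induction v using free_induction with
  | of b =>
    obtain ⟨n, b, hb⟩ := b
    cases n with
    | zero => simp [elimHom, kill, hb]
    | succ n =>
      have h : elimHom R a (.of R (n + 1, ⟨b, hb⟩)) =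
          ⁅FreeLieAlgebra.of R a, elimHom R a (.of R (n, ⟨b, hb⟩))⁆ := by
        simp [elimHom, pow_succ']
      rw [h, LieHom.map_lie]
      exact sub_mem (lie_mem_lcs (n := 0) _ (by simp)) (lie_mem_lcs (n := 0) _ (by simp))
  | zero => simp
  | add a b ha hb =>
    rw [map_add, map_add, add_sub_add_comm]; exact add_mem ha hb
  | smul r a ha =>
    rw [map_smul, map_smul, ← smul_sub]; exact Submodule.smul_mem _ r ha
  | lie a b ha hb =>
    rw [LieHom.map_lie, LieHom.map_lie]
    exact sub_mem (lie_mem_lcs (n := 0) _ (by simp)) (lie_mem_lcs (n := 0) _ (by simp))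

/-- A torsion element `u` lies in every `γ n`. In the Lazard decomposition at a generator `a`, the
component in the domain `R` is torsion, hence zero, and the component in `L(Elim a)` is torsion,
hence in `γ n` by induction; so `u - kill {a} u ∈ γ (n + 1)` for every `a`. The induction runs over
all generating sets at once, because it passes from `X` to `Elim a`. -/
theorem torsion_mem_lcs [IsDomain R] {r : R} (hr : r ≠ 0) (n : ℕ) : ∀ {X : Type*}
    {u : FreeLieAlgebra R X}, r • u = 0 →
    u ∈ LieModule.lowerCentralSeries R (FreeLieAlgebra R X) (FreeLieAlgebra R X) n := by
  induction n with
  | zero => intro X u _; simp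
  | succ n ih =>
    intro X u hu
    refine mem_lcs_of_sub_kill fun a => ?_
    have h1 : r • toSemi R a u = 0 := by rw [← map_smul, hu, map_zero]
    have h2 : r • (toSemi R a u).left = 0 := congrArg (·.left) h1
    have h3 : r • (toSemi R a u).right = 0 := congrArg (·.right) h1
    have h4 := eq_elimHom_add a u
    rw [(smul_eq_zero.1 h3).resolve_left hr, zero_smul, add_zero] at h4
    rw [h4]
    exact sub_mem_lcs (elimHom R a) ((kill {a}).comp (elimHom R a)) (elimHom_sub_kill a) n (ih h2)

/-- A free Lie algebra over a domain is torsion-free. -/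
theorem free_torsionFree [IsDomain R] {r : R} (hr : r ≠ 0) {X : Type*}
    {u : FreeLieAlgebra R X} (hu : r • u = 0) : u = 0 :=
  eq_zero_of_mem_lcs fun n => torsion_mem_lcs hr n hu

end Elimination

end FreeLieTF

namespace McCool

open FreeLieTF

/-! ### The semidirect model of the quotient -/

section Model

variable (R : Type*) [CommRing R]

/-- The free Lie algebra on three generators. -/
abbrev F3 := FreeLieAlgebra R (Fin 3)

/-- The generators of `F3`. -/
noncomputable abbrev e (i : Fin 3) : F3 R := FreeLieAlgebra.of R i

/-- The action of `L(x₁, x₃, x₅)` on `L(a, b, c)` through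
`ad x₁ : b ↦ [a, b]`, `ad x₃ : a ↦ [b, a]` and `ad x₅ : b ↦ [c, b]`, where the other generators are
sent to zero. -/
noncomputable def act : F3 R →ₗ⁅R⁆ LieDerivation R (F3 R) (F3 R) :=
  FreeLieAlgebra.lift R ![freeDer R ![0, ⁅e R 0, e R 1⁆, 0],
    freeDer R ![⁅e R 1, e R 0⁆, 0, 0], freeDer R ![0, ⁅e R 2, e R 1⁆, 0]]

/-- The images of `x₁, …, x₆` in the model: `x₁`, `x₃`, `x₅` are the generators of the acting copy, and
`x₂ = a - x₁`, `x₄ = b - x₃`, `x₆ = c - x₅`. -/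
noncomputable def modelGen : Fin 6 → LieAlgebra.SemiDirectSum (F3 R) (F3 R) (act R) :=
  ![⟨0, e R 0⟩, ⟨e R 0, -e R 0⟩, ⟨0, e R 1⟩, ⟨e R 1, -e R 1⟩, ⟨0, e R 2⟩, ⟨e R 2, -e R 2⟩]

/-- The relations `v = 0`, `v ∈ 𝒱`, for a family of six elements of a Lie ring. -/
def Rels {A : Type*} [LieRing A] (X : Fin 6 → A) : Prop :=
  ⁅X 1, X 0⁆ = 0 ∧ ⁅X 3, X 2⁆ = 0 ∧ ⁅X 5, X 4⁆ = 0 ∧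
  ⁅X 2, X 1⁆ + ⁅X 3, X 1⁆ = 0 ∧ ⁅X 3, X 1⁆ + ⁅X 3, X 0⁆ = 0 ∧
  ⁅X 5, X 0⁆ + ⁅X 4, X 0⁆ = 0 ∧ ⁅X 4, X 1⁆ + ⁅X 4, X 0⁆ = 0 ∧
  ⁅X 4, X 2⁆ + ⁅X 5, X 2⁆ = 0 ∧ ⁅X 5, X 3⁆ + ⁅X 5, X 2⁆ = 0

theorem rels_modelGen : Rels (modelGen R) := by
  -- The bracket and sum written through the `LieRing` structure, as in `Rels`.
  have hb : ∀ p q : LieAlgebra.SemiDirectSum (F3 R) (F3 R) (act R),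
      @Bracket.bracket _ _ LieRing.toBracket p q =
        ⟨⁅p.left, q.left⁆ + act R p.right q.left - act R q.right p.left,
          ⁅p.right, q.right⁆⟩ := fun _ _ => rfl
  have ha : ∀ p q : LieAlgebra.SemiDirectSum (F3 R) (F3 R) (act R),
      @HAdd.hAdd _ _ _ (@instHAdd _ LieRing.toAddCommGroup.toAddCommMonoid.toAdd) p q =
        ⟨p.left + q.left, p.right + q.right⟩ := fun _ _ => rfl
  have hs : ∀ i j, ⁅e R i, e R j⁆ + ⁅e R j, e R i⁆ = 0 := fun i j => by
    rw [← lie_skew, neg_add_cancel]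
  refine ⟨?_, ?_, ?_, ?_, ?_, ?_, ?_, ?_, ?_⟩ <;>
    simp only [hb, ha] <;> ext <;> simp [modelGen, act, hs]

/-- The homomorphism from the free Lie algebra on `x₁, …, x₆` to the model `L(a, b, c) ⋊ L(x₁, x₃, x₅)`. -/
noncomputable def toModel :
    FreeLieAlgebra R (Fin 6) →ₗ⁅R⁆ LieAlgebra.SemiDirectSum (F3 R) (F3 R) (act R) :=
  FreeLieAlgebra.lift R (modelGen R)

variable {R} {A : Type*} [LieRing A] [LieAlgebra R A]

/-- For every family satisfying the relations, `lift R X` factors through the model. -/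
theorem lift_eq_zero_of_toModel {X : Fin 6 → A} (hX : Rels X) {u : FreeLieAlgebra R (Fin 6)}
    (hu : toModel R u = 0) : FreeLieAlgebra.lift R X u = 0 := by
  obtain ⟨h1, h2, h3, h4, h5, h6, h7, h8, h9⟩ := hX
  let f : F3 R →ₗ⁅R⁆ A := FreeLieAlgebra.lift R ![X 0 + X 1, X 2 + X 3, X 4 + X 5]
  let g : F3 R →ₗ⁅R⁆ A := FreeLieAlgebra.lift R ![X 0, X 2, X 4]
  have hfg : ∀ v w, f (act R v w) = ⁅g v, f w⁆ := by
    refine free_hfg f g fun i j => ?_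
    fin_cases i <;> fin_cases j <;> simp [act, f, g]
    all_goals
      have sk : ∀ i j, ⁅X i, X j⁆ = -⁅X j, X i⁆ := fun i j => (lie_skew _ _).symm
      have s10 := sk 1 0
      have s30 := sk 3 0
      have s31 := sk 3 1
      have s32 := sk 3 2
      have s20 := sk 2 0
      have s21 := sk 2 1
      have s40 := sk 4 0
      have s41 := sk 4 1
      have s42 := sk 4 2
      have s43 := sk 4 3
      have s50 := sk 5 0
      have s51 := sk 5 1
      have s52 := sk 5 2
      have s53 := sk 5 3
      have s54 := sk 5 4
      clear sk
      grind
  have key : (semiLift f g hfg).comp (toModel R) = FreeLieAlgebra.lift R X := by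
    ext i
    fin_cases i <;> simp [toModel, modelGen, f, g]
  rw [← key, LieHom.comp_apply, hu, map_zero]

end Model

theorem toModel_eq_zero {u : L} (hu : u ∈ J) : toModel ℤ u = 0 := by
  -- The kernel of `toModel`, as a Lie ideal.
  let I : LieIdeal ℤ L :=
    { carrier := {u | toModel ℤ u = 0}
      add_mem' := fun {a b} (ha : toModel ℤ a = 0) (hb : toModel ℤ b = 0) => by
        simp [ha, hb]
      zero_mem' := map_zero (toModel ℤ)
      smul_mem' := fun k a (ha : toModel ℤ a = 0) => by
        change toModel ℤ (k • a) = 0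
        rw [map_zsmul, ha, smul_zero]
      lie_mem := fun {a b} (hb : toModel ℤ b = 0) => by
        change toModel ℤ ⁅a, b⁆ = 0
        rw [LieHom.map_lie, hb, lie_zero] }
  suffices h : J ≤ I from h hu
  refine LieSubmodule.lieSpan_le.2 fun v hv => ?_
  obtain ⟨h1, h2, h3, h4, h5, h6, h7, h8, h9⟩ := rels_modelGen ℤ
  change toModel ℤ v = 0
  rcases hv with rfl | rfl | rfl | rfl | rfl | rfl | rfl | rfl | rfl <;>
    simpa only [map_add, LieHom.map_lie, toModel, x, FreeLieAlgebra.lift_of_apply]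

/-- The quotient map is the homomorphism determined by the classes of the generators. -/
theorem mk_eq_lift (u : L) : (LieSubmodule.Quotient.mk u : L ⧸ J) =
    FreeLieAlgebra.lift ℤ (fun i => (LieSubmodule.Quotient.mk (x i) : L ⧸ J)) u := by
  induction u using free_induction with
  | of a => simp [x]
  | zero => exact (map_zero _).symm
  | add a b ha hb => rw [map_add, ← ha, ← hb]; rfl
  | smul r a ha =>
    rw [map_smul, ← ha, ← Int.cast_smul_eq_zsmul ℤ]; rfl
  | lie a b ha hb => rw [LieHom.map_lie, ← ha, ← hb]; rfl

theorem rels_mk : Rels fun i => (LieSubmodule.Quotient.mk (x i) : L ⧸ J) := by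
  have hV : ∀ v ∈ V, (LieSubmodule.Quotient.mk v : L ⧸ J) = 0 := fun v hv =>
    (LieSubmodule.Quotient.mk_eq_zero J).2 (LieSubmodule.subset_lieSpan hv)
  refine ⟨?_, ?_, ?_, ?_, ?_, ?_, ?_, ?_, ?_⟩ <;> exact hV _ (by simp [V])

end McCool

/-- The quotient `L/J` is a torsion-free `ℤ`-module: for every `u ∈ L` and every
nonzero integer `k`, if `k • u ∈ J` then `u ∈ J`. -/
theorem LJ_torsionFree (u : L) (k : ℤ) (hk : k ≠ 0) (h : k • u ∈ J) : u ∈ J := by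
  have h1 : k • McCool.toModel ℤ u = 0 := by
    rw [← map_zsmul]
    exact McCool.toModel_eq_zero h
  have h2 : k • (McCool.toModel ℤ u).left = 0 := congrArg (·.left) h1
  have h3 : k • (McCool.toModel ℤ u).right = 0 := congrArg (·.right) h1
  have h4 : McCool.toModel ℤ u = 0 := by
    ext
    · exact FreeLieTF.free_torsionFree hk h2
    · exact FreeLieTF.free_torsionFree hk h3
  rw [← LieSubmodule.Quotient.mk_eq_zero J]
  exact (McCool.mk_eq_lift u).trans (McCool.lift_eq_zero_of_toModel McCool.rels_mk h4)
end

section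
/- J is a free Lie algebra over ℤ: there exist a type X and an isomorphism of Lie algebras over ℤ between J and the free Lie algebra over ℤ on X. -/
namespace FreeIdeal

open FreeLieAlgebra LieAlgebra

/-! ### Free Lie algebras: generation and derivations -/

section General

variable {R : Type} [CommRing R]

theorem lieSpan_range_of (X : Type) :
    LieSubalgebra.lieSpan R (FreeLieAlgebra R X) (Set.range (of R)) = ⊤ := by
  rw [eq_top_iff]
  intro a _
  set K := LieSubalgebra.lieSpan R (FreeLieAlgebra R X) (Set.range (of R)) with hK
  let F : FreeLieAlgebra R X →ₗ⁅R⁆ K :=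
    lift R fun z => ⟨of R z, LieSubalgebra.subset_lieSpan ⟨z, rfl⟩⟩
  have hF : K.incl.comp F = LieHom.id := by
    ext z
    simp [F]
  have h : (F a : FreeLieAlgebra R X) = a := LieHom.congr_fun hF a
  rw [← h]
  exact (F a).2

theorem induction_of {X : Type} {p : FreeLieAlgebra R X → Prop}
    (hof : ∀ z, p (of R z)) (hzero : p 0) (hadd : ∀ a b, p a → p b → p (a + b))
    (hsmul : ∀ (r : R) a, p a → p (r • a)) (hlie : ∀ a b, p a → p b → p ⁅a, b⁆)
    (a : FreeLieAlgebra R X) : p a := by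
  have ha : a ∈ LieSubalgebra.lieSpan R (FreeLieAlgebra R X) (Set.range (of R)) := by
    rw [lieSpan_range_of]
    trivial
  induction ha using LieSubalgebra.lieSpan_induction with
  | mem b hb => obtain ⟨z, rfl⟩ := hb; exact hof z
  | zero => exact hzero
  | add b c _ _ hb hc => exact hadd b c hb hc
  | smul r b _ hb => exact hsmul r b hb
  | lie b c _ _ hb hc => exact hlie b c hb hc

/-- The Lie algebra `K[ε]/(ε²)` of dual numbers over a Lie algebra `K`; the pair `⟨a, b⟩` stands
for `a + ε b`. -/
@[ext] structure Dual (K : Type) where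
  /-- The constant term. -/
  fst : K
  /-- The coefficient of `ε`. -/
  snd : K

namespace Dual

variable {K : Type} [LieRing K] [LieAlgebra R K]

/-- The underlying product of the dual numbers. -/
def toProd : Dual K ≃ K × K where
  toFun a := ⟨a.fst, a.snd⟩
  invFun a := ⟨a.1, a.2⟩
  left_inv _ := rfl
  right_inv _ := rfl

instance : AddCommGroup (Dual K) := toProd.addCommGroup

instance : Module R (Dual K) := toProd.module R

instance : Bracket (Dual K) (Dual K) where
  bracket a b := ⟨⁅a.fst, b.fst⁆, ⁅a.fst, b.snd⁆ + ⁅a.snd, b.fst⁆⟩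

@[simp] lemma fst_zero : (0 : Dual K).fst = 0 := rfl
@[simp] lemma snd_zero : (0 : Dual K).snd = 0 := rfl
@[simp] lemma fst_add (a b : Dual K) : (a + b).fst = a.fst + b.fst := rfl
@[simp] lemma snd_add (a b : Dual K) : (a + b).snd = a.snd + b.snd := rfl
@[simp] lemma fst_smul (r : R) (a : Dual K) : (r • a).fst = r • a.fst := rfl
@[simp] lemma snd_smul (r : R) (a : Dual K) : (r • a).snd = r • a.snd := rfl
@[simp] lemma fst_lie (a b : Dual K) : ⁅a, b⁆.fst = ⁅a.fst, b.fst⁆ := rfl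
@[simp] lemma snd_lie (a b : Dual K) : ⁅a, b⁆.snd = ⁅a.fst, b.snd⁆ + ⁅a.snd, b.fst⁆ := rfl

instance : LieRing (Dual K) where
  add_lie a b c := by ext <;> simp; abel
  lie_add a b c := by ext <;> simp; abel
  lie_self a := by
    ext
    · simp
    · simp only [snd_lie, snd_zero]
      rw [← lie_skew a.fst a.snd]
      abel
  leibniz_lie a b c := by
    ext
    · simp
    · simp only [snd_lie, fst_lie, snd_add, lie_add, add_lie]
      rw [leibniz_lie a.fst b.fst c.snd, leibniz_lie a.fst b.snd c.fst,
        leibniz_lie a.snd b.fst c.fst]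
      abel

instance : LieAlgebra R (Dual K) where
  lie_smul r a b := by ext <;> simp

variable (R K) in
/-- Reduction modulo `ε`. -/
def fstHom : Dual K →ₗ⁅R⁆ K where
  toFun a := a.fst
  map_add' _ _ := rfl
  map_smul' _ _ := rfl
  map_lie' := rfl

end Dual

/-- The Lie homomorphism `a ↦ a + ε d(a)` attached to the derivation `d` extending `f`. -/
noncomputable def dualLift {X : Type} (f : X → FreeLieAlgebra R X) :
    FreeLieAlgebra R X →ₗ⁅R⁆ Dual (FreeLieAlgebra R X) :=
  lift R fun z => ⟨of R z, f z⟩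

theorem dualLift_fst {X : Type} (f : X → FreeLieAlgebra R X) (a : FreeLieAlgebra R X) :
    (dualLift f a).fst = a := by
  have h : (Dual.fstHom R (FreeLieAlgebra R X)).comp (dualLift f) = LieHom.id := by
    ext z
    simp only [LieHom.comp_apply, dualLift, lift_of_apply]
    rfl
  exact LieHom.congr_fun h a

/-- The unique derivation of a free Lie algebra with prescribed values on the generators. -/
noncomputable def der {X : Type} (f : X → FreeLieAlgebra R X) :
    LieDerivation R (FreeLieAlgebra R X) (FreeLieAlgebra R X) where
  toFun a := (dualLift f a).snd
  map_add' a b := by simp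
  map_smul' r a := by simp
  leibniz' a b := by
    change (dualLift f ⁅a, b⁆).snd = ⁅a, (dualLift f b).snd⁆ - ⁅b, (dualLift f a).snd⁆
    rw [LieHom.map_lie, Dual.snd_lie, dualLift_fst, dualLift_fst,
      ← lie_skew b (dualLift f a).snd]
    abel

@[simp] theorem der_of {X : Type} (f : X → FreeLieAlgebra R X) (z : X) :
    der f (of R z) = f z := by
  change (dualLift f (of R z)).snd = f z
  simp [dualLift]

/-! ### Homomorphisms out of a semidirect sum -/

/-- The homomorphism `(k, h) ↦ f k + g h` out of a semidirect sum, for `f` and `g` compatible with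
the action. -/
def sdLift {K H M : Type} [LieRing K] [LieAlgebra R K] [LieRing H] [LieAlgebra R H]
    [LieRing M] [LieAlgebra R M] (ψ : H →ₗ⁅R⁆ LieDerivation R K K)
    (f : K →ₗ⁅R⁆ M) (g : H →ₗ⁅R⁆ M) (hfg : ∀ h k, f (ψ h k) = ⁅g h, f k⁆) :
    (K ⋊⁅ψ⁆ H) →ₗ⁅R⁆ M where
  toFun a := f a.left + g a.right
  map_add' a b := by
    simp only [SemiDirectSum.add_eq_mk, map_add]
    abel
  map_smul' r a := by simp
  map_lie' {a b} := by
    simp only [SemiDirectSum.lie_eq_mk, map_add, map_sub, LieHom.map_lie, hfg, lie_add, add_lie]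
    rw [← lie_skew (f a.left) (g b.right)]
    abel

/-- Compatibility of two homomorphisms with an action of a free Lie algebra by derivations on
another one needs checking on the free generators only. -/
theorem compat_of_generators {A B M : Type} [LieRing M] [LieAlgebra R M]
    (ψ : FreeLieAlgebra R B →ₗ⁅R⁆ LieDerivation R (FreeLieAlgebra R A) (FreeLieAlgebra R A))
    (f : FreeLieAlgebra R A →ₗ⁅R⁆ M) (g : FreeLieAlgebra R B →ₗ⁅R⁆ M)
    (hfg : ∀ b a, f (ψ (of R b) (of R a)) = ⁅g (of R b), f (of R a)⁆)
    (h : FreeLieAlgebra R B) (k : FreeLieAlgebra R A) : f (ψ h k) = ⁅g h, f k⁆ := by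
  induction h using induction_of generalizing k with
  | hof b =>
    induction k using induction_of with
    | hof a => exact hfg b a
    | hzero => simp
    | hadd k l hk hl => simp [hk, hl]
    | hsmul r k hk => simp [hk]
    | hlie k l hk hl =>
      rw [LieDerivation.apply_lie_eq_add, map_add, LieHom.map_lie, LieHom.map_lie, hk, hl,
        LieHom.map_lie, leibniz_lie (g (of R b)) (f k) (f l)]
      abel
  | hzero => simp
  | hadd h h' hh hh' => simp [hh, hh']
  | hsmul r h hh => simp [hh]
  | hlie h h' hh hh' =>
    rw [LieHom.map_lie, LieDerivation.lie_apply, map_sub, hh, hh', hh', hh, LieHom.map_lie,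
      lie_lie]

/-! ### Lazard elimination -/

variable (R) in
/-- The projection killing the generators in `X`. -/
noncomputable def proj (X Y : Type) : FreeLieAlgebra R (X ⊕ Y) →ₗ⁅R⁆ FreeLieAlgebra R Y :=
  lift R (Sum.elim (fun _ => 0) (of R))

variable (R) in
/-- The iterated bracket `[y₁, [y₂, … [yₙ, x]…]]` for the word `y₁ y₂ … yₙ`. -/
noncomputable def word {X Y : Type} : List Y → X → FreeLieAlgebra R (X ⊕ Y)
  | [], z => of R (Sum.inl z)
  | y :: m, z => ⁅(of R (Sum.inr y) : FreeLieAlgebra R (X ⊕ Y)), word m z⁆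

variable (R) in
/-- The homomorphism sending the generator `(m, x)` to the iterated bracket `word m x`. -/
noncomputable def laz (X Y : Type) :
    FreeLieAlgebra R (List Y × X) →ₗ⁅R⁆ FreeLieAlgebra R (X ⊕ Y) :=
  lift R fun p => word R p.1 p.2

variable (R) in
/-- The action of the free Lie algebra on `Y` on the free Lie algebra on `List Y × X`:
the generator `y` acts by prepending the letter `y` to words. -/
noncomputable def lazAct (X Y : Type) : FreeLieAlgebra R Y →ₗ⁅R⁆
    LieDerivation R (FreeLieAlgebra R (List Y × X)) (FreeLieAlgebra R (List Y × X)) :=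
  lift R fun y => der fun p => of R (y :: p.1, p.2)

theorem lazAct_of {X Y : Type} (y : Y) :
    lazAct R X Y (of R y) = der fun p => of R (y :: p.1, p.2) :=
  lift_of_apply _ _

variable (R) in
/-- The homomorphism `Free (X ⊕ Y) → Free (List Y × X) ⋊ Free Y`, which is an isomorphism by Lazard
elimination. -/
noncomputable def lazSplit (X Y : Type) : FreeLieAlgebra R (X ⊕ Y) →ₗ⁅R⁆
    (FreeLieAlgebra R (List Y × X) ⋊⁅lazAct R X Y⁆ FreeLieAlgebra R Y) :=
  lift R (Sum.elim (fun z => SemiDirectSum.inl _ (of R ([], z)))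
    (fun y => SemiDirectSum.inr _ (of R y)))

theorem lazSplit_word {X Y : Type} (m : List Y) (z : X) :
    lazSplit R X Y (word R m z) = SemiDirectSum.inl _ (of R (m, z)) := by
  induction m with
  | nil => simp [word, lazSplit]
  | cons y m ih =>
    have hy : lazSplit R X Y (of R (Sum.inr y)) = SemiDirectSum.inr _ (of R y) := by
      simp [lazSplit]
    rw [word, LieHom.map_lie, ih, hy]
    simp [lazAct_of]

theorem lazSplit_laz {X Y : Type} (a : FreeLieAlgebra R (List Y × X)) :
    lazSplit R X Y (laz R X Y a) = SemiDirectSum.inl _ a := by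
  have h : (lazSplit R X Y).comp (laz R X Y) = SemiDirectSum.inl _ := by
    ext p : 1
    rw [LieHom.comp_apply, laz, lift_of_apply, lazSplit_word]
  exact LieHom.congr_fun h a

theorem laz_injective (X Y : Type) : Function.Injective (laz R X Y) := by
  intro a b hab
  apply SemiDirectSum.inl_injective (lazAct R X Y)
  rw [← lazSplit_laz, ← lazSplit_laz, hab]

/-- Lazard elimination: together with `laz_injective`, this says that the kernel of the projection
`Free (X ⊕ Y) → Free Y` is free on the iterated brackets `word m x`. -/
theorem proj_eq_zero_iff {X Y : Type} (l : FreeLieAlgebra R (X ⊕ Y)) :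
    proj R X Y l = 0 ↔ ∃ a, laz R X Y a = l := by
  have hproj : proj R X Y = (SemiDirectSum.projr _).comp (lazSplit R X Y) := by
    ext z
    rcases z with z | y <;> simp [proj, lazSplit]
  let g : FreeLieAlgebra R Y →ₗ⁅R⁆ FreeLieAlgebra R (X ⊕ Y) := lift R fun y => of R (Sum.inr y)
  have hcompat := compat_of_generators (lazAct R X Y) (laz R X Y) g (by
    intro y p
    simp [lazAct, laz, g, word])
  have hid : (sdLift _ (laz R X Y) g hcompat).comp (lazSplit R X Y) = LieHom.id := by
    ext z
    rcases z with z | y <;> simp [sdLift, lazSplit, laz, g, word]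
  constructor
  · intro hl
    have h₂ : (lazSplit R X Y l).right = 0 := by
      rw [hproj] at hl
      exact hl
    have h₃ : laz R X Y (lazSplit R X Y l).left + g (lazSplit R X Y l).right = l :=
      LieHom.congr_fun hid l
    refine ⟨(lazSplit R X Y l).left, ?_⟩
    rw [h₂, map_zero, add_zero] at h₃
    exact h₃
  · rintro ⟨a, rfl⟩
    rw [hproj, LieHom.comp_apply, lazSplit_laz, SemiDirectSum.projr_inl_apply]

/-! ### The kernel of a homomorphism onto a semidirect sum of free Lie algebras -/

section Twisted

variable {X Y : Type} (d : Y → X → FreeLieAlgebra R X)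

/-- The action of `Free Y` on `Free X` under which the generators `y` act by the derivations
extending `d y`. -/
noncomputable def act : FreeLieAlgebra R Y →ₗ⁅R⁆
    LieDerivation R (FreeLieAlgebra R X) (FreeLieAlgebra R X) :=
  lift R fun y => der (d y)

theorem act_of (y : Y) : act d (of R y) = der (d y) :=
  lift_of_apply _ _

/-- The canonical homomorphism `Free (X ⊕ Y) → Free X ⋊ Free Y`. -/
noncomputable def toSd : FreeLieAlgebra R (X ⊕ Y) →ₗ⁅R⁆
    (FreeLieAlgebra R X ⋊⁅act d⁆ FreeLieAlgebra R Y) :=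
  lift R (Sum.elim (fun z => SemiDirectSum.inl _ (of R z)) (fun y => SemiDirectSum.inr _ (of R y)))

/-- The value of the composite of derivations indexed by a word on a generator. -/
noncomputable def iter : List Y → X → FreeLieAlgebra R X
  | [], z => of R z
  | y :: m, z => der (d y) (iter m z)

/-- The restriction of `toSd d` to the kernel of the projection to `Free Y`, read through `laz`. -/
noncomputable def evalIter : FreeLieAlgebra R (List Y × X) →ₗ⁅R⁆ FreeLieAlgebra R X :=
  lift R fun p => iter d p.1 p.2

theorem toSd_laz (a : FreeLieAlgebra R (List Y × X)) :
    toSd d (laz R X Y a) = SemiDirectSum.inl _ (evalIter d a) := by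
  have h : (toSd d).comp (laz R X Y) = (SemiDirectSum.inl (act d)).comp (evalIter d) := by
    ext p : 1
    obtain ⟨m, z⟩ := p
    simp only [LieHom.comp_apply, laz, evalIter, lift_of_apply]
    induction m with
    | nil => simp [word, iter, toSd]
    | cons y m ih =>
      have hy : toSd d (of R (Sum.inr y)) = SemiDirectSum.inr _ (of R y) := by
        simp [toSd]
      rw [word, LieHom.map_lie, ih, hy]
      simp [act_of, iter]
  exact LieHom.congr_fun h a

variable (X Y) in
/-- The generators of `Free (List Y × X)` indexed by nonempty words. -/
abbrev Pos : Type := Y × List Y × X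

/-- The change of generators of `Free (List Y × X)` which replaces `(m, x)`, for `m` nonempty, by
its difference with `iter d m x`, an element of the subalgebra on the generators `([], x)`. -/
noncomputable def shear : FreeLieAlgebra R (Pos X Y ⊕ X) →ₗ⁅R⁆ FreeLieAlgebra R (List Y × X) :=
  lift R (Sum.elim
    (fun p => of R (p.1 :: p.2.1, p.2.2) - lift R (fun z => of R ([], z)) (iter d (p.1 :: p.2.1) p.2.2))
    (fun z => of R ([], z)))

/-- The inverse of `shear`. -/
noncomputable def unshear : FreeLieAlgebra R (List Y × X) →ₗ⁅R⁆ FreeLieAlgebra R (Pos X Y ⊕ X) :=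
  lift R fun p => match p with
    | ([], z) => of R (Sum.inr z)
    | (y :: m, z) => of R (Sum.inl (y, m, z)) + lift R (fun z => of R (Sum.inr z)) (iter d (y :: m) z)

theorem shear_unshear (a : FreeLieAlgebra R (List Y × X)) : shear d (unshear d a) = a := by
  have h₀ (b : FreeLieAlgebra R X) : shear d (lift R (fun z => of R (Sum.inr z)) b) =
      lift R (fun z => of R (([] : List Y), z)) b := by
    have : (shear d).comp (lift R (fun z => of R (Sum.inr z))) =
        lift R (fun z => of R (([] : List Y), z)) := by
      ext z
      simp [shear]
    exact LieHom.congr_fun this b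
  have h : (shear d).comp (unshear d) = LieHom.id := by
    ext p : 1
    obtain ⟨_ | ⟨y, m⟩, z⟩ := p
    · simp [unshear, shear]
    · simp only [LieHom.comp_apply, unshear, lift_of_apply, map_add, h₀]
      simp [shear]
  exact LieHom.congr_fun h a

theorem unshear_shear (a : FreeLieAlgebra R (Pos X Y ⊕ X)) : unshear d (shear d a) = a := by
  have h₀ (b : FreeLieAlgebra R X) : unshear d (lift R (fun z => of R (([] : List Y), z)) b) =
      lift R (fun z => of R (Sum.inr z)) b := by
    have : (unshear d).comp (lift R (fun z => of R (([] : List Y), z))) =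
        lift R (fun z => of R (Sum.inr z)) := by
      ext z
      simp [unshear]
    exact LieHom.congr_fun this b
  have h : (unshear d).comp (shear d) = LieHom.id := by
    ext p : 1
    obtain ⟨y, m, z⟩ | z := p
    · simp only [LieHom.comp_apply, shear, lift_of_apply, map_sub, Sum.elim_inl, h₀]
      simp [unshear]
    · simp [unshear, shear]
  exact LieHom.congr_fun h a

theorem evalIter_shear (a : FreeLieAlgebra R (Pos X Y ⊕ X)) :
    evalIter d (shear d a) = proj R (Pos X Y) X a := by
  have h₀ (b : FreeLieAlgebra R X) :
      evalIter d (lift R (fun z => of R (([] : List Y), z)) b) = b := by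
    have : (evalIter d).comp (lift R (fun z => of R (([] : List Y), z))) = LieHom.id := by
      ext z
      simp [evalIter, iter]
    exact LieHom.congr_fun this b
  have h : (evalIter d).comp (shear d) = proj R (Pos X Y) X := by
    ext p : 1
    obtain ⟨y, m, z⟩ | z := p
    · simp only [LieHom.comp_apply, shear, lift_of_apply, map_sub, Sum.elim_inl, h₀]
      simp [evalIter, proj]
    · simp [evalIter, shear, proj, iter]
  exact LieHom.congr_fun h a

/-- The parametrisation of the kernel of `toSd d` by a free Lie algebra. -/
noncomputable def kerMap :
    FreeLieAlgebra R (List X × Pos X Y) →ₗ⁅R⁆ FreeLieAlgebra R (X ⊕ Y) :=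
  (laz R X Y).comp ((shear d).comp (laz R (Pos X Y) X))

theorem kerMap_injective : Function.Injective (kerMap d) :=
  (laz_injective X Y).comp
    ((Function.LeftInverse.injective (unshear_shear d)).comp (laz_injective (Pos X Y) X))

theorem toSd_eq_zero_iff (l : FreeLieAlgebra R (X ⊕ Y)) :
    toSd d l = 0 ↔ ∃ a, kerMap d a = l := by
  have hproj : proj R X Y = (SemiDirectSum.projr _).comp (toSd d) := by
    ext z
    rcases z with z | y <;> simp [proj, toSd]
  constructor
  · intro hl
    obtain ⟨s, rfl⟩ := (proj_eq_zero_iff l).1 (by rw [hproj, LieHom.comp_apply, hl, map_zero])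
    rw [toSd_laz, ← map_zero (SemiDirectSum.inl (act d))] at hl
    have hs : evalIter d s = 0 := SemiDirectSum.inl_injective _ hl
    rw [← shear_unshear d s, evalIter_shear] at hs
    obtain ⟨a, ha⟩ := (proj_eq_zero_iff _).1 hs
    refine ⟨a, ?_⟩
    simp only [kerMap, LieHom.comp_apply]
    rw [ha, shear_unshear]
  · rintro ⟨a, rfl⟩
    simp only [kerMap, LieHom.comp_apply]
    rw [toSd_laz, evalIter_shear, (proj_eq_zero_iff _).2 ⟨a, rfl⟩, map_zero]

end Twisted

/-! ### The ideal `J` as the kernel of a homomorphism onto a semidirect sum -/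

section Relators

variable (R)

/-- The free generators of the free Lie algebra of rank six over `R`. -/
noncomputable def e (i : Fin 6) : FreeLieAlgebra R (Fin 6) := of R i

/-- The set `V` over an arbitrary ring of coefficients. -/
noncomputable def rel : Set (FreeLieAlgebra R (Fin 6)) :=
  {⁅e R 1, e R 0⁆, ⁅e R 3, e R 2⁆, ⁅e R 5, e R 4⁆,
   ⁅e R 2, e R 1⁆ + ⁅e R 3, e R 1⁆, ⁅e R 3, e R 1⁆ + ⁅e R 3, e R 0⁆,
   ⁅e R 5, e R 0⁆ + ⁅e R 4, e R 0⁆, ⁅e R 4, e R 1⁆ + ⁅e R 4, e R 0⁆,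
   ⁅e R 4, e R 2⁆ + ⁅e R 5, e R 2⁆, ⁅e R 5, e R 3⁆ + ⁅e R 5, e R 2⁆}

/-- The ideal `J` over an arbitrary ring of coefficients. For `R = ℤ` its `ℤ`-module structure comes
from the free Lie algebra construction, whereas that of `J` comes from the additive group. -/
noncomputable def relIdeal : LieIdeal R (FreeLieAlgebra R (Fin 6)) :=
  LieSubmodule.lieSpan R (FreeLieAlgebra R (Fin 6)) (rel R)

/-- The derivations of the free Lie algebra on `a = x₁ + x₂`, `b = x₃ + x₄`, `c = x₅ + x₆` (the
generators `0, 1, 2`) induced modulo the relators by `x₁`, `x₃`, `x₆`. -/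
noncomputable def d : Fin 3 → Fin 3 → FreeLieAlgebra R (Fin 3) :=
  let a : FreeLieAlgebra R (Fin 3) := of R 0
  let b : FreeLieAlgebra R (Fin 3) := of R 1
  let c : FreeLieAlgebra R (Fin 3) := of R 2
  ![![0, ⁅a, b⁆, 0],
    ![⁅b, a⁆, 0, 0],
    ![⁅c, a⁆, 0, 0]]

/-- The free generators `x₁ + x₂, x₃ + x₄, x₅ + x₆` and `x₁, x₃, x₆`. -/
noncomputable def newGen : FreeLieAlgebra R (Fin 3 ⊕ Fin 3) →ₗ⁅R⁆ FreeLieAlgebra R (Fin 6) :=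
  lift R (Sum.elim ![e R 0 + e R 1, e R 2 + e R 3, e R 4 + e R 5] ![e R 0, e R 2, e R 5])

/-- The inverse of `newGen`. -/
noncomputable def oldGen : FreeLieAlgebra R (Fin 6) →ₗ⁅R⁆ FreeLieAlgebra R (Fin 3 ⊕ Fin 3) :=
  lift R ![of R (Sum.inr 0), of R (Sum.inl 0) - of R (Sum.inr 0),
    of R (Sum.inr 1), of R (Sum.inl 1) - of R (Sum.inr 1),
    of R (Sum.inl 2) - of R (Sum.inr 2), of R (Sum.inr 2)]

theorem newGen_oldGen (l : FreeLieAlgebra R (Fin 6)) : newGen R (oldGen R l) = l := by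
  have h : (newGen R).comp (oldGen R) = LieHom.id := by
    ext i
    fin_cases i <;> simp [newGen, oldGen, e]
  exact LieHom.congr_fun h l

theorem oldGen_newGen (l : FreeLieAlgebra R (Fin 3 ⊕ Fin 3)) : oldGen R (newGen R l) = l := by
  have h : (oldGen R).comp (newGen R) = LieHom.id := by
    ext i
    rcases i with i | i <;> fin_cases i <;> simp [newGen, oldGen, e]
  exact LieHom.congr_fun h l

/-- The homomorphism onto `Free {a, b, c} ⋊ Free {x₁, x₃, x₆}` with kernel `relIdeal R`. -/
noncomputable def quo : FreeLieAlgebra R (Fin 6) →ₗ⁅R⁆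
    (FreeLieAlgebra R (Fin 3) ⋊⁅act (d R)⁆ FreeLieAlgebra R (Fin 3)) :=
  (toSd (d R)).comp (oldGen R)

theorem relIdeal_le_ker : relIdeal R ≤ (quo R).ker := by
  rw [relIdeal, LieSubmodule.lieSpan_le]
  have hl (i : Fin 3) : toSd (d R) (of R (Sum.inl i)) = ⟨of R i, 0⟩ := by simp [toSd]
  have hr (i : Fin 3) : toSd (d R) (of R (Sum.inr i)) = ⟨0, of R i⟩ := by simp [toSd]
  have q0 : quo R (e R 0) = ⟨0, of R 0⟩ := by simp [quo, oldGen, e, hr]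
  have q1 : quo R (e R 1) = ⟨of R 0, -of R 0⟩ := by simp [quo, oldGen, e, hl, hr]
  have q2 : quo R (e R 2) = ⟨0, of R 1⟩ := by simp [quo, oldGen, e, hr]
  have q3 : quo R (e R 3) = ⟨of R 1, -of R 1⟩ := by simp [quo, oldGen, e, hl, hr]
  have q4 : quo R (e R 4) = ⟨of R 2, -of R 2⟩ := by simp [quo, oldGen, e, hl, hr]
  have q5 : quo R (e R 5) = ⟨0, of R 2⟩ := by simp [quo, oldGen, e, hr]
  have d00 : d R 0 0 = 0 := rfl
  have d01 : d R 0 1 = ⁅(of R 0 : FreeLieAlgebra R (Fin 3)), (of R 1 : FreeLieAlgebra R (Fin 3))⁆ :=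
    rfl
  have d02 : d R 0 2 = 0 := rfl
  have d10 : d R 1 0 = ⁅(of R 1 : FreeLieAlgebra R (Fin 3)), (of R 0 : FreeLieAlgebra R (Fin 3))⁆ :=
    rfl
  have d11 : d R 1 1 = 0 := rfl
  have d12 : d R 1 2 = 0 := rfl
  have d20 : d R 2 0 = ⁅(of R 2 : FreeLieAlgebra R (Fin 3)), (of R 0 : FreeLieAlgebra R (Fin 3))⁆ :=
    rfl
  have d21 : d R 2 1 = 0 := rfl
  have d22 : d R 2 2 = 0 := rfl
  have skew (i j : Fin 3) : ⁅(of R i : FreeLieAlgebra R (Fin 3)), (of R j : FreeLieAlgebra R (Fin 3))⁆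
      + ⁅(of R j : FreeLieAlgebra R (Fin 3)), (of R i : FreeLieAlgebra R (Fin 3))⁆ = 0 := by
    rw [← lie_skew, neg_add_cancel]
  intro v hv
  simp only [SetLike.mem_coe, LieHom.mem_ker]
  rcases hv with rfl | rfl | rfl | rfl | rfl | rfl | rfl | rfl | rfl <;>
    simp [q0, q1, q2, q3, q4, q5, act_of, d00, d01, d02, d10, d11, d12, d20, d21, d22, skew]

/-- The quotient map by `relIdeal R` as a homomorphism of Lie algebras. -/
noncomputable def mkI : FreeLieAlgebra R (Fin 6) →ₗ⁅R⁆ FreeLieAlgebra R (Fin 6) ⧸ relIdeal R where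
  toFun l := LieSubmodule.Quotient.mk l
  map_add' _ _ := rfl
  map_smul' _ _ := rfl
  map_lie' := rfl

theorem mkI_of_mem {l : FreeLieAlgebra R (Fin 6)} (h : l ∈ rel R) : mkI R l = 0 :=
  LieSubmodule.Quotient.mk_eq_zero'.2 (LieSubmodule.subset_lieSpan h)

theorem ker_le_relIdeal : (quo R).ker ≤ relIdeal R := by
  let f : FreeLieAlgebra R (Fin 3) →ₗ⁅R⁆ FreeLieAlgebra R (Fin 6) ⧸ relIdeal R :=
    lift R fun i => mkI R (newGen R (of R (Sum.inl i)))
  let g : FreeLieAlgebra R (Fin 3) →ₗ⁅R⁆ FreeLieAlgebra R (Fin 6) ⧸ relIdeal R :=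
    lift R fun i => mkI R (newGen R (of R (Sum.inr i)))
  have hcompat := compat_of_generators (act (d R)) f g (by
    have h1 := mkI_of_mem R (l := ⁅e R 1, e R 0⁆) (by simp [rel])
    have h2 := mkI_of_mem R (l := ⁅e R 3, e R 2⁆) (by simp [rel])
    have h3 := mkI_of_mem R (l := ⁅e R 5, e R 4⁆) (by simp [rel])
    have h4 := mkI_of_mem R (l := ⁅e R 2, e R 1⁆ + ⁅e R 3, e R 1⁆) (by simp [rel])
    have h5 := mkI_of_mem R (l := ⁅e R 3, e R 1⁆ + ⁅e R 3, e R 0⁆) (by simp [rel])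
    have h6 := mkI_of_mem R (l := ⁅e R 5, e R 0⁆ + ⁅e R 4, e R 0⁆) (by simp [rel])
    have h7 := mkI_of_mem R (l := ⁅e R 4, e R 1⁆ + ⁅e R 4, e R 0⁆) (by simp [rel])
    have h8 := mkI_of_mem R (l := ⁅e R 4, e R 2⁆ + ⁅e R 5, e R 2⁆) (by simp [rel])
    have h9 := mkI_of_mem R (l := ⁅e R 5, e R 3⁆ + ⁅e R 5, e R 2⁆) (by simp [rel])
    simp only [map_add, LieHom.map_lie] at h1 h2 h3 h4 h5 h6 h7 h8 h9
    have s1 := lie_skew (mkI R (e R 0)) (mkI R (e R 1))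
    have s2 := lie_skew (mkI R (e R 2)) (mkI R (e R 3))
    have s3 := lie_skew (mkI R (e R 1)) (mkI R (e R 2))
    have s4 := lie_skew (mkI R (e R 1)) (mkI R (e R 3))
    have s5 := lie_skew (mkI R (e R 0)) (mkI R (e R 4))
    have s6 := lie_skew (mkI R (e R 0)) (mkI R (e R 5))
    have s7 := lie_skew (mkI R (e R 2)) (mkI R (e R 4))
    have s8 := lie_skew (mkI R (e R 2)) (mkI R (e R 5))
    have s9 := lie_skew (mkI R (e R 0)) (mkI R (e R 3))
    intro y z
    fin_cases y <;> fin_cases z <;>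
      simp [act, d, f, g, newGen] <;> grind)
  have hid : (sdLift _ f g hcompat).comp (quo R) = mkI R := by
    have hl (i : Fin 3) : toSd (d R) (of R (Sum.inl i)) = ⟨of R i, 0⟩ := by simp [toSd]
    have hr (i : Fin 3) : toSd (d R) (of R (Sum.inr i)) = ⟨0, of R i⟩ := by simp [toSd]
    ext i
    fin_cases i <;> simp [sdLift, quo, oldGen, hl, hr, f, g, newGen, e]
  intro l hl
  rw [LieHom.mem_ker] at hl
  have h : mkI R l = 0 := by rw [← hid, LieHom.comp_apply, hl, map_zero]
  exact LieSubmodule.Quotient.mk_eq_zero'.1 h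

theorem mem_relIdeal_iff (l : FreeLieAlgebra R (Fin 6)) :
    l ∈ relIdeal R ↔ ∃ a, newGen R (kerMap (d R) a) = l := by
  rw [le_antisymm (relIdeal_le_ker R) (ker_le_relIdeal R), LieHom.mem_ker, quo, LieHom.comp_apply,
    toSd_eq_zero_iff]
  constructor
  · rintro ⟨a, ha⟩
    exact ⟨a, by rw [ha, newGen_oldGen]⟩
  · rintro ⟨a, rfl⟩
    exact ⟨a, by rw [oldGen_newGen]⟩

end Relators

end General

theorem mem_J_iff (l : L) : l ∈ J ↔ l ∈ relIdeal ℤ := Iff.rfl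

end FreeIdeal

/-- `J` is a free Lie algebra over `ℤ`: there exist a type `X` and an isomorphism of
Lie algebras over `ℤ` between `J` and the free Lie algebra over `ℤ` on `X`. -/
theorem J_is_free_lie_algebra :
    ∃ X : Type, Nonempty (J ≃ₗ⁅ℤ⁆ FreeLieAlgebra ℤ X) := by
  let G := (FreeIdeal.newGen ℤ).comp (FreeIdeal.kerMap (FreeIdeal.d ℤ))
  have hinj : Function.Injective G :=
    (Function.LeftInverse.injective (FreeIdeal.oldGen_newGen ℤ)).comp
      (FreeIdeal.kerMap_injective (FreeIdeal.d ℤ))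
  have hmem (l : L) : l ∈ J ↔ ∃ a, G a = l :=
    (FreeIdeal.mem_J_iff l).trans (FreeIdeal.mem_relIdeal_iff ℤ l)
  let G' := fun a => (⟨G a, (hmem _).2 ⟨a, rfl⟩⟩ : J)
  have hG' : Function.Bijective G' := by
    constructor
    · intro a b hab
      exact hinj (congrArg Subtype.val hab)
    · rintro ⟨l, hl⟩
      obtain ⟨a, rfl⟩ := (hmem l).1 hl
      exact ⟨a, rfl⟩
  let E := AddEquiv.ofBijective
    (AddMonoidHom.mk' G' fun a b => Subtype.ext (map_add G a b)) hG'
  refine ⟨_, ⟨LieEquiv.symm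
    { E.toIntLinearEquiv with
      map_lie' := fun {a b} => Subtype.ext (LieHom.map_lie G a b) }⟩⟩
end

section
/- For every n ≥ 2, the ℤ-submodule J ∩ Lⁿ is a direct summand of Lⁿ: there exists a ℤ-submodule (Lⁿ)* of Lⁿ such that Lⁿ is the internal direct sum (Lⁿ)* ⊕ (J ∩ Lⁿ). -/
/-- The left-normed iterated Lie bracket `[a, u₁, …, u_m] = [[…[[a,u₁],u₂]…],u_m]`. -/
noncomputable def lnb (a : L) (l : List L) : L := l.foldl (fun u v => ⁅u, v⁆) a

/-- `Lⁿ`, the `n`-th homogeneous component of `L`: the `ℤ`-submodule spanned by all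
left-normed brackets `[x_{i₁}, …, x_{i_n}]` of the generators. -/
noncomputable def homog (n : ℕ) : Submodule ℤ L :=
  Submodule.span ℤ
    { z | ∃ (i : Fin 6) (l : List (Fin 6)), l.length + 1 = n ∧ z = lnb (x i) (l.map x) }

/-! ### Derivations of free Lie algebras -/

namespace FreeLieAlgebra

universe u v w

section General

variable {R : Type u} [CommRing R] {X : Type v}

theorem induct {p : FreeLieAlgebra R X → Prop} (zero : p 0) (of : ∀ x, p (of R x))
    (add : ∀ a b, p a → p b → p (a + b)) (smul : ∀ (r : R) a, p a → p (r • a))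
    (lie : ∀ a b, p a → p b → p ⁅a, b⁆) (a : FreeLieAlgebra R X) : p a := by
  let S : LieSubalgebra R (FreeLieAlgebra R X) :=
    { carrier := {a | p a}
      zero_mem' := zero
      add_mem' := fun ha hb => add _ _ ha hb
      smul_mem' := fun r _ ha => smul r _ ha
      lie_mem' := fun ha hb => lie _ _ ha hb }
  let f : FreeLieAlgebra R X →ₗ⁅R⁆ S := lift R fun x => ⟨FreeLieAlgebra.of R x, of x⟩
  have h : S.incl.comp f = LieHom.id := by
    ext x
    simp [f]
  have h2 : S.incl (f a) = a := LieHom.congr_fun h a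
  rw [← h2]
  exact (f a).2

open LieAlgebra in
/-- Every map on generators extends to a derivation of the free Lie algebra: a derivation is the
second component of a homomorphism into the extension of the Lie algebra by its adjoint module
with zero cocycle. -/
theorem exists_derivation (f : X → FreeLieAlgebra R X) :
    ∃ D : LieDerivation R (FreeLieAlgebra R X) (FreeLieAlgebra R X), ∀ x, D (of R x) = f x := by
  let c : LieModule.Cohomology.twoCocycle R (FreeLieAlgebra R X) (FreeLieAlgebra R X) := 0
  let g : FreeLieAlgebra R X →ₗ⁅R⁆ ofTwoCocycle c := lift R fun x => ofProd c (of R x, f x)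
  have h1 : ∀ a, ((ofProd c).symm (g a)).1 = a := by
    intro a
    induction a using induct with
    | zero => simp
    | of x => simp [g]
    | add a b ha hb => simp [ha, hb]
    | smul r a ha => simp [ha]
    | lie a b ha hb => simp [ha, hb, bracket_ofTwoCocycle]
  refine ⟨⟨⟨⟨fun a => ((ofProd c).symm (g a)).2, by simp⟩, by simp⟩, ?_⟩, ?_⟩
  · intro a b
    simp [bracket_ofTwoCocycle, h1, c]
  · intro x
    change ((ofProd c).symm (g (of R x))).2 = f x
    simp [g]

end General
end FreeLieAlgebra

/-! ### Homomorphisms out of a semidirect sum -/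

section Semidirect

variable {R : Type*} [CommRing R] {K Q P : Type*} [LieRing K] [LieAlgebra R K] [LieRing Q]
  [LieAlgebra R Q] [LieRing P] [LieAlgebra R P] {ψ : Q →ₗ⁅R⁆ LieDerivation R K K}

/-- The homomorphism `(k, q) ↦ α k + β q` on the semidirect sum `K ⋊⁅ψ⁆ Q`, given by homomorphisms
`α` and `β` for which the bracket of `β q` with `α k` realises the action `ψ q` on `k`. -/
def sdLift (α : K →ₗ⁅R⁆ P) (β : Q →ₗ⁅R⁆ P) (h : ∀ q k, ⁅β q, α k⁆ = α (ψ q k)) :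
    (K ⋊⁅ψ⁆ Q) →ₗ⁅R⁆ P where
  toFun z := α z.left + β z.right
  map_add' a b := by simp; abel
  map_smul' r a := by simp
  map_lie' := by
    intro a b
    simp only [LieAlgebra.SemiDirectSum.lie_eq_mk, map_add, map_sub, LieHom.map_lie, ← h,
      add_lie, lie_add]
    rw [← lie_skew (α a.left) (β b.right)]
    abel

/-- The hypothesis of `sdLift` for a fixed `q` may be checked on free generators of `K`, since both
sides are derivations along `α` in `k`. -/
theorem compat_of_gen {Y : Type*}
    {ψ : Q →ₗ⁅R⁆ LieDerivation R (FreeLieAlgebra R Y) (FreeLieAlgebra R Y)}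
    (α : FreeLieAlgebra R Y →ₗ⁅R⁆ P) (β : Q →ₗ⁅R⁆ P) (q : Q)
    (h : ∀ y, ⁅β q, α (.of R y)⁆ = α (ψ q (.of R y))) (k : FreeLieAlgebra R Y) :
    ⁅β q, α k⁆ = α (ψ q k) := by
  induction k using FreeLieAlgebra.induct with
  | zero => simp
  | of x => exact h x
  | add a b ha hb => simp [ha, hb]
  | smul r a ha => simp [ha]
  | lie a b ha hb =>
    rw [LieDerivation.apply_lie_eq_add, LieHom.map_lie, leibniz_lie, ha, hb, map_add,
      LieHom.map_lie, LieHom.map_lie, add_comm]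

/-- When both factors are free, the hypothesis of `sdLift` may be checked on pairs of generators. -/
theorem compat_of_gen' {Y Z : Type*} {ψ : FreeLieAlgebra R Z →ₗ⁅R⁆
      LieDerivation R (FreeLieAlgebra R Y) (FreeLieAlgebra R Y)}
    (α : FreeLieAlgebra R Y →ₗ⁅R⁆ P) (β : FreeLieAlgebra R Z →ₗ⁅R⁆ P)
    (h : ∀ z y, ⁅β (.of R z), α (.of R y)⁆ = α (ψ (.of R z) (.of R y))) (q k) :
    ⁅β q, α k⁆ = α (ψ q k) := by
  induction q using FreeLieAlgebra.induct generalizing k with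
  | zero => simp
  | of x => exact compat_of_gen α β _ (h x) k
  | add a b ha hb => simp [ha, hb]
  | smul r a ha => simp [ha]
  | lie a b ha hb =>
    rw [LieHom.map_lie, LieHom.map_lie, lie_lie, LieDerivation.commutator_apply, ha, hb, ha, hb, map_sub]

end Semidirect

/-! ### Lazard elimination and torsion-freeness of free Lie algebras -/

section Torsion

open FreeLieAlgebra
variable {R : Type} [CommRing R]

/-- `WeightLE w n a`: the element `a` can be written as a combination of brackets of generators
of total weight at most `n`, where the generator `x` has weight `w x`. -/
inductive WeightLE {X : Type} (w : X → ℕ) : ℕ → FreeLieAlgebra R X → Prop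
  | zero (n : ℕ) : WeightLE w n 0
  | of (n : ℕ) (x : X) (h : w x ≤ n) : WeightLE w n (of R x)
  | add {n : ℕ} {a b} (ha : WeightLE w n a) (hb : WeightLE w n b) : WeightLE w n (a + b)
  | smul {n : ℕ} (r : R) {a} (ha : WeightLE w n a) : WeightLE w n (r • a)
  | lie {n i j : ℕ} {a b} (h : i + j ≤ n) (ha : WeightLE w i a) (hb : WeightLE w j b) :
      WeightLE w n ⁅a, b⁆

namespace WeightLE
variable {X : Type} {w : X → ℕ}

theorem mono {m n : ℕ} (h : m ≤ n) {a : FreeLieAlgebra R X} (ha : WeightLE w m a) :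
    WeightLE w n a := by
  induction ha generalizing n with
  | zero => exact .zero _
  | of m x hx => exact .of _ _ (hx.trans h)
  | add _ _ iha ihb => exact .add (iha h) (ihb h)
  | smul r _ iha => exact .smul r (iha h)
  | lie hij ha hb => exact .lie (hij.trans h) ha hb

theorem neg {n : ℕ} {a : FreeLieAlgebra R X} (ha : WeightLE w n a) : WeightLE w n (-a) := by
  simpa using ha.smul (-1)

theorem sub {n : ℕ} {a b : FreeLieAlgebra R X} (ha : WeightLE w n a) (hb : WeightLE w n b) :
    WeightLE w n (a - b) := by
  rw [sub_eq_add_neg]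
  exact ha.add hb.neg

variable (w) in
theorem exists_weightLE (a : FreeLieAlgebra R X) : ∃ n, WeightLE w n a := by
  induction a using induct with
  | zero => exact ⟨0, .zero _⟩
  | of x => exact ⟨_, .of _ x le_rfl⟩
  | add a b ha hb =>
    obtain ⟨m, hm⟩ := ha
    obtain ⟨n, hn⟩ := hb
    exact ⟨max m n, (hm.mono (le_max_left _ _)).add (hn.mono (le_max_right _ _))⟩
  | smul r a ha =>
    obtain ⟨m, hm⟩ := ha
    exact ⟨m, hm.smul r⟩
  | lie a b ha hb =>
    obtain ⟨m, hm⟩ := ha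
    obtain ⟨n, hn⟩ := hb
    exact ⟨_, .lie le_rfl hm hn⟩

theorem eq_zero {n : ℕ} (hw : ∀ x, n < w x) {a : FreeLieAlgebra R X} (ha : WeightLE w n a) :
    a = 0 := by
  induction ha with
  | zero => rfl
  | of m x hx => exact absurd (hw x) (by omega)
  | add _ _ iha ihb => rw [iha hw, ihb hw, add_zero]
  | smul r _ iha => rw [iha hw, smul_zero]
  | lie hij ha hb iha _ => rw [iha fun x => lt_of_le_of_lt (by omega) (hw x), zero_lie]

/-- A derivation raising the weight of each generator by at most `k` raises every weight by at
most `k`. -/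
theorem derivation {n k : ℕ} (D : LieDerivation R (FreeLieAlgebra R X) (FreeLieAlgebra R X))
    (hD : ∀ x, WeightLE w (w x + k) (D (FreeLieAlgebra.of R x))) {a : FreeLieAlgebra R X}
    (ha : WeightLE w n a) : WeightLE w (n + k) (D a) := by
  induction ha with
  | zero => simpa using .zero _
  | of m x hx => exact (hD x).mono (by omega)
  | add _ _ iha ihb => simpa using iha.add ihb
  | smul r _ iha => simpa using iha.smul r
  | lie hij ha hb iha ihb =>
    rw [LieDerivation.apply_lie_eq_add]
    exact .add (.lie (by omega) ha ihb) (.lie (by omega) iha hb)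

end WeightLE

-- The ground ring `R`, with its commutator bracket, serves as the one-dimensional abelian algebra.
attribute [local instance] LieRing.ofAssociativeRing

/-- The action of the one-dimensional abelian Lie algebra `R` on `K` in which `1` acts as the
derivation `D`. -/
def scalarDer {K : Type*} [LieRing K] [LieAlgebra R K] (D : LieDerivation R K K) :
    R →ₗ⁅R⁆ LieDerivation R K K :=
  { LinearMap.toSpanSingleton R _ D with
    map_lie' := by
      intro a b
      simp [LieRing.of_associative_ring_bracket, mul_comm] }

theorem scalarDer_apply {K : Type*} [LieRing K] [LieAlgebra R K] (D : LieDerivation R K K) (r : R)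
    (a : K) : scalarDer D r a = r • D a := rfl

open scoped Classical in
/-- Lazard elimination of the generator `x₀`: the free Lie algebra on `X` embeds in the semidirect
sum of the free Lie algebra on the symbols `(i, y)`, standing for `(ad x₀)^i y` with `y ≠ x₀`, by
the line spanned by `x₀`. Giving `(i, y)` the weight `i * w x₀ + w y` makes the embedding respect
weights. -/
theorem exists_elimination {X : Type} (x₀ : X) (w : X → ℕ) :
    ∃ (D : LieDerivation R (FreeLieAlgebra R (ℕ × {y // y ≠ x₀}))
        (FreeLieAlgebra R (ℕ × {y // y ≠ x₀})))
      (φ : FreeLieAlgebra R X →ₗ⁅R⁆ (FreeLieAlgebra R (ℕ × {y // y ≠ x₀}) ⋊⁅scalarDer D⁆ R)),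
      Function.Injective φ ∧ ∀ n a, WeightLE w n a →
        WeightLE (fun z : ℕ × {y // y ≠ x₀} => z.1 * w x₀ + w z.2) n (φ a).left ∧
          ((φ a).right ≠ 0 → w x₀ ≤ n) := by
  obtain ⟨D, hD⟩ := exists_derivation (R := R) (X := ℕ × {y // y ≠ x₀})
    fun z => of R (z.1 + 1, z.2)
  let φ : FreeLieAlgebra R X →ₗ⁅R⁆ (FreeLieAlgebra R (ℕ × {y // y ≠ x₀}) ⋊⁅scalarDer D⁆ R) :=
    lift R fun x => if h : x = x₀ then ⟨0, 1⟩ else ⟨of R (0, ⟨x, h⟩), 0⟩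
  refine ⟨D, φ, ?_, ?_⟩
  -- A left inverse of `φ` sends `(i, y)` to `(ad x₀)^i y` and `1` to `x₀`.
  · let α : FreeLieAlgebra R (ℕ × {y // y ≠ x₀}) →ₗ⁅R⁆ FreeLieAlgebra R X :=
      lift R fun z => (LieDerivation.ad R _ (of R x₀))^[z.1] (of R z.2.1)
    let β : R →ₗ⁅R⁆ FreeLieAlgebra R X :=
      { LinearMap.toSpanSingleton R _ (of R x₀) with
        map_lie' := by
          intro a b
          simp [LieRing.of_associative_ring_bracket, mul_comm] }
    have hβ : ∀ r, β r = r • of R x₀ := fun r => rfl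
    have hc : ∀ q k, ⁅β q, α k⁆ = α (scalarDer D q k) := by
      intro q
      apply compat_of_gen
      intro z
      simp [scalarDer_apply, hD, hβ, α, Function.iterate_succ_apply']
    have h : (sdLift α β hc).comp φ = LieHom.id := by
      ext x
      by_cases h : x = x₀
      · simp [φ, sdLift, h, hβ]
      · simp [φ, sdLift, h, α]
    exact Function.LeftInverse.injective (g := sdLift α β hc) fun a => LieHom.congr_fun h a
  · intro n a ha
    induction ha with
    | zero n => simpa using .zero _
    | of n x hx =>
      by_cases h : x = x₀
      · subst h
        simpa [φ, hx] using .zero _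
      · simp only [φ, lift_of_apply, h, dite_false, ne_eq, not_true, false_imp_iff, and_true]
        exact .of _ _ (by simpa using hx)
    | @add n a b ha hb iha ihb =>
      refine ⟨by simpa using iha.1.add ihb.1, fun h => ?_⟩
      by_cases h1 : (φ a).right = 0
      · exact ihb.2 fun h2 => h (by simp [h1, h2])
      · exact iha.2 h1
    | smul r ha iha =>
      refine ⟨by simpa using iha.1.smul r, fun h => iha.2 fun h1 => h (by simp [h1])⟩
    | @lie n i j a b hij ha hb iha ihb =>
      have key : ∀ (r : R) (c) (k l : ℕ), (r ≠ 0 → w x₀ ≤ k) → k + l ≤ n →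
          WeightLE (fun z : ℕ × {y // y ≠ x₀} => z.1 * w x₀ + w z.2) l c →
          WeightLE (fun z : ℕ × {y // y ≠ x₀} => z.1 * w x₀ + w z.2) n (scalarDer D r c) := by
        intro r c k l hr hkl hc
        rw [scalarDer_apply]
        by_cases h : r = 0
        · rw [h, zero_smul]
          exact .zero _
        · have := hr h
          refine .smul _ ((hc.derivation (k := w x₀) D fun z => ?_).mono (by omega))
          rw [hD]
          exact .of _ _ (le_of_eq (by dsimp only; ring))
      simp only [LieHom.map_lie, LieAlgebra.SemiDirectSum.lie_eq_mk]
      refine ⟨?_, fun h => absurd ?_ h⟩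
      · exact .sub (.add (.lie hij iha.1 ihb.1) (key _ _ i j iha.2 hij ihb.1))
          (key _ _ j i ihb.2 (by omega) iha.1)
      · simp [LieRing.of_associative_ring_bracket, mul_comm]

/-- Torsion-freeness for elements of weight at most `n`, when all generators have weight at least
`k ≥ 1` and finitely many lie below each bound. Eliminating a generator of weight `k` adds only
generators of weight greater than `k`, so after finitely many eliminations the least weight rises
to `k + 1`; once it exceeds `n` the element is zero. The outer induction is on `d`, a bound for
`n + 1 - k`, and the inner one on the number of generators of weight `k`. -/
theorem torsion_aux [IsDomain R] (n d : ℕ) : ∀ (k : ℕ) (X : Type) (w : X → ℕ),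
    1 ≤ k → n + 1 ≤ k + d →
    (∀ j, {x | w x ≤ j}.Finite) → (∀ x, k ≤ w x) → ∀ a : FreeLieAlgebra R X, WeightLE w n a →
    ∀ r : R, r ≠ 0 → r • a = 0 → a = 0 := by
  induction d with
  | zero =>
    intro k X w hk hn hf hw a ha r hr h
    exact ha.eq_zero fun x => lt_of_lt_of_le (by omega) (hw x)
  | succ d ihd =>
    intro k X w hk hn hf hw a ha r hr h
    obtain ⟨c, hc⟩ : ∃ c, {x | w x = k}.ncard = c := ⟨_, rfl⟩
    induction c generalizing X with
    | zero =>
      replace hc := (Set.ncard_eq_zero ((hf k).subset fun x hx => le_of_eq (by simpa using hx))).1 hc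
      refine ihd (k + 1) X w (by omega) (by omega) hf (fun x => ?_) a ha r hr h
      have h1 : w x ≠ k := fun h => (Set.eq_empty_iff_forall_notMem.1 hc x) h
      have := hw x
      omega
    | succ c ihc =>
      obtain ⟨x₀, hx₀⟩ : {x | w x = k}.Nonempty := by
        apply Set.nonempty_of_ncard_ne_zero
        omega
      replace hx₀ : w x₀ = k := hx₀
      obtain ⟨D, φ, hφ, hw'⟩ := exists_elimination (R := R) x₀ w
      have h0 : r • φ a = 0 := by rw [← map_smul, h, map_zero]
      have hl : r • (φ a).left = 0 := congrArg (fun z => z.left) h0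
      have hr' : r • (φ a).right = 0 := congrArg (fun z => z.right) h0
      have hR : (φ a).right = 0 := by simpa [hr] using hr'
      have hL : (φ a).left = 0 := by
        refine ihc _ _ ?_ ?_ _ (hw' n a ha).1 hl ?_
        · intro j
          refine ((Set.finite_Iic j).prod
            ((hf j).preimage (Subtype.val_injective.injOn (s := _)))).subset ?_
          rintro ⟨i, y⟩ hiy
          simp only [Set.mem_ofPred_eq] at hiy
          have : i * 1 ≤ i * w x₀ := Nat.mul_le_mul_left i (by omega)
          exact ⟨by simp; omega, by simp; omega⟩
        · rintro ⟨i, y⟩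
          exact (hw y).trans (Nat.le_add_left _ _)
        -- The generators of weight `k` after elimination are the `(0, y)` with `w y = k`.
        · have hz : ∀ z : ℕ × {y // y ≠ x₀}, z.1 * w x₀ + w z.2 = k → z.1 = 0 := by
            rintro ⟨i, y⟩ hiy
            have h3 := hw y
            rcases mul_eq_zero.1 (show i * w x₀ = 0 by dsimp only at hiy; omega)
              with h4 | h4
            · exact h4
            · omega
          have h1 : {x | w x = k} \ {x₀} =
              (fun z : ℕ × {y // y ≠ x₀} => z.2.1) '' {z | z.1 * w x₀ + w z.2 = k} := by
            ext y
            constructor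
            · rintro ⟨hy, hne⟩
              exact ⟨(0, ⟨y, hne⟩), by simpa using hy, rfl⟩
            · rintro ⟨z, hzk, rfl⟩
              refine ⟨?_, z.2.2⟩
              have h3 := hz z hzk
              simpa [h3] using hzk
          have h2 : ({x | w x = k} \ {x₀}).ncard = c := by
            rw [Set.ncard_sdiff_singleton_of_mem (by simpa using hx₀), hc]
            rfl
          rw [h1, Set.InjOn.ncard_image] at h2
          · exact h2
          · rintro ⟨i, y⟩ hi ⟨j, z⟩ hj hyz
            have hi0 := hz _ hi
            have hj0 := hz _ hj
            exact Prod.ext (hi0.trans hj0.symm) (Subtype.ext hyz)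
      apply hφ
      rw [map_zero]
      exact LieAlgebra.SemiDirectSum.ext hL hR

/-- Free Lie algebras of finite rank over a domain are torsion-free. -/
theorem FreeLieAlgebra.eq_zero_of_smul_eq_zero [IsDomain R] {X : Type} [Finite X]
    {r : R} (hr : r ≠ 0) {a : FreeLieAlgebra R X} (h : r • a = 0) : a = 0 := by
  obtain ⟨n, hn⟩ := WeightLE.exists_weightLE (fun _ => 1) a
  exact torsion_aux n n 1 X (fun _ => 1) le_rfl (by omega) (fun _ => Set.toFinite _)
    (fun _ => le_rfl) a hn r hr h

end Torsion

/-! ### The quotient by `J` as a semidirect sum of free Lie algebras -/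

section Main

variable {R : Type} [CommRing R]

/-- The set `V` with coefficients in an arbitrary commutative ring `R`; for `R = ℤ` it is `V` by
definition. -/
def relators (R : Type) [CommRing R] : Set (FreeLieAlgebra R (Fin 6)) :=
  let x := FreeLieAlgebra.of R
  {⁅x 1, x 0⁆, ⁅x 3, x 2⁆, ⁅x 5, x 4⁆,
   ⁅x 2, x 1⁆ + ⁅x 3, x 1⁆, ⁅x 3, x 1⁆ + ⁅x 3, x 0⁆,
   ⁅x 5, x 0⁆ + ⁅x 4, x 0⁆, ⁅x 4, x 1⁆ + ⁅x 4, x 0⁆,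
   ⁅x 4, x 2⁆ + ⁅x 5, x 2⁆, ⁅x 5, x 3⁆ + ⁅x 5, x 2⁆}

/-- The relators say that, with `a = x₀ + x₁`, `b = x₂ + x₃`, `c = x₄ + x₅`, the brackets of
`x₀, x₂, x₄` with `a, b, c` vanish except for `⁅x₀, b⁆ = ⁅a, b⁆`, `⁅x₂, a⁆ = ⁅b, a⁆` and
`⁅x₄, b⁆ = ⁅c, b⁆`. -/
theorem semidirect_relations {P : Type*} [LieRing P] {x₀ x₁ x₂ x₃ x₄ x₅ : P}
    (h1 : ⁅x₁, x₀⁆ = 0) (h2 : ⁅x₃, x₂⁆ = 0) (h3 : ⁅x₅, x₄⁆ = 0)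
    (h4 : ⁅x₂, x₁⁆ + ⁅x₃, x₁⁆ = 0) (h5 : ⁅x₃, x₁⁆ + ⁅x₃, x₀⁆ = 0)
    (h6 : ⁅x₅, x₀⁆ + ⁅x₄, x₀⁆ = 0) (h7 : ⁅x₄, x₁⁆ + ⁅x₄, x₀⁆ = 0)
    (h8 : ⁅x₄, x₂⁆ + ⁅x₅, x₂⁆ = 0) (h9 : ⁅x₅, x₃⁆ + ⁅x₅, x₂⁆ = 0) :
    ⁅x₀, x₀ + x₁⁆ = 0 ∧ ⁅x₀, x₂ + x₃⁆ = ⁅x₀ + x₁, x₂ + x₃⁆ ∧ ⁅x₀, x₄ + x₅⁆ = 0 ∧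
    ⁅x₂, x₀ + x₁⁆ = ⁅x₂ + x₃, x₀ + x₁⁆ ∧ ⁅x₂, x₂ + x₃⁆ = 0 ∧ ⁅x₂, x₄ + x₅⁆ = 0 ∧
    ⁅x₄, x₀ + x₁⁆ = 0 ∧ ⁅x₄, x₂ + x₃⁆ = ⁅x₄ + x₅, x₂ + x₃⁆ ∧ ⁅x₄, x₄ + x₅⁆ = 0 := by
  have s : ∀ u v : P, ⁅u, v⁆ = 0 → ⁅v, u⁆ = 0 := fun u v h => by rw [← lie_skew, h, neg_zero]
  refine ⟨?_, ?_, ?_, ?_, ?_, ?_, ?_, ?_, ?_⟩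
  · rw [lie_add, lie_self, s _ _ h1, add_zero]
  · rw [add_lie x₀ x₁, s _ x₁ ((add_lie _ _ _).trans h4), add_zero]
  · rw [add_comm]
    exact s _ _ ((add_lie _ _ _).trans h6)
  · rw [add_lie x₂ x₃, add_comm x₀, (lie_add x₃ _ _).trans h5, add_zero]
  · rw [lie_add, lie_self, s _ _ h2, add_zero]
  · exact s _ _ ((add_lie _ _ _).trans h8)
  · rw [add_comm]
    exact (lie_add _ _ _).trans h7
  · rw [add_lie x₄ x₅, add_comm x₂, (lie_add x₅ _ _).trans h9, add_zero]
  · rw [lie_add, lie_self, s _ _ h3, add_zero]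

/-- The quotient of the free Lie algebra by the relators is torsion-free. The map `φ` below to a
semidirect sum of two free Lie algebras of rank three kills the relators, and composed with
`sdLift α β` it gives the quotient map, so its kernel is exactly the ideal of the relators. -/
theorem mem_of_smul_mem [IsDomain R] {r : R} (hr : r ≠ 0) {a : FreeLieAlgebra R (Fin 6)}
    (h : r • a ∈ LieSubmodule.lieSpan R (FreeLieAlgebra R (Fin 6)) (relators R)) :
    a ∈ LieSubmodule.lieSpan R (FreeLieAlgebra R (Fin 6)) (relators R) := by
  set I : LieIdeal R (FreeLieAlgebra R (Fin 6)) := LieSubmodule.lieSpan R _ (relators R) with hI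
  let A : Fin 3 → FreeLieAlgebra R (Fin 3) := FreeLieAlgebra.of R
  -- The first factor is free on `a, b, c`; the images of `x₀, x₂, x₄` generate the second.
  choose D hD using FreeLieAlgebra.exists_derivation (R := R) (X := Fin 3)
  let ψ : FreeLieAlgebra R (Fin 3) →ₗ⁅R⁆ LieDerivation R (FreeLieAlgebra R (Fin 3))
      (FreeLieAlgebra R (Fin 3)) :=
    FreeLieAlgebra.lift R
      ![D ![0, ⁅A 0, A 1⁆, 0], D ![⁅A 1, A 0⁆, 0, 0], D ![0, ⁅A 2, A 1⁆, 0]]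
  let φ : FreeLieAlgebra R (Fin 6) →ₗ⁅R⁆
      (FreeLieAlgebra R (Fin 3) ⋊⁅ψ⁆ FreeLieAlgebra R (Fin 3)) :=
    FreeLieAlgebra.lift R
      ![⟨0, A 0⟩, ⟨A 0, -A 0⟩, ⟨0, A 1⟩, ⟨A 1, -A 1⟩, ⟨0, A 2⟩, ⟨A 2, -A 2⟩]
  have hIφ : I ≤ φ.ker := by
    rw [hI, LieSubmodule.lieSpan_le]
    intro v hv
    simp only [relators, Set.mem_insert_iff, Set.mem_singleton_iff] at hv
    rw [SetLike.mem_coe, LieHom.mem_ker]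
    have hs : ∀ u v : FreeLieAlgebra R (Fin 3), ⁅u, v⁆ + ⁅v, u⁆ = 0 := fun u v => by
      rw [← lie_skew, neg_add_cancel]
    rcases hv with rfl | rfl | rfl | rfl | rfl | rfl | rfl | rfl | rfl <;>
      simp [φ, ψ, A, hD, hs]
  let π : FreeLieAlgebra R (Fin 6) →ₗ⁅R⁆ (FreeLieAlgebra R (Fin 6) ⧸ I) :=
    { LieSubmodule.Quotient.mk' I with
      map_lie' := by
        intro a b
        rfl }
  have hπ : ∀ a, π a = 0 ↔ a ∈ I := fun a => LieSubmodule.Quotient.mk_eq_zero'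
  have hrel : ∀ v ∈ relators R, π v = 0 := fun v hv =>
    (hπ v).2 (LieSubmodule.subset_lieSpan hv)
  simp only [relators, Set.mem_insert_iff, Set.mem_singleton_iff, forall_eq_or_imp,
    forall_eq, map_add, LieHom.map_lie] at hrel
  obtain ⟨h1, h2, h3, h4, h5, h6, h7, h8, h9⟩ := hrel
  let X : Fin 6 → (FreeLieAlgebra R (Fin 6) ⧸ I) := fun i => π (.of R i)
  let α : FreeLieAlgebra R (Fin 3) →ₗ⁅R⁆ (FreeLieAlgebra R (Fin 6) ⧸ I) :=
    FreeLieAlgebra.lift R ![X 0 + X 1, X 2 + X 3, X 4 + X 5]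
  let β : FreeLieAlgebra R (Fin 3) →ₗ⁅R⁆ (FreeLieAlgebra R (Fin 6) ⧸ I) :=
    FreeLieAlgebra.lift R ![X 0, X 2, X 4]
  have hc : ∀ q k, ⁅β q, α k⁆ = α (ψ q k) := by
    apply compat_of_gen'
    intro z y
    obtain ⟨e1, e2, e3, e4, e5, e6, e7, e8, e9⟩ :=
      semidirect_relations h1 h2 h3 h4 h5 h6 h7 h8 h9
    fin_cases z <;> fin_cases y
    · simpa [ψ, α, β, A, hD, X] using e1
    · simpa [ψ, α, β, A, hD, X] using e2
    · simpa [ψ, α, β, A, hD, X] using e3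
    · simpa [ψ, α, β, A, hD, X] using e4
    · simpa [ψ, α, β, A, hD, X] using e5
    · simpa [ψ, α, β, A, hD, X] using e6
    · simpa [ψ, α, β, A, hD, X] using e7
    · simpa [ψ, α, β, A, hD, X] using e8
    · simpa [ψ, α, β, A, hD, X] using e9
  have hcomp : (sdLift α β hc).comp φ = π := by
    ext i
    fin_cases i <;> simp [sdLift, φ, A, α, β, X]
  have h0 : r • φ a = 0 := by
    rw [← map_smul]
    exact hIφ h
  have ha : φ a = 0 := LieAlgebra.SemiDirectSum.ext
    (FreeLieAlgebra.eq_zero_of_smul_eq_zero hr (congrArg (fun z => z.left) h0))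
    (FreeLieAlgebra.eq_zero_of_smul_eq_zero hr (congrArg (fun z => z.right) h0))
  rw [← hπ, ← hcomp, LieHom.comp_apply, ha, map_zero]

theorem mem_J_of_smul_mem {r : ℤ} (hr : r ≠ 0) {a : L} (h : r • a ∈ J) : a ∈ J :=
  mem_of_smul_mem hr h

/-! ### Splitting -/

theorem homog_fg (n : ℕ) : (homog n).FG := by
  rw [homog]
  apply Submodule.fg_span
  refine ((Set.finite_univ (α := Fin 6)).prod (List.finite_length_eq (Fin 6) (n - 1))).image
    (fun z => lnb (x z.1) (z.2.map x)) |>.subset ?_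
  rintro _ ⟨i, l, hl, rfl⟩
  exact ⟨(i, l), ⟨trivial, by simp; omega⟩, rfl⟩

/-- If `M ⧸ N` is torsion-free over a principal ideal domain and `H` is finitely generated, then
`H ⧸ (N ⊓ H)` is free, so `N ⊓ H` has a complement in `H`. -/
theorem exists_complement {M : Type*} [AddCommGroup M] [Module R M] [IsDomain R]
    [IsPrincipalIdealRing R] (H N : Submodule R M) (hH : H.FG)
    (hN : ∀ (r : R) (a : M), r ≠ 0 → r • a ∈ N → a ∈ N) :
    ∃ S : Submodule R M, S ≤ H ∧ S ⊔ (N ⊓ H) = H ∧ S ⊓ (N ⊓ H) = ⊥ := by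
  let N' : Submodule R H := N.comap H.subtype
  have : Module.Finite R H := Module.Finite.iff_fg.2 hH
  have : Module.IsTorsionFree R (H ⧸ N') := by
    refine Module.IsTorsionFree.of_smul_eq_zero fun r m hm => ?_
    induction m using Submodule.Quotient.induction_on with
    | H z =>
      rw [← Submodule.Quotient.mk_smul, Submodule.Quotient.mk_eq_zero] at hm
      rw [Submodule.Quotient.mk_eq_zero]
      exact or_iff_not_imp_left.2 fun hr => hN r z hr hm
  have : Module.Free R (H ⧸ N') := inferInstance
  obtain ⟨g, hg⟩ := LinearMap.exists_rightInverse_of_surjective N'.mkQ N'.range_mkQ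
  have hc : IsCompl (LinearMap.range g) N' := by
    have hg' : ∀ q, N'.mkQ (g q) = q := fun q => LinearMap.congr_fun hg q
    refine ⟨Submodule.disjoint_def.2 ?_, codisjoint_iff.2 (eq_top_iff.2 fun z _ => ?_)⟩
    · rintro _ ⟨q, rfl⟩ hq
      have h0 : q = 0 := by
        rw [← hg' q, Submodule.mkQ_apply, (Submodule.Quotient.mk_eq_zero _).2 hq]
      rw [h0, map_zero]
    · rw [← add_sub_cancel (g (N'.mkQ z)) z]
      refine Submodule.add_mem_sup ⟨_, rfl⟩ ?_
      rw [← Submodule.Quotient.mk_eq_zero, ← Submodule.mkQ_apply, map_sub, hg', sub_self]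
  refine ⟨(LinearMap.range g).map H.subtype, Submodule.map_subtype_le _ _, ?_, ?_⟩
  · have := congrArg (Submodule.map H.subtype) hc.sup_eq_top
    rw [Submodule.map_sup, Submodule.map_comap_subtype, Submodule.map_subtype_top] at this
    rw [inf_comm, this]
  · have := congrArg (Submodule.map H.subtype) hc.inf_eq_bot
    rw [Submodule.map_inf _ H.injective_subtype, Submodule.map_comap_subtype,
      Submodule.map_bot] at this
    rw [inf_comm N, this]

end Main

/-- For every `n ≥ 2`, the `ℤ`-submodule `J ∩ Lⁿ` is a direct summand of `Lⁿ`: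
there is a `ℤ`-submodule `(Lⁿ)*` contained in `Lⁿ` with
`Lⁿ = (Lⁿ)* ⊕ (J ∩ Lⁿ)` (internal direct sum). -/
theorem J_inter_homog_direct_summand (n : ℕ) (hn : 2 ≤ n) :
    ∃ S : Submodule ℤ L, S ≤ homog n ∧
      S ⊔ (J.toSubmodule ⊓ homog n) = homog n ∧
      S ⊓ (J.toSubmodule ⊓ homog n) = ⊥ :=
  exists_complement _ _ (homog_fg n) fun _ _ hr h => mem_J_of_smul_mem hr h
end

section
/- The ℤ-submodule L² is the internal direct sum of the ℤ-span of {y₄, y₅, y₈, y₁₁, y₁₃, y₁₄} and J ∩ L²; moreover J ∩ L² equals the ℤ-span of 𝒱, and the nine elements of 𝒱 are ℤ-linearly independent. In particular L²/(J ∩ L²) is a torsion-free ℤ-module. -/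
/-! ### A 2-step nilpotent Lie ring -/

/-- The underlying module of the free 2-step nilpotent Lie ring on six generators, slightly
enlarged: pairs of a linear part in `ℤ⁶` and a `6 × 6` matrix of degree-two coefficients, where
all matrices are allowed rather than only the skew-symmetric ones. -/
def N : Type := (Fin 6 → ℤ) × (Fin 6 → Fin 6 → ℤ)

namespace N

instance : AddCommGroup N := inferInstanceAs (AddCommGroup ((Fin 6 → ℤ) × (Fin 6 → Fin 6 → ℤ)))

instance : Bracket N N := ⟨fun u v => (0, fun i j => u.1 i * v.1 j - v.1 i * u.1 j)⟩

theorem fst_add (u v : N) : (u + v).1 = u.1 + v.1 := rfl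

theorem ext' {u v : N} (h : u.1 = v.1) (h_snd : ∀ i j, u.2 i j = v.2 i j) : u = v :=
  Prod.ext h (funext fun i => funext fun j => h_snd i j)

instance : LieRing N where
  add_lie u v w := ext' (add_zero (0 : Fin 6 → ℤ)).symm fun i j => by
    change (u.1 i + v.1 i) * w.1 j - w.1 i * (u.1 j + v.1 j) =
      (u.1 i * w.1 j - w.1 i * u.1 j) + (v.1 i * w.1 j - w.1 i * v.1 j)
    ring
  lie_add u v w := ext' (add_zero (0 : Fin 6 → ℤ)).symm fun i j => by
    change u.1 i * (v.1 j + w.1 j) - (v.1 i + w.1 i) * u.1 j =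
      (u.1 i * v.1 j - v.1 i * u.1 j) + (u.1 i * w.1 j - w.1 i * u.1 j)
    ring
  lie_self u := ext' rfl fun i j => sub_self _
  leibniz_lie u v w := ext' (add_zero (0 : Fin 6 → ℤ)).symm fun i j => by
    change u.1 i * 0 - 0 * u.1 j = (0 * w.1 j - w.1 i * 0) + (v.1 i * 0 - 0 * v.1 j)
    ring

end N

/-! ### Degree-two coefficients -/

/-- The Lie homomorphism `L → N` sending each generator `xᵢ` to the standard basis vector `eᵢ`. -/
noncomputable def toN : L →ₗ⁅ℤ⁆ N := FreeLieAlgebra.lift ℤ fun i => ((Pi.single i 1, 0) : N)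

/-- The matrix of degree-two coefficients of an element of `L`. -/
noncomputable def coeff : L →+ (Fin 6 → Fin 6 → ℤ) where
  toFun u := (toN u).2
  map_zero' := by rw [map_zero]; rfl
  map_add' u v := by rw [map_add]; rfl

theorem toN_x (i : Fin 6) : toN (x i) = ((Pi.single i 1, 0) : N) :=
  FreeLieAlgebra.lift_of_apply _ _

theorem coeff_lie (u v : L) (i j : Fin 6) :
    coeff ⁅u, v⁆ i j = (toN u).1 i * (toN v).1 j - (toN v).1 i * (toN u).1 j := by
  change (toN ⁅u, v⁆).2 i j = _
  rw [LieHom.map_lie]; rfl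

theorem coeff_lie_x (a b i j : Fin 6) :
    coeff ⁅x a, x b⁆ i j =
      (if i = a ∧ j = b then 1 else 0) - (if i = b ∧ j = a then 1 else 0) := by
  simp only [coeff_lie, toN_x, Pi.single_apply, ite_and, ite_mul, one_mul, zero_mul]

theorem toN_lie_fst (u v : L) : (toN ⁅u, v⁆).1 = 0 := by
  rw [LieHom.map_lie]; rfl

/-- The quotient map `L² → L² / span 𝒱 ≅ ℤ⁶`, extended to `L` by means of the degree-two
coefficients; the coordinates correspond to `y₄, y₅, y₈, y₁₁, y₁₃, y₁₄` in this order. -/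
noncomputable def proj : L →+ (Fin 6 → ℤ) where
  toFun u := ![coeff u 2 0, coeff u 3 0 - coeff u 3 1 + coeff u 2 1,
    coeff u 4 0 - coeff u 5 0 - coeff u 4 1, coeff u 5 1,
    coeff u 5 2 - coeff u 4 2 - coeff u 5 3, coeff u 4 3]
  map_zero' := by ext i; fin_cases i <;> simp
  map_add' u v := by
    ext i; fin_cases i <;> simp <;> ring

theorem proj_apply (u : L) : proj u = ![coeff u 2 0, coeff u 3 0 - coeff u 3 1 + coeff u 2 1,
    coeff u 4 0 - coeff u 5 0 - coeff u 4 1, coeff u 5 1,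
    coeff u 5 2 - coeff u 4 2 - coeff u 5 3, coeff u 4 3] := rfl

/-! ### Coordinates on the degree-two component -/

theorem lie_mem_homog (a b : Fin 6) : ⁅x a, x b⁆ ∈ homog 2 :=
  Submodule.subset_span ⟨a, [b], rfl, rfl⟩

/-- To check a property of `L²` that is closed under linear combinations, it suffices to check it
on the brackets of two generators. -/
theorem homog_two_le {p : Submodule ℤ L} (h : ∀ a b, ⁅x a, x b⁆ ∈ p) : homog 2 ≤ p := by
  refine Submodule.span_le.2 ?_
  rintro z ⟨i, l, hl, rfl⟩
  obtain ⟨b, rfl⟩ : ∃ b, l = [b] := List.length_eq_one_iff.1 (by omega)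
  exact h i b

/-- The elements of `L²` are determined by the entries of their coefficient matrix
below the diagonal. -/
theorem eq_sum_of_mem_homog {u : L} (hu : u ∈ homog 2) :
    u = ∑ j, ∑ i, if i < j then coeff u j i • ⁅x j, x i⁆ else 0 := by
  let f : L →+ L := ∑ j, ∑ i, if i < j then
    ((zmultiplesHom L ⁅x j, x i⁆).comp
      ((Pi.evalAddMonoidHom (fun _ : Fin 6 => ℤ) i).comp
        ((Pi.evalAddMonoidHom (fun _ : Fin 6 => Fin 6 → ℤ) j).comp coeff))) else 0
  have hf (u : L) : f u = ∑ j, ∑ i, if i < j then coeff u j i • ⁅x j, x i⁆ else 0 := by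
    simp only [f, AddMonoidHom.finsetSum_apply]
    refine Finset.sum_congr rfl fun j _ => Finset.sum_congr rfl fun i _ => ?_
    split_ifs <;> rfl
  rw [← hf]
  refine (homog_two_le (p := LinearMap.eqLocus LinearMap.id f.toIntLinearMap) (fun a b => ?_)) hu
  change ⁅x a, x b⁆ = f ⁅x a, x b⁆
  rw [hf]
  rcases lt_trichotomy a b with h | rfl | h
  · rw [Finset.sum_eq_single b, Finset.sum_eq_single a]
    · simp [h, coeff_lie_x, h.ne, h.ne']
    · intro i _ hi
      simp [coeff_lie_x, hi, h.ne']
    · simp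
    · intro j _ hj
      refine Finset.sum_eq_zero fun i _ => ?_
      split_ifs with hij
      · have : ¬ (j = a ∧ i = b) := by rintro ⟨rfl, rfl⟩; exact absurd h hij.not_gt
        simp [coeff_lie_x, this, hj]
      · rfl
    · simp
  · simp
  · rw [Finset.sum_eq_single a, Finset.sum_eq_single b]
    · simp [h, coeff_lie_x, h.ne, h.ne']
    · intro i _ hi
      simp [coeff_lie_x, hi, h.ne']
    · simp
    · intro j _ hj
      refine Finset.sum_eq_zero fun i _ => ?_
      split_ifs with hij
      · have : ¬ (j = b ∧ i = a) := by rintro ⟨rfl, rfl⟩; exact absurd h hij.not_gt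
        simp [coeff_lie_x, this, hj]
      · rfl
    · simp

/-! ### The ideal `J` in degree two -/

theorem V_subset_homog : V ⊆ homog 2 := by
  rintro v (rfl | rfl | rfl | rfl | rfl | rfl | rfl | rfl | rfl)
  iterate 3 exact lie_mem_homog _ _
  all_goals exact add_mem (lie_mem_homog _ _) (lie_mem_homog _ _)

theorem span_V_le : Submodule.span ℤ V ≤ J.toSubmodule ⊓ homog 2 :=
  Submodule.span_le.2 fun _ hv => ⟨LieSubmodule.subset_lieSpan hv, V_subset_homog hv⟩

theorem toN_fst_of_mem_V {v : L} (hv : v ∈ V) : (toN v).1 = 0 := by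
  rcases hv with rfl | rfl | rfl | rfl | rfl | rfl | rfl | rfl | rfl <;>
    simp only [map_add, N.fst_add, toN_lie_fst, add_zero]

theorem proj_of_mem_V {v : L} (hv : v ∈ V) : proj v = 0 := by
  rcases hv with rfl | rfl | rfl | rfl | rfl | rfl | rfl | rfl | rfl <;>
    ext i <;> fin_cases i <;> simp [proj_apply, coeff_lie_x]

/-- The Lie ideal of elements of `L` without linear part that are killed by `proj`. -/
noncomputable def K : LieIdeal ℤ L where
  carrier := {u | (toN u).1 = 0 ∧ proj u = 0}
  zero_mem' := ⟨by rw [map_zero]; rfl, map_zero _⟩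
  add_mem' := by
    rintro u v ⟨hu, hu'⟩ ⟨hv, hv'⟩
    exact ⟨by rw [map_add, N.fst_add, hu, hv, add_zero], by rw [map_add, hu', hv', add_zero]⟩
  smul_mem' := by
    rintro k u ⟨hu, hu'⟩
    refine ⟨?_, by rw [map_zsmul, hu', smul_zero]⟩
    rw [map_zsmul]
    change k • (toN u).1 = 0
    rw [hu, smul_zero]
  lie_mem := by
    rintro w u ⟨hu, -⟩
    refine ⟨toN_lie_fst w u, ?_⟩
    have : coeff ⁅w, u⁆ = 0 := by
      ext i j; simp [coeff_lie, hu]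
    ext i; fin_cases i <;> simp [proj_apply, this]

theorem proj_eq_zero_of_mem_J {u : L} (hu : u ∈ J) : proj u = 0 := by
  have h : J ≤ K :=
    LieSubmodule.lieSpan_le.2 fun v hv => ⟨toN_fst_of_mem_V hv, proj_of_mem_V hv⟩
  exact (h hu).2

/-! ### The complement -/

/-- The element of the complement with the given coordinates. -/
noncomputable def complElt (c : Fin 6 → ℤ) : L :=
  c 0 • ⁅x 2, x 0⁆ + c 1 • ⁅x 3, x 0⁆ + c 2 • ⁅x 4, x 0⁆ + c 3 • ⁅x 5, x 1⁆ +
    c 4 • ⁅x 5, x 2⁆ + c 5 • ⁅x 4, x 3⁆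

theorem compl_zero : complElt 0 = 0 := by simp [complElt]

theorem compl_mem (c : Fin 6 → ℤ) : complElt c ∈ Submodule.span ℤ
    ({⁅x 2, x 0⁆, ⁅x 3, x 0⁆, ⁅x 4, x 0⁆, ⁅x 5, x 1⁆, ⁅x 5, x 2⁆, ⁅x 4, x 3⁆} : Set L) := by
  refine add_mem (add_mem (add_mem (add_mem (add_mem ?_ ?_) ?_) ?_) ?_) ?_ <;>
    exact Submodule.smul_mem _ _ (Submodule.subset_span (by simp))

theorem compl_span_le : Submodule.span ℤ
    ({⁅x 2, x 0⁆, ⁅x 3, x 0⁆, ⁅x 4, x 0⁆, ⁅x 5, x 1⁆, ⁅x 5, x 2⁆, ⁅x 4, x 3⁆} : Set L)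
      ≤ homog 2 := by
  refine Submodule.span_le.2 ?_
  rintro v (rfl | rfl | rfl | rfl | rfl | rfl) <;> exact lie_mem_homog _ _

theorem compl_proj {u : L} (hu : u ∈ Submodule.span ℤ
    ({⁅x 2, x 0⁆, ⁅x 3, x 0⁆, ⁅x 4, x 0⁆, ⁅x 5, x 1⁆, ⁅x 5, x 2⁆, ⁅x 4, x 3⁆} : Set L)) :
    u = complElt (proj u) := by
  induction hu using Submodule.span_induction with
  | mem v hv =>
    rcases hv with rfl | rfl | rfl | rfl | rfl | rfl <;>
      simp [complElt, proj_apply, coeff_lie_x]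
  | zero => rw [map_zero, compl_zero]
  | add u v _ _ hu hv =>
    have : complElt (proj (u + v)) = complElt (proj u) + complElt (proj v) := by
      simp only [complElt, map_add, Pi.add_apply]; module
    rw [this, ← hu, ← hv]
  | smul k u _ hu =>
    have : complElt (proj (k • u)) = k • complElt (proj u) := by
      simp only [complElt, map_zsmul, Pi.smul_apply, smul_eq_mul]; module
    rw [this, ← hu]

/-- Modulo `span 𝒱`, every element of `L²` equals the element of the complement given by its
image under `proj`. -/
theorem sub_compl_mem_span {u : L} (hu : u ∈ homog 2) :
    u - complElt (proj u) ∈ Submodule.span ℤ V := by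
  -- The coefficients come from reducing each of the nine remaining `[x_j, x_i]` modulo `𝒱`.
  have key : u - complElt (proj u) =
      coeff u 1 0 • ⁅x 1, x 0⁆ + coeff u 3 2 • ⁅x 3, x 2⁆ + coeff u 5 4 • ⁅x 5, x 4⁆ +
      coeff u 2 1 • (⁅x 2, x 1⁆ + ⁅x 3, x 1⁆) +
      (coeff u 3 1 - coeff u 2 1) • (⁅x 3, x 1⁆ + ⁅x 3, x 0⁆) +
      coeff u 5 0 • (⁅x 5, x 0⁆ + ⁅x 4, x 0⁆) + coeff u 4 1 • (⁅x 4, x 1⁆ + ⁅x 4, x 0⁆) +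
      coeff u 4 2 • (⁅x 4, x 2⁆ + ⁅x 5, x 2⁆) + coeff u 5 3 • (⁅x 5, x 3⁆ + ⁅x 5, x 2⁆) := by
    conv_lhs => enter [1]; rw [eq_sum_of_mem_homog hu]
    simp [Fin.sum_univ_six, complElt, proj_apply]
    module
  rw [key]
  refine add_mem (add_mem (add_mem (add_mem (add_mem (add_mem (add_mem (add_mem
    ?_ ?_) ?_) ?_) ?_) ?_) ?_) ?_) ?_ <;>
    exact Submodule.smul_mem _ _ (Submodule.subset_span (by simp [V]))

theorem mem_span_V {u : L} (hu : u ∈ homog 2) (h : proj u = 0) : u ∈ Submodule.span ℤ V := by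
  simpa [h, compl_zero] using sub_compl_mem_span hu

/-! ### Linear independence of `𝒱` -/

theorem linearIndependent_V : LinearIndependent ℤ
    (![⁅x 1, x 0⁆, ⁅x 3, x 2⁆, ⁅x 5, x 4⁆,
       ⁅x 2, x 1⁆ + ⁅x 3, x 1⁆, ⁅x 3, x 1⁆ + ⁅x 3, x 0⁆,
       ⁅x 5, x 0⁆ + ⁅x 4, x 0⁆, ⁅x 4, x 1⁆ + ⁅x 4, x 0⁆,
       ⁅x 4, x 2⁆ + ⁅x 5, x 2⁆, ⁅x 5, x 3⁆ + ⁅x 5, x 2⁆] : Fin 9 → L) := by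
  rw [Fintype.linearIndependent_iff]
  intro g hg
  have h (j i : Fin 6) := congrArg (fun u => coeff u j i) hg
  simp only [Fin.sum_univ_succ, map_add, map_zsmul, Pi.add_apply, Pi.smul_apply] at h
  -- Each of these nine matrix entries is nonzero on exactly one element of `𝒱`.
  have h0 := h 1 0
  have h1 := h 3 2
  have h2 := h 5 4
  have h3 := h 2 1
  have h4 := h 3 0
  have h5 := h 5 0
  have h6 := h 4 1
  have h7 := h 4 2
  have h8 := h 5 3
  simp [coeff_lie_x] at h0 h1 h2 h3 h4 h5 h6 h7 h8
  intro i
  fin_cases i <;> assumption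

/-- `L²` is the internal direct sum of the `ℤ`-span of `{y₄, y₅, y₈, y₁₁, y₁₃, y₁₄}`
and `J ∩ L²`; moreover `J ∩ L²` is the `ℤ`-span of `𝒱`, and the nine elements of `𝒱`
are `ℤ`-linearly independent.  In particular `L²/(J ∩ L²)` is torsion-free. -/
theorem homog2_decomposition :
    (Submodule.span ℤ
        ({⁅x 2, x 0⁆, ⁅x 3, x 0⁆, ⁅x 4, x 0⁆, ⁅x 5, x 1⁆, ⁅x 5, x 2⁆, ⁅x 4, x 3⁆} : Set L)
      ⊔ (J.toSubmodule ⊓ homog 2) = homog 2) ∧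
    (Submodule.span ℤ
        ({⁅x 2, x 0⁆, ⁅x 3, x 0⁆, ⁅x 4, x 0⁆, ⁅x 5, x 1⁆, ⁅x 5, x 2⁆, ⁅x 4, x 3⁆} : Set L)
      ⊓ (J.toSubmodule ⊓ homog 2) = ⊥) ∧
    (J.toSubmodule ⊓ homog 2 = Submodule.span ℤ V) ∧
    LinearIndependent ℤ
      (![⁅x 1, x 0⁆, ⁅x 3, x 2⁆, ⁅x 5, x 4⁆,
         ⁅x 2, x 1⁆ + ⁅x 3, x 1⁆, ⁅x 3, x 1⁆ + ⁅x 3, x 0⁆,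
         ⁅x 5, x 0⁆ + ⁅x 4, x 0⁆, ⁅x 4, x 1⁆ + ⁅x 4, x 0⁆,
         ⁅x 4, x 2⁆ + ⁅x 5, x 2⁆, ⁅x 5, x 3⁆ + ⁅x 5, x 2⁆] : Fin 9 → L) ∧
    (∀ u ∈ homog 2, ∀ k : ℤ, k ≠ 0 →
      k • u ∈ J.toSubmodule ⊓ homog 2 → u ∈ J.toSubmodule ⊓ homog 2) := by
  refine ⟨le_antisymm (sup_le compl_span_le inf_le_right) fun u hu => ?_, ?_,
    le_antisymm ?_ span_V_le, linearIndependent_V, ?_⟩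
  · rw [← add_sub_cancel (complElt (proj u)) u]
    exact Submodule.add_mem_sup (compl_mem _) (span_V_le (sub_compl_mem_span hu))
  · refine (Submodule.eq_bot_iff _).2 ?_
    rintro u ⟨hu, hJ, -⟩
    rw [compl_proj hu, proj_eq_zero_of_mem_J hJ, compl_zero]
  · rintro u ⟨hJ, hu⟩
    exact mem_span_V hu (proj_eq_zero_of_mem_J hJ)
  · rintro u hu k hk ⟨hJ, -⟩
    refine span_V_le (mem_span_V hu ?_)
    have := proj_eq_zero_of_mem_J hJ
    rw [map_zsmul] at this
    exact (smul_eq_zero.1 this).resolve_left hk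
end

section
/- (Lazard elimination.) Let 𝒜 and ℬ be types and let L be the free Lie algebra over ℤ on the disjoint union 𝒜 ⊔ ℬ. Then: (i) the canonical Lie algebra map from the free Lie algebra on 𝒜 to L is injective, so the Lie subalgebra of L generated by the image of 𝒜 is free on 𝒜; (ii) the canonical Lie algebra map Φ from the free Lie algebra on the type ℬ × List 𝒜 to L, sending (b, (a₁,…,a_n)) to the left-normed bracket [b, a₁, …, a_n] of the corresponding generators, is injective, so these brackets freely generate a Lie subalgebra of L; (iii) as a ℤ-module, L is the internal direct sum of the image of the free Lie algebra on 𝒜 and the image of Φ; (iv) for each fixed n ≥ 0 the elements [b, a₁, …, a_n] (b ∈ ℬ, a₁,…,a_n ∈ 𝒜) are ℤ-linearly independent, so their ℤ-span is isomorphic as a ℤ-module to V ⊗ U^{⊗n}, where U and V are the free ℤ-modules on 𝒜 and ℬ respectively. -/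
/-! Let `L`, `F` and `K` be the free Lie algebras on `A ⊕ B`, `A` and `B × List A`.  Each `a : A`
gives a derivation of `K` sending the generator `(b, w)` to `-(b, w ++ [a])`, which is how `ad a` acts
on the left-normed bracket `[b, w]`; by freeness these extend to an action `elimAction` of `F` on `K`
by derivations.  The Lie algebra map `elimMap` from `L` to the semidirect sum `K ⋊ F` sending `a` to
`a` and `b` to `(b, [])` carries the canonical map `inclA : F → L` to the inclusion of `F`
(`elimMap_inclA`) and the bracket map `bracketB : K → L` to the inclusion of `K`
(`elimMap_bracketB`).  Hence both maps are injective and their images meet trivially.  Conversely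
`bracketB` intertwines the action of `F` on `K` with the bracket of `L` (`bracketB_elimAction`), so
`(k, f) ↦ bracketB k + inclA f` is a Lie algebra map `K ⋊ F → L`; composed with `elimMap` it fixes
the generators of `L`, hence is a left inverse of `elimMap`, and the two images span `L`.

The brackets of a given length are images under the injective map `bracketB` of distinct free
generators of `K`, and these are linearly independent because a Lie algebra map to a commutative
ring, with zero bracket, may take arbitrary values on them.

The argument is carried out over an arbitrary commutative ring `R`.  Over `ℤ` a free Lie algebra
carries two syntactically different `ℤ`-module structures, one from its construction and one from its
underlying additive group; `phiA` and `phiB`, which are `inclA` and `bracketB` over `ℤ`, mix them, and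
they are identified only in the proof of `lazard_elimination`. -/

open scoped TensorProduct

/-- The canonical Lie algebra map from the free Lie algebra on `𝒜` to the free Lie
algebra on `𝒜 ⊔ ℬ`. -/
noncomputable def phiA (A B : Type) :
    FreeLieAlgebra ℤ A →ₗ⁅ℤ⁆ FreeLieAlgebra ℤ (A ⊕ B) :=
  FreeLieAlgebra.lift ℤ fun a => FreeLieAlgebra.of ℤ (Sum.inl a)

/-- The canonical Lie algebra map `Φ` from the free Lie algebra on `ℬ × List 𝒜` to the
free Lie algebra on `𝒜 ⊔ ℬ`, sending `(b, (a₁,…,a_n))` to the left-normed bracket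
`[b, a₁, …, a_n]` of the corresponding generators. -/
noncomputable def phiB (A B : Type) :
    FreeLieAlgebra ℤ (B × List A) →ₗ⁅ℤ⁆ FreeLieAlgebra ℤ (A ⊕ B) :=
  FreeLieAlgebra.lift ℤ fun p =>
    (p.2.map fun a => FreeLieAlgebra.of ℤ (Sum.inl a : A ⊕ B)).foldl
      (fun u v => ⁅u, v⁆) (FreeLieAlgebra.of ℤ (Sum.inr p.1))

open LieAlgebra

/-! ### Free Lie algebras: induction, derivations, independence of the generators -/

/-- The elements satisfying `p` form a Lie subalgebra `S`; the map into `S` that is the identity on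
generators is the identity, so `S` is everything. -/
theorem freeLie_induction {R X : Type} [CommRing R] {p : FreeLieAlgebra R X → Prop}
    (of : ∀ x, p (FreeLieAlgebra.of R x)) (zero : p 0) (add : ∀ x y, p x → p y → p (x + y))
    (smul : ∀ (c : R) x, p x → p (c • x)) (lie : ∀ x y, p x → p y → p ⁅x, y⁆)
    (x : FreeLieAlgebra R X) : p x := by
  let S : LieSubalgebra R (FreeLieAlgebra R X) :=
    { carrier := {x | p x}
      zero_mem' := zero
      add_mem' := fun {x y} hx hy => add x y hx hy
      smul_mem' := fun c x hx => smul c x hx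
      lie_mem' := fun {x y} hx hy => lie x y hx hy }
  let g : FreeLieAlgebra R X →ₗ⁅R⁆ S :=
    FreeLieAlgebra.lift R fun x => (⟨FreeLieAlgebra.of R x, of x⟩ : S)
  have h : S.incl.comp g = LieHom.id := by
    ext1 x
    exact congrArg Subtype.val (FreeLieAlgebra.lift_of_apply _ x)
  have h2 := (g x).2
  have h3 : ((g x : S) : FreeLieAlgebra R X) = x := LieHom.congr_fun h x
  rwa [h3] at h2

/-- The Lie algebra `L[ε] = L ⊕ ε L` with `ε² = 0`.  A Lie algebra map `L → L[ε]` lifting the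
identity of `L` is the same thing as a derivation of `L`. -/
def DualLie (L : Type) : Type := L × L

namespace DualLie

theorem ext' {L : Type} {x y : DualLie L} (h1 : x.1 = y.1) (h2 : x.2 = y.2) : x = y :=
  Prod.ext h1 h2

variable {R L : Type} [CommRing R] [LieRing L] [LieAlgebra R L]

instance : AddCommGroup (DualLie L) := inferInstanceAs (AddCommGroup (L × L))
instance : Module R (DualLie L) := inferInstanceAs (Module R (L × L))

instance : Bracket (DualLie L) (DualLie L) :=
  ⟨fun x y => (⁅x.1, y.1⁆, ⁅x.1, y.2⁆ + ⁅x.2, y.1⁆)⟩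

@[simp] theorem fst_add (x y : DualLie L) : (x + y).1 = x.1 + y.1 := rfl
@[simp] theorem snd_add (x y : DualLie L) : (x + y).2 = x.2 + y.2 := rfl
@[simp] theorem fst_zero : (0 : DualLie L).1 = 0 := rfl
@[simp] theorem snd_zero : (0 : DualLie L).2 = 0 := rfl
@[simp] theorem fst_smul (c : R) (x : DualLie L) : (c • x).1 = c • x.1 := rfl
@[simp] theorem snd_smul (c : R) (x : DualLie L) : (c • x).2 = c • x.2 := rfl
@[simp] theorem fst_lie (x y : DualLie L) : ⁅x, y⁆.1 = ⁅x.1, y.1⁆ := rfl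
@[simp] theorem snd_lie (x y : DualLie L) : ⁅x, y⁆.2 = ⁅x.1, y.2⁆ + ⁅x.2, y.1⁆ := rfl

instance : LieRing (DualLie L) where
  add_lie x y z := ext' (by simp) (by simp; abel)
  lie_add x y z := ext' (by simp) (by simp; abel)
  lie_self x := ext' (by simp) (by
    simp only [snd_lie, snd_zero]
    rw [← lie_skew x.2 x.1]
    exact add_neg_cancel _)
  leibniz_lie x y z := ext' (by simp) (by
    simp only [snd_lie, fst_lie, snd_add, lie_add, add_lie]
    rw [leibniz_lie x.1 y.1 z.2, leibniz_lie x.1 y.2 z.1, leibniz_lie x.2 y.1 z.1]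
    abel)

instance : LieAlgebra R (DualLie L) where
  lie_smul c x y := ext' (by simp) (by simp)

end DualLie

/-- The Lie algebra map `K → K[ε]`, for `K` free on `X`, sending a generator `x` to `x + ε d x`. -/
noncomputable def derivHom {R X : Type} [CommRing R] (d : X → FreeLieAlgebra R X) :
    FreeLieAlgebra R X →ₗ⁅R⁆ DualLie (FreeLieAlgebra R X) :=
  FreeLieAlgebra.lift R fun x => ((FreeLieAlgebra.of R x, d x) : DualLie (FreeLieAlgebra R X))

theorem derivHom_of {R X : Type} [CommRing R] (d : X → FreeLieAlgebra R X) (x : X) :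
    derivHom d (FreeLieAlgebra.of R x) = (FreeLieAlgebra.of R x, d x) :=
  FreeLieAlgebra.lift_of_apply _ _

theorem derivHom_fst {R X : Type} [CommRing R] (d : X → FreeLieAlgebra R X) (x : FreeLieAlgebra R X) :
    (derivHom d x).1 = x := by
  induction x using freeLie_induction with
  | of x => rw [derivHom_of]
  | zero => simp
  | add x y hx hy => simp [hx, hy]
  | smul c x hx => rw [map_smul, DualLie.fst_smul, hx]
  | lie x y hx hy => simp [hx, hy]

/-- The derivation of the free Lie algebra on `X` with prescribed values on the generators. -/
noncomputable def freeDeriv {R X : Type} [CommRing R] (d : X → FreeLieAlgebra R X) :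
    LieDerivation R (FreeLieAlgebra R X) (FreeLieAlgebra R X) where
  toFun x := (derivHom d x).2
  map_add' x y := by simp
  map_smul' c x := by rw [map_smul]; rfl
  leibniz' x y := by
    change (derivHom d ⁅x, y⁆).2 = ⁅x, (derivHom d y).2⁆ - ⁅y, (derivHom d x).2⁆
    rw [LieHom.map_lie, DualLie.snd_lie, derivHom_fst, derivHom_fst, ← lie_skew y]
    abel

theorem freeDeriv_of {R X : Type} [CommRing R] (d : X → FreeLieAlgebra R X) (x : X) :
    freeDeriv d (FreeLieAlgebra.of R x) = d x := by
  change (derivHom d (FreeLieAlgebra.of R x)).2 = d x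
  rw [derivHom_of]

section
attribute [local instance] LieRing.ofAssociativeRing

/-- The commutative ring `X → R` has zero bracket, so the generators can be sent to the standard
unit vectors. -/
theorem linearIndependent_freeLie_of (R X : Type) [CommRing R] :
    LinearIndependent R (FreeLieAlgebra.of R : X → FreeLieAlgebra R X) := by
  classical
  let g : FreeLieAlgebra R X →ₗ⁅R⁆ (X → R) := FreeLieAlgebra.lift R fun x => Pi.single x (1 : R)
  refine LinearIndependent.of_comp (g : FreeLieAlgebra R X →ₗ[R] (X → R)) ?_
  have h : (g : FreeLieAlgebra R X →ₗ[R] (X → R)) ∘ FreeLieAlgebra.of R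
      = fun x => Pi.single x (1 : R) := by
    funext x
    exact FreeLieAlgebra.lift_of_apply _ _
  rw [h]
  exact Pi.linearIndependent_single_one X R
end

/-! ### The semidirect sum and the two maps between it and the free Lie algebra on `A ⊕ B` -/

/-- The action of the free Lie algebra on `A` on the free Lie algebra on `B × List A`, where
the generator `a` sends `(b, w)` to `-(b, w ++ [a])`; the sign is there because
`[a, [b, w]] = -[b, w, a]`. -/
noncomputable def elimAction (R A B : Type) [CommRing R] :
    FreeLieAlgebra R A →ₗ⁅R⁆
      LieDerivation R (FreeLieAlgebra R (B × List A)) (FreeLieAlgebra R (B × List A)) :=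
  FreeLieAlgebra.lift R fun a =>
    freeDeriv fun p => -FreeLieAlgebra.of R (p.1, p.2 ++ [a])

theorem elimAction_of (R A B : Type) [CommRing R] (a : A) (b : B) (w : List A) :
    elimAction R A B (FreeLieAlgebra.of R a) (FreeLieAlgebra.of R (b, w))
      = -FreeLieAlgebra.of R (b, w ++ [a]) := by
  rw [elimAction, FreeLieAlgebra.lift_of_apply, freeDeriv_of]

/-- The map from the free Lie algebra on `A ⊕ B` to the semidirect sum that sends `a` to `a`
and `b` to the generator `(b, [])`. -/
noncomputable def elimMap (R A B : Type) [CommRing R] :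
    FreeLieAlgebra R (A ⊕ B) →ₗ⁅R⁆
      (FreeLieAlgebra R (B × List A) ⋊⁅elimAction R A B⁆ FreeLieAlgebra R A) :=
  FreeLieAlgebra.lift R (Sum.elim
    (fun a => SemiDirectSum.inr (elimAction R A B) (FreeLieAlgebra.of R a))
    (fun b => SemiDirectSum.inl (elimAction R A B) (FreeLieAlgebra.of R (b, []))))

theorem elimMap_inl (R A B : Type) [CommRing R] (a : A) : elimMap R A B (FreeLieAlgebra.of R (Sum.inl a))
    = SemiDirectSum.inr (elimAction R A B) (FreeLieAlgebra.of R a) :=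
  FreeLieAlgebra.lift_of_apply _ _

theorem elimMap_inr (R A B : Type) [CommRing R] (b : B) : elimMap R A B (FreeLieAlgebra.of R (Sum.inr b))
    = SemiDirectSum.inl (elimAction R A B) (FreeLieAlgebra.of R (b, [])) :=
  FreeLieAlgebra.lift_of_apply _ _

/-- The map from the free `R`-Lie algebra on `A` to that on `A ⊕ B`: `phiA` over any base ring. -/
noncomputable def inclA (R A B : Type) [CommRing R] :
    FreeLieAlgebra R A →ₗ⁅R⁆ FreeLieAlgebra R (A ⊕ B) :=
  FreeLieAlgebra.lift R fun a => FreeLieAlgebra.of R (Sum.inl a)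

/-- The map sending `(b, w)` to the left-normed bracket `[b, w]`: `phiB` over any base ring. -/
noncomputable def bracketB (R A B : Type) [CommRing R] :
    FreeLieAlgebra R (B × List A) →ₗ⁅R⁆ FreeLieAlgebra R (A ⊕ B) :=
  FreeLieAlgebra.lift R fun p =>
    (p.2.map fun a => FreeLieAlgebra.of R (Sum.inl a : A ⊕ B)).foldl
      (fun u v => ⁅u, v⁆) (FreeLieAlgebra.of R (Sum.inr p.1))

theorem inclA_of (R A B : Type) [CommRing R] (a : A) :
    inclA R A B (FreeLieAlgebra.of R a) = FreeLieAlgebra.of R (Sum.inl a) :=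
  FreeLieAlgebra.lift_of_apply _ _

theorem bracketB_of (R A B : Type) [CommRing R] (b : B) (w : List A) :
    bracketB R A B (FreeLieAlgebra.of R (b, w)) =
      (w.map fun a => FreeLieAlgebra.of R (Sum.inl a : A ⊕ B)).foldl
        (fun u v => ⁅u, v⁆) (FreeLieAlgebra.of R (Sum.inr b)) :=
  FreeLieAlgebra.lift_of_apply _ _

theorem bracketB_of_ofFn (R A B : Type) [CommRing R] {n : ℕ} (b : B) (u : Fin n → A) :
    bracketB R A B (FreeLieAlgebra.of R (b, List.ofFn u)) =
      (List.ofFn fun t => FreeLieAlgebra.of R (Sum.inl (u t) : A ⊕ B)).foldl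
        (fun u v => ⁅u, v⁆) (FreeLieAlgebra.of R (Sum.inr b)) := by
  rw [bracketB_of, List.map_ofFn]
  rfl

theorem bracketB_of_nil (R A B : Type) [CommRing R] (b : B) :
    bracketB R A B (FreeLieAlgebra.of R (b, [])) = FreeLieAlgebra.of R (Sum.inr b) :=
  bracketB_of R A B b []

theorem bracketB_of_append (R A B : Type) [CommRing R] (b : B) (w : List A) (a : A) :
    bracketB R A B (FreeLieAlgebra.of R (b, w ++ [a])) =
      ⁅bracketB R A B (FreeLieAlgebra.of R (b, w)), FreeLieAlgebra.of R (Sum.inl a)⁆ := by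
  rw [bracketB_of, bracketB_of, List.map_append, List.foldl_append]
  rfl

theorem elimMap_inclA (R A B : Type) [CommRing R] (f : FreeLieAlgebra R A) :
    elimMap R A B (inclA R A B f) = SemiDirectSum.inr (elimAction R A B) f := by
  have h : (elimMap R A B).comp (inclA R A B) = SemiDirectSum.inr (elimAction R A B) := by
    ext1 a
    rw [LieHom.comp_apply, inclA_of, elimMap_inl]
  exact LieHom.congr_fun h f

theorem elimMap_bracketB (R A B : Type) [CommRing R] (k : FreeLieAlgebra R (B × List A)) :
    elimMap R A B (bracketB R A B k) = SemiDirectSum.inl (elimAction R A B) k := by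
  have h : (elimMap R A B).comp (bracketB R A B) = SemiDirectSum.inl (elimAction R A B) := by
    ext1 ⟨b, w⟩
    rw [LieHom.comp_apply]
    induction w using List.reverseRecOn with
    | nil => rw [bracketB_of_nil, elimMap_inr]
    | append_singleton w a ih =>
      rw [bracketB_of_append, LieHom.map_lie, ih, elimMap_inl]
      simp [elimAction_of]
  exact LieHom.congr_fun h k

/-- The map `bracketB` intertwines the action of the free Lie algebra on `A` with the adjoint action
of its image in the free Lie algebra on `A ⊕ B`.  It suffices to check this on generators of both
free Lie algebras. -/
theorem bracketB_elimAction (R A B : Type) [CommRing R] (f : FreeLieAlgebra R A)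
    (k : FreeLieAlgebra R (B × List A)) :
    bracketB R A B (elimAction R A B f k) = ⁅inclA R A B f, bracketB R A B k⁆ := by
  induction f using freeLie_induction generalizing k with
  | of a =>
    induction k using freeLie_induction with
    | of p =>
      obtain ⟨b, w⟩ := p
      rw [elimAction_of, map_neg, bracketB_of_append, inclA_of, lie_skew]
    | zero => simp
    | add x y hx hy => simp [hx, hy]
    | smul c x hx => rw [map_smul, map_smul, hx, map_smul, lie_smul]
    | lie x y hx hy =>
      rw [LieDerivation.apply_lie_eq_add, map_add, LieHom.map_lie, LieHom.map_lie, hx, hy,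
        LieHom.map_lie, leibniz_lie (inclA R A B _), add_comm]
  | zero => simp
  | add x y hx hy => simp [hx, hy]
  | smul c x hx =>
    rw [map_smul, LieDerivation.smul_apply, map_smul, hx, map_smul, smul_lie]
  | lie x y hx hy =>
    rw [LieHom.map_lie, LieDerivation.commutator_apply, map_sub, hx, hy, hy, hx,
      LieHom.map_lie, lie_lie]

/-- The map `(k, f) ↦ bracketB k + inclA f` from the semidirect sum to the free Lie algebra
on `A ⊕ B`. -/
noncomputable def elimInv (R A B : Type) [CommRing R] :
    (FreeLieAlgebra R (B × List A) ⋊⁅elimAction R A B⁆ FreeLieAlgebra R A) →ₗ⁅R⁆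
      FreeLieAlgebra R (A ⊕ B) where
  toFun x := bracketB R A B x.left + inclA R A B x.right
  map_add' x y := by simp; abel
  map_smul' c x := by
    simp only [SemiDirectSum.smul_eq_mk, map_smul, smul_add, RingHom.id_apply]
  map_lie' := by
    intro x y
    simp only [SemiDirectSum.lie_eq_mk, map_add, map_sub, LieHom.map_lie,
      bracketB_elimAction, lie_add, add_lie]
    rw [← lie_skew (bracketB R A B x.left) (inclA R A B y.right)]
    abel

theorem elimInv_elimMap (R A B : Type) [CommRing R] (x : FreeLieAlgebra R (A ⊕ B)) :
    elimInv R A B (elimMap R A B x) = x := by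
  have h : (elimInv R A B).comp (elimMap R A B) = LieHom.id := by
    ext1 s
    rw [LieHom.comp_apply]
    rcases s with a | b
    · rw [elimMap_inl]
      change bracketB R A B 0 + inclA R A B (FreeLieAlgebra.of R a) = _
      rw [inclA_of, map_zero, zero_add]
      rfl
    · rw [elimMap_inr]
      change bracketB R A B (FreeLieAlgebra.of R (b, [])) + inclA R A B 0 = _
      rw [bracketB_of_nil, map_zero, add_zero]
      rfl
  exact LieHom.congr_fun h x

theorem inclA_injective (R A B : Type) [CommRing R] : Function.Injective (inclA R A B) := by
  intro x y h
  have h2 := congrArg (elimMap R A B) h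
  rw [elimMap_inclA, elimMap_inclA] at h2
  exact congrArg SemiDirectSum.right h2

theorem bracketB_injective (R A B : Type) [CommRing R] : Function.Injective (bracketB R A B) := by
  intro x y h
  have h2 := congrArg (elimMap R A B) h
  rw [elimMap_bracketB, elimMap_bracketB] at h2
  exact congrArg SemiDirectSum.left h2

theorem exists_bracketB_add_inclA (R A B : Type) [CommRing R] (x : FreeLieAlgebra R (A ⊕ B)) :
    ∃ k f, bracketB R A B k + inclA R A B f = x :=
  ⟨_, _, elimInv_elimMap R A B x⟩

theorem eq_zero_of_bracketB_eq_inclA (R A B : Type) [CommRing R]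
    (k : FreeLieAlgebra R (B × List A)) (f : FreeLieAlgebra R A)
    (h : bracketB R A B k = inclA R A B f) : f = 0 := by
  have h2 := congrArg (elimMap R A B) h
  rw [elimMap_inclA, elimMap_bracketB] at h2
  exact (congrArg SemiDirectSum.right h2).symm

theorem linearIndependent_brackets (R A B : Type) [CommRing R] (n : ℕ) :
    LinearIndependent R
      (fun p : B × (Fin n → A) =>
        ((List.ofFn fun t => FreeLieAlgebra.of R (Sum.inl (p.2 t) : A ⊕ B))).foldl
          (fun u v => ⁅u, v⁆) (FreeLieAlgebra.of R (Sum.inr p.1 : A ⊕ B))) := by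
  have hinj : Function.Injective
      (fun p : B × (Fin n → A) => ((p.1, List.ofFn p.2) : B × List A)) := by
    rintro ⟨b, u⟩ ⟨b', u'⟩ h
    simp only [Prod.mk.injEq] at h
    exact Prod.ext h.1 (List.ofFn_injective h.2)
  have h := ((linearIndependent_freeLie_of R (B × List A)).comp _ hinj).map'
    (bracketB R A B).toLinearMap (LinearMap.ker_eq_bot.2 (bracketB_injective R A B))
  simp only [← bracketB_of_ofFn]
  exact h

/-- Lazard elimination.  For the free Lie algebra `L` on `𝒜 ⊔ ℬ`:
(i) the canonical map from the free Lie algebra on `𝒜` is injective;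
(ii) the canonical map `Φ` from the free Lie algebra on `ℬ × List 𝒜` is injective;
(iii) as a `ℤ`-module, `L` is the internal direct sum of the two images;
(iv) for each `n`, the brackets `[b, a₁, …, a_n]` are `ℤ`-linearly independent and
their span is isomorphic to `V ⊗ U^{⊗n}`, where `U = 𝒜 →₀ ℤ` and `V = ℬ →₀ ℤ`. -/
theorem lazard_elimination (A B : Type) :
    Function.Injective (phiA A B) ∧
    Function.Injective (phiB A B) ∧
    (LinearMap.range (phiA A B).toLinearMap ⊔ LinearMap.range (phiB A B).toLinearMap = ⊤ ∧
     LinearMap.range (phiA A B).toLinearMap ⊓ LinearMap.range (phiB A B).toLinearMap = ⊥) ∧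
    (∀ n : ℕ,
      LinearIndependent ℤ
        (fun p : B × (Fin n → A) =>
          ((List.ofFn fun t => FreeLieAlgebra.of ℤ (Sum.inl (p.2 t) : A ⊕ B))).foldl
            (fun u v => ⁅u, v⁆) (FreeLieAlgebra.of ℤ (Sum.inr p.1 : A ⊕ B))) ∧
      Nonempty
        ((Submodule.span ℤ
            (Set.range fun p : B × (Fin n → A) =>
              ((List.ofFn fun t => FreeLieAlgebra.of ℤ (Sum.inl (p.2 t) : A ⊕ B))).foldl
                (fun u v => ⁅u, v⁆) (FreeLieAlgebra.of ℤ (Sum.inr p.1 : A ⊕ B)))) ≃ₗ[ℤ]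
          (B →₀ ℤ) ⊗[ℤ] TensorPower ℤ n (A →₀ ℤ))) := by
  -- Definitional once the two `ℤ`-module structures are unfolded.
  have hA : ∀ f, phiA A B f = inclA ℤ A B f := fun _ => rfl
  have hB : ∀ k, phiB A B k = bracketB ℤ A B k := fun _ => rfl
  have hind : ∀ n : ℕ, LinearIndependent ℤ
      (fun p : B × (Fin n → A) =>
        ((List.ofFn fun t => FreeLieAlgebra.of ℤ (Sum.inl (p.2 t) : A ⊕ B))).foldl
          (fun u v => ⁅u, v⁆) (FreeLieAlgebra.of ℤ (Sum.inr p.1 : A ⊕ B))) := by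
    intro n
    convert linearIndependent_brackets ℤ A B n using 1
    · rfl
    · exact Subsingleton.elim _ _
  refine ⟨fun x y h => inclA_injective ℤ A B h, fun x y h => bracketB_injective ℤ A B h,
    ⟨?_, ?_⟩, fun n => ?_⟩
  · rw [eq_top_iff]
    intro x _
    obtain ⟨k, f, h⟩ := exists_bracketB_add_inclA ℤ A B x
    exact Submodule.mem_sup.2 ⟨_, ⟨f, hA f⟩, _, ⟨k, hB k⟩, (add_comm _ _).trans h⟩
  · rw [eq_bot_iff]
    rintro x ⟨⟨f, rfl⟩, ⟨k, hk⟩⟩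
    rw [eq_zero_of_bracketB_eq_inclA ℤ A B k f hk, map_zero]
    exact Submodule.zero_mem _
  · refine ⟨hind n, ⟨?_⟩⟩
    -- Both modules are free with a basis indexed by `B × (Fin n → A)`.
    exact (Module.Basis.span (hind n)).equiv
      ((Finsupp.basisSingleOne (R := ℤ) (ι := B)).tensorProduct
        (Basis.piTensorProduct fun _ : Fin n => Finsupp.basisSingleOne (R := ℤ) (ι := A)))
      (Equiv.refl _)
end

section
/- Let n ≥ 2 and let A₁, …, A_n be types; let L be the free Lie algebra over ℤ on the disjoint union A₁ ⊔ ⋯ ⊔ A_n. Let L(A_i) denote the Lie subalgebra of L generated by the image of A_i, and let I be the Lie ideal of L generated by all brackets [a,b] with a a generator from A_i and b a generator from A_j, i ≠ j. Then: (i) each L(A_i) is free on A_i; (ii) as a ℤ-module, L is the internal direct sum L(A₁) ⊕ ⋯ ⊕ L(A_n) ⊕ I; (iii) I is a free Lie algebra, freely generated by the set of left-normed brackets [a₁, a₂, …, a_m] with m ≥ 2, a_t a generator from A_{i_t}, and i₁ > i₂ ≤ i₃ ≤ ⋯ ≤ i_m; in particular, for each such index sequence (i₁,…,i_m) these brackets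 are ℤ-linearly independent and their ℤ-span is isomorphic as a ℤ-module to the tensor product of the free ℤ-modules on A_{i₁}, …, A_{i_m}. -/
/-!
The proof iterates Lazard elimination. For one step, let the free Lie algebra on `A` act on the
free Lie algebra on `R × List A` by derivations, a letter `a` acting by `(r, w) ↦ -(r, wa)`. The
semidirect sum receives a map from the free Lie algebra on `A ⊕ R`, which shows that the map
`(r, (a₁, …, a_m)) ↦ [r, a₁, …, a_m]` is injective (`Lazard.elimMap_injective`); its range
together with the subalgebra generated by `A` is everything (`Lazard.exists_add_elimMap`), because
that subalgebra normalizes the range.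

Starting from the set of all generators, seen as one-letter lists, eliminate the components one
after another in increasing order of the index. The generators that are left
after `m` steps are the lists satisfying `Lazard.IsStage m`. Each step removes the one-letter lists
with letter in the current component and replaces every other list `l` by the lists `l ++ w`, with
`w` a word in that component (`Lazard.stage_succ`). After all `n` steps exactly the good lists
remain. So `Psi` is injective, and its range together with the `L(A_i)` spans `L`
(`Lazard.stage_all`).

The rest follows from the retractions `Lazard.proj` of `L` onto the free Lie algebras on the
`A i`. They kill the ideal `I`, so the maps `phi` are injective and the sum is direct
(`Lazard.iSupIndep_components`), and they force an element of `I` to have no component in any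
`L(A_i)`, so that `I` is the range of `Psi` (`Lazard.mem_mixedIdeal_iff`). Finally, the generators
of a free Lie algebra are linearly independent, since they map to the variables of a
polynomial ring; hence so are the good brackets.

The argument is carried out over an arbitrary commutative ring `k` and specialized to `ℤ` at the
end. This avoids the two `ℤ`-algebra structures (defined differently, equal by unfolding) that
a free Lie algebra over `ℤ` carries.
-/

/-- The canonical Lie algebra map from the free Lie algebra on `A i` to the free Lie
algebra on the disjoint union `A₁ ⊔ ⋯ ⊔ A_n`; its range is the Lie subalgebra `L(A_i)`
generated by the generators from `A i`. -/
noncomputable def phi (n : ℕ) (A : Fin n → Type) (i : Fin n) :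
    FreeLieAlgebra ℤ (A i) →ₗ⁅ℤ⁆ FreeLieAlgebra ℤ (Σ j, A j) :=
  FreeLieAlgebra.lift ℤ fun a => FreeLieAlgebra.of ℤ ⟨i, a⟩

/-- `I`, the Lie ideal generated by all brackets `[a, b]` of generators coming from
distinct components `A i`, `A j` (`i ≠ j`). -/
noncomputable def crossIdeal (n : ℕ) (A : Fin n → Type) :
    LieIdeal ℤ (FreeLieAlgebra ℤ (Σ j, A j)) :=
  LieSubmodule.lieSpan ℤ _
    { z | ∃ (i j : Fin n) (a : A i) (b : A j), i ≠ j ∧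
        z = ⁅FreeLieAlgebra.of ℤ (⟨i, a⟩ : Σ k, A k), FreeLieAlgebra.of ℤ (⟨j, b⟩ : Σ k, A k)⁆ }

/-- The left-normed bracket `[a₁, a₂, …, a_m]` of generators indexed by a list of
elements of `Σ j, A j` (zero on the empty list). -/
noncomputable def lnbSigma (n : ℕ) (A : Fin n → Type) :
    List (Σ j, A j) → FreeLieAlgebra ℤ (Σ j, A j)
  | [] => 0
  | h :: t => (t.map (FreeLieAlgebra.of ℤ)).foldl (fun u v => ⁅u, v⁆) (FreeLieAlgebra.of ℤ h)

/-- Lists `(a₁, …, a_m)` of generators, `m ≥ 2`, whose component indices satisfy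
`i₁ > i₂ ≤ i₃ ≤ ⋯ ≤ i_m`. -/
def GoodList (n : ℕ) (A : Fin n → Type) : Type :=
  { l : List (Σ j, A j) // ∃ h h' t, l = h :: h' :: t ∧ h'.1 < h.1 ∧
      List.Chain' (· ≤ ·) ((h' :: t).map Sigma.fst) }

/-- The canonical Lie algebra map from the free Lie algebra on the good lists, sending
each good list to the corresponding left-normed bracket of generators. -/
noncomputable def Psi (n : ℕ) (A : Fin n → Type) :
    FreeLieAlgebra ℤ (GoodList n A) →ₗ⁅ℤ⁆ FreeLieAlgebra ℤ (Σ j, A j) :=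
  FreeLieAlgebra.lift ℤ fun l => lnbSigma n A l.1

namespace Lazard

open FreeLieAlgebra

/-! ### Derivations of free Lie algebras -/

/-- The trivial extension `L ⊕ εL` with `ε² = 0` of a Lie algebra `L` by its adjoint module, with
bracket `[(a, b), (c, d)] = ([a, c], [a, d] + [b, c])`; a type synonym of `L × L`, so that it does
not carry the componentwise bracket. -/
def SqZero (L : Type*) := L × L

namespace SqZero

/-- The element `a + ε b`. -/
def mk {L : Type*} (a b : L) : SqZero L := (a, b)

variable {k L : Type*} [CommRing k] [LieRing L] [LieAlgebra k L]

instance : AddCommGroup (SqZero L) := inferInstanceAs (AddCommGroup (L × L))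

instance : Module k (SqZero L) := inferInstanceAs (Module k (L × L))

instance : LieRing (SqZero L) where
  bracket x y := (⁅x.1, y.1⁆, ⁅x.1, y.2⁆ + ⁅x.2, y.1⁆)
  add_lie x y z := Prod.ext (add_lie x.1 y.1 z.1) (by
    change ⁅x.1 + y.1, z.2⁆ + ⁅x.2 + y.2, z.1⁆ = (⁅x.1, z.2⁆ + ⁅x.2, z.1⁆) + (⁅y.1, z.2⁆ + ⁅y.2, z.1⁆)
    simp only [add_lie]; abel)
  lie_add x y z := Prod.ext (lie_add x.1 y.1 z.1) (by
    change ⁅x.1, y.2 + z.2⁆ + ⁅x.2, y.1 + z.1⁆ = (⁅x.1, y.2⁆ + ⁅x.2, y.1⁆) + (⁅x.1, z.2⁆ + ⁅x.2, z.1⁆)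
    simp only [lie_add]; abel)
  lie_self x := Prod.ext (lie_self x.1) (by
    change ⁅x.1, x.2⁆ + ⁅x.2, x.1⁆ = 0
    rw [← lie_skew x.1 x.2]; abel)
  leibniz_lie x y z := Prod.ext (leibniz_lie x.1 y.1 z.1) (by
    change ⁅x.1, ⁅y.1, z.2⁆ + ⁅y.2, z.1⁆⁆ + ⁅x.2, ⁅y.1, z.1⁆⁆ =
      (⁅⁅x.1, y.1⁆, z.2⁆ + ⁅⁅x.1, y.2⁆ + ⁅x.2, y.1⁆, z.1⁆) +
      (⁅y.1, ⁅x.1, z.2⁆ + ⁅x.2, z.1⁆⁆ + ⁅y.2, ⁅x.1, z.1⁆⁆)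
    simp only [lie_add, add_lie]
    rw [leibniz_lie x.1 y.1 z.2, leibniz_lie x.1 y.2 z.1, leibniz_lie x.2 y.1 z.1]
    abel)

instance : LieAlgebra k (SqZero L) where
  lie_smul c x y := Prod.ext (lie_smul c x.1 y.1) (by
    change ⁅x.1, c • y.2⁆ + ⁅x.2, c • y.1⁆ = c • (⁅x.1, y.2⁆ + ⁅x.2, y.1⁆)
    rw [lie_smul, lie_smul, smul_add])

variable (k L) in
/-- The projection `L ⊕ εL → L`, a map of Lie algebras. -/
def fstHom : SqZero L →ₗ⁅k⁆ L where
  toFun x := x.1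
  map_add' _ _ := rfl
  map_smul' _ _ := rfl
  map_lie' := rfl

variable (k L) in
/-- The `ε`-component `L ⊕ εL → L`. -/
def sndHom : SqZero L →ₗ[k] L where
  toFun x := x.2
  map_add' _ _ := rfl
  map_smul' _ _ := rfl

end SqZero

variable {k : Type*} [CommRing k]

/-- Any function on the generators of a free Lie algebra extends to a derivation: it is the
`ε`-component of the Lie algebra map `y ↦ y + ε d(y)` into the trivial extension. -/
theorem exists_derivation {Y : Type*} (d : Y → FreeLieAlgebra k Y) :
    ∃ D : LieDerivation k (FreeLieAlgebra k Y) (FreeLieAlgebra k Y), ∀ y, D (of k y) = d y := by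
  let F : FreeLieAlgebra k Y →ₗ⁅k⁆ SqZero (FreeLieAlgebra k Y) :=
    lift k fun y => SqZero.mk (of k y) (d y)
  have hF : ∀ x, (F x).1 = x := fun x => by
    have h : (SqZero.fstHom k _).comp F = LieHom.id :=
      hom_ext fun y => congrArg Prod.fst (lift_of_apply (fun y => SqZero.mk (of k y) (d y)) y)
    exact congrArg (fun G : FreeLieAlgebra k Y →ₗ⁅k⁆ FreeLieAlgebra k Y => G x) h
  refine ⟨⟨(SqZero.sndHom k _).comp F.toLinearMap, fun a b => ?_⟩, fun y => ?_⟩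
  · change (F ⁅a, b⁆).2 = ⁅a, (F b).2⁆ - ⁅b, (F a).2⁆
    rw [LieHom.map_lie]
    change ⁅(F a).1, (F b).2⁆ + ⁅(F a).2, (F b).1⁆ = _
    rw [hF, hF, ← lie_skew b, sub_neg_eq_add]
  · exact congrArg Prod.snd (lift_of_apply (fun y => SqZero.mk (of k y) (d y)) y)

/-- A Lie subalgebra of a free Lie algebra containing the generators is everything. -/
theorem mem_of_forall_of_mem {X : Type*} (S : LieSubalgebra k (FreeLieAlgebra k X))
    (hS : ∀ x, of k x ∈ S) (z : FreeLieAlgebra k X) : z ∈ S := by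
  have h : S.incl.comp (lift k fun x => (⟨of k x, hS x⟩ : S)) = LieHom.id :=
    hom_ext fun x => by simp
  have hz := congrArg (fun G : FreeLieAlgebra k X →ₗ⁅k⁆ FreeLieAlgebra k X => G z) h
  have hz' : ((lift k (fun x => (⟨of k x, hS x⟩ : S)) z : S) : FreeLieAlgebra k X) = z := hz
  rw [← hz']
  exact SetLike.coe_mem _

theorem lift_of_bijective {X Y : Type*} (f : X → Y) (hf : Function.Bijective f) :
    Function.Bijective (lift k fun x => of k (f x)) := by
  let e := Equiv.ofBijective f hf
  have h1 : (lift k fun y => of k (e.symm y)).comp (lift k fun x => of k (f x)) = LieHom.id :=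
    hom_ext fun x => by
      simp [show e.symm (f x) = x from e.symm_apply_apply x]
  have h2 : (lift k fun x => of k (f x)).comp (lift k fun y => of k (e.symm y)) = LieHom.id :=
    hom_ext fun y => by
      simp [show f (e.symm y) = y from e.apply_symm_apply y]
  exact Function.bijective_iff_has_inverse.2
    ⟨lift k fun y => of k (e.symm y), fun x => LieHom.congr_fun h1 x, fun y => LieHom.congr_fun h2 y⟩

/-! ### Lazard elimination of a set of generators -/

section Elimination

variable (k) (A R : Type*)

/-- The map of free Lie algebras sending the generator `(r, (a₁, …, a_m))` to the left-normed
bracket `[r, a₁, …, a_m]`. -/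
noncomputable def elimMap :
    FreeLieAlgebra k (R × List A) →ₗ⁅k⁆ FreeLieAlgebra k (A ⊕ R) :=
  lift k fun p => (p.2.map fun a => of k (Sum.inl a)).foldl (fun u v => ⁅u, v⁆) (of k (Sum.inr p.1))

variable {k A R}

theorem elimMap_nil (r : R) : elimMap k A R (of k (r, [])) = of k (Sum.inr r) := by
  simp [elimMap]

theorem elimMap_concat (r : R) (w : List A) (a : A) :
    elimMap k A R (of k (r, w ++ [a])) = ⁅elimMap k A R (of k (r, w)), of k (Sum.inl a)⁆ := by
  simp [elimMap]

/-- Injectivity in Lazard elimination: the free Lie algebra on `A` acts by derivations on the free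
Lie algebra on `R × List A`, a letter `a` acting by `(r, w) ↦ -(r, wa)`, and the map from
the free Lie algebra on `A ⊕ R` to the semidirect sum given by `a ↦ a`, `r ↦ (r, ∅)`
is a left inverse of `elimMap` on the ideal factor. -/
theorem elimMap_injective : Function.Injective (elimMap k A R) := by
  choose D hD using fun a : A =>
    exists_derivation fun p : R × List A => -of k (p.1, p.2 ++ [a])
  let ψ : FreeLieAlgebra k A →ₗ⁅k⁆
      LieDerivation k (FreeLieAlgebra k (R × List A)) (FreeLieAlgebra k (R × List A)) := lift k D
  let f : FreeLieAlgebra k (A ⊕ R) →ₗ⁅k⁆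
      LieAlgebra.SemiDirectSum (FreeLieAlgebra k (R × List A)) (FreeLieAlgebra k A) ψ :=
    lift k (Sum.elim (fun a => LieAlgebra.SemiDirectSum.inr ψ (of k a))
      fun r => LieAlgebra.SemiDirectSum.inl ψ (of k (r, [])))
  have key : f.comp (elimMap k A R) = LieAlgebra.SemiDirectSum.inl ψ := by
    refine hom_ext fun p => ?_
    obtain ⟨r, w⟩ := p
    rw [LieHom.comp_apply]
    induction w using List.reverseRecOn with
    | nil => rw [elimMap_nil]; simp [f]
    | append_singleton w a ih =>
      rw [elimMap_concat, LieHom.map_lie, ih]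
      simp [f, ψ, hD]
  refine Function.Injective.of_comp (f := f) ?_
  have : (f ∘ elimMap k A R) = LieAlgebra.SemiDirectSum.inl ψ := by rw [← key]; rfl
  rw [this]
  exact LieAlgebra.SemiDirectSum.inl_injective ψ

/-- The Lie subalgebra generated by the letters of `A` normalizes the range of `elimMap`. -/
theorem inl_mem_normalizer (x : FreeLieAlgebra k A) :
    lift k (fun a => of k (Sum.inl a : A ⊕ R)) x ∈ (elimMap k A R).range.normalizer := by
  refine mem_of_forall_of_mem ((elimMap k A R).range.normalizer.comap
    (lift k (fun a => of k (Sum.inl a : A ⊕ R)))) (fun a => ?_) x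
  rw [LieSubalgebra.mem_comap, lift_of_apply, LieSubalgebra.mem_normalizer_iff']
  rintro _ ⟨y, rfl⟩
  -- The elements `y` with `[y, a]` in the range form a Lie subalgebra, by the Jacobi identity.
  let S : LieSubalgebra k (FreeLieAlgebra k (R × List A)) :=
    { ((elimMap k A R).range.toSubmodule.comap
        ((LieAlgebra.ad k (FreeLieAlgebra k (A ⊕ R)) (of k (Sum.inl a))).comp
          (elimMap k A R).toLinearMap)) with
      lie_mem' := by
        intro u v hu hv
        change ⁅(of k (Sum.inl a) : FreeLieAlgebra k (A ⊕ R)), elimMap k A R u⁆ ∈ (elimMap k A R).range at hu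
        change ⁅(of k (Sum.inl a) : FreeLieAlgebra k (A ⊕ R)), elimMap k A R v⁆ ∈ (elimMap k A R).range at hv
        change ⁅(of k (Sum.inl a) : FreeLieAlgebra k (A ⊕ R)), elimMap k A R ⁅u, v⁆⁆ ∈ (elimMap k A R).range
        rw [LieHom.map_lie, leibniz_lie]
        exact add_mem ((elimMap k A R).range.lie_mem hu ⟨v, rfl⟩)
          ((elimMap k A R).range.lie_mem ⟨u, rfl⟩ hv) }
  have hy : y ∈ S := by
    refine mem_of_forall_of_mem S (fun p => ?_) y
    change ⁅(of k (Sum.inl a) : FreeLieAlgebra k (A ⊕ R)), elimMap k A R (of k p)⁆ ∈ (elimMap k A R).range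
    rw [← lie_skew, ← elimMap_concat]
    exact neg_mem (LieHom.mem_range_self _ _)
  rw [← lie_skew]
  exact neg_mem (show ⁅(of k (Sum.inl a) : FreeLieAlgebra k (A ⊕ R)), elimMap k A R y⁆ ∈ (elimMap k A R).range from hy)

/-- Spanning in Lazard elimination: the free Lie algebra on `A ⊕ R` is the sum of the subalgebra
generated by `A` and of the range of `elimMap`. -/
theorem exists_add_elimMap (z : FreeLieAlgebra k (A ⊕ R)) :
    ∃ x y, z = lift k (fun a => of k (Sum.inl a : A ⊕ R)) x + elimMap k A R y := by
  set φ := lift k (fun a => of k (Sum.inl a : A ⊕ R)) with hφ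
  let S : LieSubalgebra k (FreeLieAlgebra k (A ⊕ R)) :=
    { φ.range.toSubmodule ⊔ (elimMap k A R).range.toSubmodule with
      lie_mem' := by
        intro u v hu hv
        obtain ⟨_, ⟨x, rfl⟩, _, ⟨y, rfl⟩, rfl⟩ := Submodule.mem_sup.1 hu
        obtain ⟨_, ⟨x', rfl⟩, _, ⟨y', rfl⟩, rfl⟩ := Submodule.mem_sup.1 hv
        change ⁅φ x + elimMap k A R y, φ x' + elimMap k A R y'⁆ ∈
          φ.range.toSubmodule ⊔ (elimMap k A R).range.toSubmodule
        have h1 := (LieSubalgebra.mem_normalizer_iff _ _).1 (inl_mem_normalizer (R := R) x)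
          _ (LieHom.mem_range_self (elimMap k A R) y')
        have h2 := (LieSubalgebra.mem_normalizer_iff' _ _).1 (inl_mem_normalizer (R := R) x')
          _ (LieHom.mem_range_self (elimMap k A R) y)
        rw [add_lie, lie_add, lie_add, add_assoc]
        refine Submodule.add_mem_sup (φ.range.lie_mem ⟨x, rfl⟩ ⟨x', rfl⟩) ?_
        exact add_mem h1 (add_mem h2 ((elimMap k A R).range.lie_mem ⟨y, rfl⟩ ⟨y', rfl⟩)) }
  have hz : z ∈ S := by
    refine mem_of_forall_of_mem S (fun s => ?_) z
    rcases s with a | r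
    · exact Submodule.mem_sup_left ⟨of k a, lift_of_apply _ a⟩
    · exact Submodule.mem_sup_right ⟨of k (r, []), elimMap_nil r⟩
  obtain ⟨_, ⟨x, rfl⟩, _, ⟨y, rfl⟩, h⟩ := Submodule.mem_sup.1 hz
  exact ⟨x, y, h.symm⟩

end Elimination

/-! ### Iterated elimination -/

section Stages

/-- The left-normed bracket `[a₁, …, a_m]` of a list of generators (zero on the empty list). -/
noncomputable def lnb (k : Type*) [CommRing k] {X : Type*} : List X → FreeLieAlgebra k X
  | [] => 0
  | h :: t => (t.map (of k)).foldl (fun u v => ⁅u, v⁆) (of k h)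

theorem lnb_concat {X : Type*} {l : List X} (hl : l ≠ []) (x : X) :
    lnb k (l ++ [x]) = ⁅lnb k l, of k x⁆ := by
  cases l with
  | nil => exact absurd rfl hl
  | cons h t => simp [lnb]

variable {n : ℕ} {A : Fin n → Type}

/-- The lists surviving after the components of index `< m` have been eliminated: `a₁, …, a_r` with
`i₂ ≤ ⋯ ≤ i_r < m`, with `i₁ > i₂` if `r ≥ 2`, and with `i₁ ≥ m` if `r = 1`. Indices are counted
from `0`. -/
def IsStage (m : ℕ) (l : List (Σ j, A j)) : Prop :=
  ∃ h t, l = h :: t ∧ t.Pairwise (fun x y => x.1 ≤ y.1) ∧ (∀ x ∈ t, (x.1 : ℕ) < m) ∧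
    (t = [] → m ≤ (h.1 : ℕ)) ∧ ∀ x t', t = x :: t' → x.1 < h.1

variable (k A) in
/-- The Lie algebra map sending a list of stage `m`, seen as a generator, to its left-normed
bracket. -/
noncomputable def stageMap (m : ℕ) :
    FreeLieAlgebra k {l : List (Σ j, A j) // IsStage m l} →ₗ⁅k⁆ FreeLieAlgebra k (Σ j, A j) :=
  lift k fun l => lnb k l.1

variable (k A) in
/-- The map of free Lie algebras induced by the inclusion of the component `A i`. -/
noncomputable def inclMap (i : Fin n) :
    FreeLieAlgebra k (A i) →ₗ⁅k⁆ FreeLieAlgebra k (Σ j, A j) :=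
  lift k fun a => of k ⟨i, a⟩

theorem stageMap_zero_bijective : Function.Bijective (stageMap k A 0) := by
  have hl : ∀ l : {l : List (Σ j, A j) // IsStage 0 l}, ∃ x, l.1 = [x] := by
    rintro ⟨_, h, t, rfl, -, ht, -⟩
    cases t with
    | nil => exact ⟨h, rfl⟩
    | cons x t => exact absurd (ht x (by simp)) (by simp)
  choose f hf using hl
  have h : stageMap k A 0 = lift k fun l => of k (f l) :=
    hom_ext fun l => by
      rw [stageMap, lift_of_apply, lift_of_apply, hf l]
      rfl
  rw [h]
  refine lift_of_bijective f ⟨fun l l' h => Subtype.ext ?_, fun x => ?_⟩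
  · rw [hf l, hf l', h]
  · have hx : IsStage 0 [x] := ⟨x, [], rfl, by simp⟩
    exact ⟨⟨[x], hx⟩, (List.cons.inj (hf ⟨[x], hx⟩)).1.symm⟩

/-- A list sorted by component index, with all indices `≤ m`, splits into a part with indices
`< m` followed by a word in the component of index `m`. -/
theorem exists_append_of_sorted {m : ℕ} (hm : m < n) (t : List (Σ j, A j))
    (hs : t.Pairwise (fun x y => x.1 ≤ y.1)) (ht : ∀ x ∈ t, (x.1 : ℕ) < m + 1) :
    ∃ (u : List (Σ j, A j)) (w : List (A ⟨m, hm⟩)),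
      t = u ++ w.map (Sigma.mk ⟨m, hm⟩) ∧ ∀ x ∈ u, (x.1 : ℕ) < m := by
  induction t with
  | nil => exact ⟨[], [], rfl, by simp⟩
  | cons x t ih =>
    obtain ⟨hx, hs'⟩ := List.pairwise_cons.1 hs
    obtain ⟨u, w, rfl, hu⟩ := ih hs' fun y hy => ht y (List.mem_cons_of_mem _ hy)
    by_cases hxm : (x.1 : ℕ) < m
    · exact ⟨x :: u, w, rfl, by simpa [hxm] using hu⟩
    · obtain ⟨i, a⟩ := x
      have hi : i = ⟨m, hm⟩ := Fin.ext (by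
        have := ht ⟨i, a⟩ (by simp)
        simp only at this hxm ⊢
        omega)
      subst hi
      refine ⟨[], a :: w, ?_, by simp⟩
      cases u with
      | nil => rfl
      | cons y u =>
        have h1 := hx y (by simp)
        have h2 := hu y (by simp)
        exact absurd h2 (by simpa [Fin.le_def] using h1)

/-- One elimination step: if `stageMap` is injective at stage `m`, so is it at stage `m + 1`, and the
range at stage `m` is contained in the sum of `L(A m)` and of the range at stage `m + 1`. Indeed
the stage-`m` lists are the letters of `A m` together with the remaining lists `R`, and the
stage-`(m + 1)` lists are the concatenations of a list of `R` with a word in `A m`. -/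
theorem stage_succ {m : ℕ} (hm : m < n) (hinj : Function.Injective (stageMap k A m)) :
    Function.Injective (stageMap k A (m + 1)) ∧
      ∀ z, ∃ x y, stageMap k A m z = inclMap k A ⟨m, hm⟩ x + stageMap k A (m + 1) y := by
  let R := {l : List (Σ j, A j) // IsStage m l ∧ ∀ a : A ⟨m, hm⟩, l ≠ [⟨⟨m, hm⟩, a⟩]}
  have hletter : ∀ a : A ⟨m, hm⟩, IsStage m [(⟨⟨m, hm⟩, a⟩ : Σ j, A j)] := fun a =>
    ⟨_, [], rfl, by simp⟩
  let e : A ⟨m, hm⟩ ⊕ R → {l : List (Σ j, A j) // IsStage m l} :=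
    Sum.elim (fun a => ⟨_, hletter a⟩) fun r => ⟨r.1, r.2.1⟩
  have he : Function.Bijective e := by
    refine ⟨?_, ?_⟩
    · rintro (a | r) (b | s) h
      · simpa [e] using h
      · exact absurd (congrArg Subtype.val h).symm (s.2.2 a)
      · exact absurd (congrArg Subtype.val h) (r.2.2 b)
      · have h0 := congrArg Subtype.val h
        have h' : r.1 = s.1 := h0
        exact congrArg Sum.inr (Subtype.ext h')
    · rintro ⟨l, hl⟩
      by_cases h : ∃ a : A ⟨m, hm⟩, l = [⟨⟨m, hm⟩, a⟩]
      · obtain ⟨a, rfl⟩ := h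
        exact ⟨Sum.inl a, rfl⟩
      · exact ⟨Sum.inr ⟨l, hl, fun a ha => h ⟨a, ha⟩⟩, rfl⟩
  have hstage : ∀ p : R × List (A ⟨m, hm⟩),
      IsStage (m + 1) (p.1.1 ++ p.2.map (Sigma.mk ⟨m, hm⟩)) := by
    rintro ⟨⟨_, ⟨h, t, rfl, hs, ht, h0, h1⟩, hne⟩, w⟩
    -- A one-letter list of `R` has its letter in a component of index `> m`.
    have h0' : t = [] → m < (h.1 : ℕ) := by
      rintro rfl
      refine lt_of_le_of_ne (h0 rfl) fun heq => ?_
      obtain ⟨i, a⟩ := h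
      have hi : i = ⟨m, hm⟩ := Fin.ext heq.symm
      subst hi
      exact hne a rfl
    refine ⟨h, t ++ w.map (Sigma.mk ⟨m, hm⟩), rfl, ?_, ?_, ?_, ?_⟩
    · refine List.pairwise_append.2 ⟨hs, ?_, ?_⟩
      · rw [List.pairwise_map]
        exact List.pairwise_of_forall fun _ _ => le_rfl
      · intro x hx y hy
        obtain ⟨a, -, rfl⟩ := List.mem_map.1 hy
        exact (ht x hx).le
    · intro x hx
      rcases List.mem_append.1 hx with hx | hx
      · exact (ht x hx).trans (Nat.lt_succ_self m)
      · obtain ⟨a, -, rfl⟩ := List.mem_map.1 hx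
        exact Nat.lt_succ_self m
    · intro h
      exact h0' (List.append_eq_nil_iff.1 h).1
    · intro x t' hx
      cases t with
      | nil =>
        cases w with
        | nil => simp at hx
        | cons a w =>
          obtain ⟨rfl, -⟩ := List.cons.inj hx
          exact h0' rfl
      | cons y t =>
        obtain ⟨rfl, -⟩ := List.cons.inj hx
        exact h1 _ _ rfl
  let c : R × List (A ⟨m, hm⟩) → {l : List (Σ j, A j) // IsStage (m + 1) l} :=
    fun p => ⟨_, hstage p⟩
  have hc : Function.Bijective c := by
    refine ⟨?_, ?_⟩
    · rintro ⟨⟨_, ⟨h, t, rfl, hs, ht, h0, h1⟩, hne⟩, w⟩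
        ⟨⟨_, ⟨h', t', rfl, hs', ht', h0', h1'⟩, hne'⟩, w'⟩ heq
      obtain ⟨rfl, heq⟩ := List.cons.inj (congrArg Subtype.val heq)
      -- The tail of the list of `R` is recovered as the letters of index `< m`.
      have hfilter : ∀ (t : List (Σ j, A j)) (w : List (A ⟨m, hm⟩)), (∀ x ∈ t, (x.1 : ℕ) < m) →
          (t ++ w.map (Sigma.mk (β := A) ⟨m, hm⟩)).filter (fun x => (x.1 : ℕ) < m) = t := by
        intro t w ht
        rw [List.filter_append, List.filter_eq_self.2 (by simpa using ht),
          List.filter_eq_nil_iff.2 (by simp), List.append_nil]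
      have htt : t = t' := by
        rw [← hfilter t w ht, ← hfilter t' w' ht']
        exact congrArg _ heq
      subst htt
      have hw := List.append_cancel_left heq
      have hww : w = w' := List.map_injective_iff.2 sigma_mk_injective hw
      subst hww
      rfl
    · rintro ⟨_, h, t, rfl, hs, ht, h0, h1⟩
      obtain ⟨u, w, rfl, hu⟩ := exists_append_of_sorted hm t hs ht
      suffices hR : IsStage m (h :: u) ∧ ∀ a : A ⟨m, hm⟩, h :: u ≠ [⟨⟨m, hm⟩, a⟩] from
        ⟨((⟨h :: u, hR⟩ : R), w), rfl⟩
      refine ⟨⟨h, u, rfl, (List.pairwise_append.1 hs).1, hu, ?_, ?_⟩, ?_⟩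
      · rintro rfl
        cases w with
        | nil => exact (Nat.le_succ m).trans (h0 rfl)
        | cons a w => exact (Fin.lt_def.1 (h1 _ _ rfl)).le
      · rintro x u' rfl
        exact h1 _ _ rfl
      · rintro a heq
        obtain ⟨rfl, rfl⟩ := List.cons.inj heq
        cases w with
        | nil => exact absurd (h0 rfl) (by simp)
        | cons b w => exact absurd (h1 _ _ rfl) (lt_irrefl _)
  have hmap : (stageMap k A (m + 1)).comp (lift k fun p => of k (c p)) =
      ((stageMap k A m).comp (lift k fun s => of k (e s))).comp (elimMap k (A ⟨m, hm⟩) R) := by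
    refine hom_ext fun p => ?_
    obtain ⟨r, w⟩ := p
    simp only [LieHom.comp_apply, lift_of_apply]
    induction w using List.reverseRecOn with
    | nil =>
      rw [elimMap_nil, lift_of_apply, stageMap, stageMap, lift_of_apply, lift_of_apply]
      exact congrArg (lnb k) (List.append_nil _)
    | append_singleton w a ih =>
      rw [elimMap_concat, LieHom.map_lie, LieHom.map_lie, ← ih, lift_of_apply, stageMap, stageMap,
        lift_of_apply, lift_of_apply, lift_of_apply]
      have hr : r.1 ≠ [] := by
        obtain ⟨_, ⟨h, t, rfl, -⟩, -⟩ := r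
        simp
      change lnb k (r.1 ++ (w ++ [a]).map (Sigma.mk ⟨m, hm⟩)) =
        ⁅lnb k (r.1 ++ w.map (Sigma.mk ⟨m, hm⟩)), of k ⟨⟨m, hm⟩, a⟩⁆
      rw [List.map_append, ← List.append_assoc]
      exact lnb_concat (by simp [hr]) _
  have hcl := lift_of_bijective (k := k) c hc
  have hel := lift_of_bijective (k := k) e he
  refine ⟨?_, fun z => ?_⟩
  · refine Function.Injective.of_comp_right (g := lift k fun p => of k (c p)) ?_ hcl.2
    have h : (stageMap k A (m + 1)) ∘ (lift k fun p => of k (c p)) =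
      (stageMap k A m) ∘ (lift k fun s => of k (e s)) ∘ (elimMap k (A ⟨m, hm⟩) R) :=
      funext fun x => LieHom.congr_fun hmap x
    rw [h]
    exact hinj.comp (hel.1.comp elimMap_injective)
  · obtain ⟨z, rfl⟩ := hel.2 z
    obtain ⟨x, y, rfl⟩ := exists_add_elimMap z
    refine ⟨x, lift k (fun p => of k (c p)) y, ?_⟩
    rw [map_add, map_add]
    congr 1
    · have h : ((stageMap k A m).comp (lift k fun s => of k (e s))).comp
          (lift k fun a => of k (Sum.inl a)) = inclMap k A ⟨m, hm⟩ := hom_ext fun a => by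
        simp [stageMap, inclMap, e, lnb]
      exact LieHom.congr_fun h x
    · exact (LieHom.congr_fun hmap y).symm

/-- After eliminating the first `m` components, the free Lie algebra is the sum of the corresponding
`L(A i)` and of a copy of the free Lie algebra on the stage-`m` lists. The summation runs over all
`i`, so the components of index `≥ m` are allowed too; directness is proved separately. -/
theorem stage_all {m : ℕ} (hm : m ≤ n) :
    Function.Injective (stageMap k A m) ∧
      ∀ z, ∃ (x : ∀ i, FreeLieAlgebra k (A i)) (y : _),
        z = ∑ i, inclMap k A i (x i) + stageMap k A m y := by
  induction m with
  | zero =>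
    refine ⟨stageMap_zero_bijective.1, fun z => ?_⟩
    obtain ⟨y, rfl⟩ := stageMap_zero_bijective.2 z
    exact ⟨0, y, by simp⟩
  | succ m ih =>
    obtain ⟨hinj, hspan⟩ := ih (by omega)
    obtain ⟨hinj', hspan'⟩ := stage_succ (k := k) (A := A) (m := m) (by omega) hinj
    refine ⟨hinj', fun z => ?_⟩
    obtain ⟨x, y, rfl⟩ := hspan z
    obtain ⟨x', y', hy⟩ := hspan' y
    refine ⟨x + Pi.single ⟨m, by omega⟩ x', y', ?_⟩
    have hsum : ∑ i, inclMap k A i (Pi.single (M := fun i => FreeLieAlgebra k (A i)) ⟨m, by omega⟩ x' i) =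
        inclMap k A ⟨m, by omega⟩ x' := by
      rw [Finset.sum_eq_single ⟨m, by omega⟩]
      · simp
      · intro j _ hj
        rw [Pi.single_eq_of_ne hj, map_zero]
      · simp
    simp only [Pi.add_apply, map_add, Finset.sum_add_distrib]
    rw [hsum, hy, add_assoc]

/-! ### The retractions and the ideal -/

variable (k A) in
open Classical in
/-- The retraction onto the free Lie algebra on `A i` killing the generators of the other
components. -/
noncomputable def proj (i : Fin n) : FreeLieAlgebra k (Σ j, A j) →ₗ⁅k⁆ FreeLieAlgebra k (A i) :=
  lift k fun s => if h : s.1 = i then of k (h ▸ s.2) else 0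

theorem proj_of_self (i : Fin n) (a : A i) : proj k A i (of k ⟨i, a⟩) = of k a := by
  simp [proj]

theorem proj_of_ne {i j : Fin n} (h : j ≠ i) (a : A j) : proj k A i (of k ⟨j, a⟩) = 0 := by
  simp [proj, h]

theorem proj_inclMap_self (i : Fin n) (x : FreeLieAlgebra k (A i)) :
    proj k A i (inclMap k A i x) = x := by
  have h : (proj k A i).comp (inclMap k A i) = LieHom.id := hom_ext fun a => by
    simp [inclMap, proj_of_self]
  exact LieHom.congr_fun h x

theorem proj_inclMap_ne {i j : Fin n} (hij : j ≠ i) (x : FreeLieAlgebra k (A j)) :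
    proj k A i (inclMap k A j x) = 0 := by
  have h : (proj k A i).comp (inclMap k A j) = 0 := hom_ext fun a => by
    simp [inclMap, proj_of_ne hij]
  exact LieHom.congr_fun h x

variable (k A) in
/-- The ideal generated by the brackets of generators from distinct components. -/
noncomputable def mixedIdeal : LieIdeal k (FreeLieAlgebra k (Σ j, A j)) :=
  LieSubmodule.lieSpan k _
    { z | ∃ (i j : Fin n) (a : A i) (b : A j), i ≠ j ∧
        z = ⁅of k (⟨i, a⟩ : Σ k, A k), of k (⟨j, b⟩ : Σ k, A k)⁆ }

theorem proj_of_mem_mixedIdeal (i : Fin n) {z : FreeLieAlgebra k (Σ j, A j)}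
    (hz : z ∈ mixedIdeal k A) : proj k A i z = 0 := by
  have h : mixedIdeal k A ≤ (proj k A i).ker := by
    refine LieSubmodule.lieSpan_le.2 ?_
    rintro _ ⟨j, j', a, b, hj, rfl⟩
    rw [SetLike.mem_coe, LieHom.mem_ker, LieHom.map_lie]
    by_cases hji : j = i
    · rw [proj_of_ne (fun h => hj (hji.trans h.symm)) b, lie_zero]
    · rw [proj_of_ne hji a, zero_lie]
  exact LieHom.mem_ker.1 (h hz)

theorem lnb_mem_mixedIdeal {x y : Σ j, A j} (h : x.1 ≠ y.1) (t : List (Σ j, A j)) :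
    lnb k (x :: y :: t) ∈ mixedIdeal k A := by
  induction t using List.reverseRecOn with
  | nil => exact LieSubmodule.subset_lieSpan ⟨x.1, y.1, x.2, y.2, h, by simp [lnb]⟩
  | append_singleton t z ih =>
    have := lnb_concat (k := k) (List.cons_ne_nil x (y :: t)) z
    rw [List.cons_append, List.cons_append] at this
    rw [this, ← lie_skew]
    exact neg_mem ((mixedIdeal k A).lie_mem ih)

theorem stageMap_mem_mixedIdeal (y) : stageMap k A n y ∈ mixedIdeal k A := by
  refine mem_of_forall_of_mem
    ((LieIdeal.toLieSubalgebra k _ (mixedIdeal k A)).comap (stageMap k A n)) (fun l => ?_) y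
  rw [LieSubalgebra.mem_comap, stageMap, lift_of_apply]
  obtain ⟨_, h, t, rfl, -, -, h0, h1⟩ := l
  cases t with
  | nil => exact absurd (h0 rfl) (by omega)
  | cons x t => exact lnb_mem_mixedIdeal (h1 _ _ rfl).ne' t

theorem mem_mixedIdeal_iff (z : FreeLieAlgebra k (Σ j, A j)) :
    z ∈ mixedIdeal k A ↔ ∃ y, stageMap k A n y = z := by
  refine ⟨fun hz => ?_, ?_⟩
  · obtain ⟨x, y, rfl⟩ := (stage_all (k := k) (A := A) le_rfl).2 z
    -- Each component `x i` is seen by the `i`-th retraction, which kills the ideal.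
    have hx : ∀ i, x i = 0 := fun i => by
      have h := proj_of_mem_mixedIdeal i hz
      rw [map_add, proj_of_mem_mixedIdeal i (stageMap_mem_mixedIdeal y), add_zero, map_sum,
        Finset.sum_eq_single i (fun j _ hj => proj_inclMap_ne hj _) (by simp),
        proj_inclMap_self] at h
      exact h
    exact ⟨y, by simp [hx]⟩
  · rintro ⟨y, rfl⟩
    exact stageMap_mem_mixedIdeal y

variable (k A) in
theorem iSupIndep_components :
    iSupIndep (fun o : Option (Fin n) =>
      o.elim (mixedIdeal k A).toSubmodule (fun i => LinearMap.range (inclMap k A i).toLinearMap)) := by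
  rintro (_ | i)
  · -- `E` is the identity on every `L(A i)` and zero on the ideal.
    let E : FreeLieAlgebra k (Σ j, A j) →ₗ[k] FreeLieAlgebra k (Σ j, A j) :=
      ∑ i, (inclMap k A i).toLinearMap.comp (proj k A i).toLinearMap
    have hE : ∀ z, E z = ∑ i, inclMap k A i (proj k A i z) := fun z => by
      simp [E]
    have hle : (⨆ (j : Option (Fin n)) (_ : j ≠ none),
        j.elim (mixedIdeal k A).toSubmodule
          (fun i => LinearMap.range (inclMap k A i).toLinearMap)) ≤
        LinearMap.eqLocus E LinearMap.id := by
      refine iSup₂_le ?_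
      rintro (_ | j) hj
      · exact absurd rfl hj
      · rintro _ ⟨x, rfl⟩
        change E (inclMap k A j x) = inclMap k A j x
        rw [hE, Finset.sum_eq_single j, proj_inclMap_self]
        · intro i _ hi
          rw [proj_inclMap_ne hi.symm, map_zero]
        · simp
    refine Submodule.disjoint_def.2 fun z hz hz' => ?_
    have h1 : E z = z := hle hz'
    rw [← h1, hE]
    exact Finset.sum_eq_zero fun i _ => by
      rw [proj_of_mem_mixedIdeal i hz, map_zero]
  · have hle : (⨆ (j : Option (Fin n)) (_ : j ≠ some i),
        j.elim (mixedIdeal k A).toSubmodule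
          (fun i => LinearMap.range (inclMap k A i).toLinearMap)) ≤
        LinearMap.ker (proj k A i).toLinearMap := by
      refine iSup₂_le ?_
      rintro (_ | j) hj
      · exact fun z hz => proj_of_mem_mixedIdeal i hz
      · rintro _ ⟨x, rfl⟩
        exact proj_inclMap_ne (fun h => hj (congrArg some h)) x
    refine Submodule.disjoint_def.2 fun z hz hz' => ?_
    obtain ⟨x, rfl⟩ := hz
    have h1 : proj k A i (inclMap k A i x) = 0 := hle hz'
    rw [proj_inclMap_self] at h1
    subst h1
    exact map_zero (inclMap k A i)

variable (k A) in
theorem iSup_components :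
    (⨆ i : Fin n, LinearMap.range (inclMap k A i).toLinearMap) ⊔
      (mixedIdeal k A).toSubmodule = ⊤ := by
  refine eq_top_iff.2 fun z _ => ?_
  obtain ⟨x, y, rfl⟩ := (stage_all (k := k) (A := A) le_rfl).2 z
  refine Submodule.add_mem_sup (Submodule.sum_mem _ fun i _ => ?_) (stageMap_mem_mixedIdeal y)
  exact Submodule.mem_iSup_of_mem i ⟨x i, rfl⟩

/-! ### Linear independence -/

attribute [local instance] LieRing.ofAssociativeRing in
/-- The generators are linearly independent: they map to the variables of a polynomial ring,
viewed as an abelian Lie algebra. -/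
theorem linearIndependent_of (Y : Type*) : LinearIndependent k (of k : Y → FreeLieAlgebra k Y) := by
  let F : FreeLieAlgebra k Y →ₗ⁅k⁆ MvPolynomial Y k := lift k MvPolynomial.X
  refine LinearIndependent.of_comp F.toLinearMap ?_
  have h : F.toLinearMap ∘ of k = MvPolynomial.X := funext fun y => lift_of_apply _ y
  rw [h]
  exact MvPolynomial.linearIndependent_X Y k

theorem isStage_iff (l : List (Σ j, A j)) :
    IsStage n l ↔ ∃ h h' t, l = h :: h' :: t ∧ h'.1 < h.1 ∧
      List.IsChain (· ≤ ·) ((h' :: t).map Sigma.fst) := by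
  simp only [List.isChain_iff_pairwise, List.pairwise_map]
  constructor
  · rintro ⟨h, t, rfl, hs, -, h0, h1⟩
    cases t with
    | nil => exact absurd (h0 rfl) (by omega)
    | cons x t => exact ⟨h, x, t, rfl, h1 _ _ rfl, hs⟩
  · rintro ⟨h, x, t, rfl, hlt, hs⟩
    refine ⟨h, x :: t, rfl, hs, fun y _ => y.1.2, by simp, ?_⟩
    rintro y t' heq
    obtain ⟨rfl, -⟩ := List.cons.inj heq
    exact hlt

theorem isStage_ofFn {m : ℕ} (hm : 2 ≤ m) (ι : Fin m → Fin n)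
    (h10 : ∀ (h1 : (1 : ℕ) < m) (h0 : (0 : ℕ) < m), ι ⟨1, h1⟩ < ι ⟨0, h0⟩)
    (hle : ∀ s t : Fin m, 1 ≤ (s : ℕ) → s ≤ t → ι s ≤ ι t) (g : ∀ t : Fin m, A (ι t)) :
    IsStage n (List.ofFn fun t => (⟨ι t, g t⟩ : Σ j, A j)) := by
  obtain ⟨m, rfl⟩ : ∃ m', m = m' + 2 := ⟨m - 2, by omega⟩
  refine ⟨⟨ι 0, g 0⟩, List.ofFn fun t : Fin (m + 1) => (⟨ι t.succ, g t.succ⟩ : Σ j, A j),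
    List.ofFn_succ, ?_, fun x _ => x.1.2, by simp, ?_⟩
  · refine List.pairwise_ofFn.2 fun s t hst => hle _ _ (by simp) (by simpa using hst.le)
  · intro x t' h
    rw [List.ofFn_succ] at h
    obtain ⟨rfl, -⟩ := List.cons.inj h
    exact h10 (by omega) (by omega)

variable (k) in
theorem linearIndependent_lnb {m : ℕ} (hm : 2 ≤ m) (ι : Fin m → Fin n)
    (h10 : ∀ (h1 : (1 : ℕ) < m) (h0 : (0 : ℕ) < m), ι ⟨1, h1⟩ < ι ⟨0, h0⟩)
    (hle : ∀ s t : Fin m, 1 ≤ (s : ℕ) → s ≤ t → ι s ≤ ι t) :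
    LinearIndependent k (fun g : (∀ t : Fin m, A (ι t)) =>
      lnb k (List.ofFn fun t => (⟨ι t, g t⟩ : Σ j, A j))) := by
  let c : (∀ t : Fin m, A (ι t)) → {l : List (Σ j, A j) // IsStage n l} :=
    fun g => ⟨_, isStage_ofFn hm ι h10 hle g⟩
  have hc : Function.Injective c := fun g g' h => by
    have h1 := List.ofFn_injective (Subtype.ext_iff.1 h)
    exact funext fun t => eq_of_heq (Sigma.mk.inj (congrFun h1 t)).2
  have h := ((linearIndependent_of (k := k) {l : List (Σ j, A j) // IsStage n l}).comp c hc).map'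
    (stageMap k A n).toLinearMap (LinearMap.ker_eq_bot.2 (stage_all le_rfl).1)
  have hcomp : (stageMap k A n).toLinearMap ∘ of k ∘ c = fun g =>
      lnb k (List.ofFn fun t => (⟨ι t, g t⟩ : Σ j, A j)) := funext fun g =>
    lift_of_apply (fun l : {l : List (Σ j, A j) // IsStage n l} => lnb k l.1) (c g)
  rw [← hcomp]
  exact h

variable (k) in
/-- A linearly independent family indexed by a finite product spans a tensor product of free
modules. -/
theorem nonempty_span_equiv {m : ℕ} {B : Fin m → Type} {M : Type*} [AddCommGroup M] [Module k M]
    {v : (∀ t, B t) → M} (hv : LinearIndependent k v) :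
    Nonempty (Submodule.span k (Set.range v) ≃ₗ[k] PiTensorProduct k fun t => (B t →₀ k)) :=
  ⟨(Module.Basis.span hv).equiv
    (Basis.piTensorProduct fun t => (Finsupp.basisSingleOne : Module.Basis (B t) k (B t →₀ k)))
    (Equiv.refl _)⟩

end Stages

/-! ### Specialization to `ℤ` -/

section Integers

variable (n : ℕ) (A : Fin n → Type)

theorem lnbSigma_eq (l : List (Σ j, A j)) : lnbSigma n A l = lnb ℤ l := by
  cases l <;> rfl

/-- Stage-`n` lists are the same as good lists, and under this identification `Psi` is the last
elimination map. -/
theorem exists_equiv_Psi : ∃ E : FreeLieAlgebra ℤ (GoodList n A) ≃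
    FreeLieAlgebra ℤ {l : List (Σ j, A j) // IsStage n l}, ∀ x, Psi n A x = stageMap ℤ A n (E x) := by
  let c : GoodList n A → {l : List (Σ j, A j) // IsStage n l} :=
    fun l => ⟨l.1, (isStage_iff l.1).2 l.2⟩
  have hc : Function.Bijective c :=
    ⟨fun l l' h => by
      have h0 := congrArg Subtype.val h
      have h' : l.1 = l'.1 := h0
      exact Subtype.ext h',
     fun l => ⟨⟨l.1, (isStage_iff l.1).1 l.2⟩, rfl⟩⟩
  refine ⟨Equiv.ofBijective _ (lift_of_bijective (k := ℤ) c hc), fun x => ?_⟩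
  have h : (lift ℤ fun l : GoodList n A => lnbSigma n A l.1) =
      (stageMap ℤ A n).comp (lift ℤ fun l => of ℤ (c l)) := hom_ext fun l => by
    refine (lift_of_apply _ l).trans ?_
    refine (lnbSigma_eq n A l.1).trans (Eq.symm ?_)
    refine (congrArg (stageMap ℤ A n) (lift_of_apply _ l)).trans ?_
    exact lift_of_apply _ (c l)
  exact LieHom.congr_fun h x

end Integers

end Lazard

/-- For `n ≥ 2` and types `A₁, …, A_n`, with `L` the free Lie algebra on their disjoint
union:  (i) each canonical map from the free Lie algebra on `A i` is injective (so
`L(A_i)` is free on `A_i`);  (ii) as a `ℤ`-module, `L` is the internal direct sum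
`L(A₁) ⊕ ⋯ ⊕ L(A_n) ⊕ I`;  (iii) `I` is freely generated by the left-normed brackets
indexed by the good lists, and in particular, for each fixed admissible index sequence
`ι : Fin m → Fin n` the corresponding brackets are `ℤ`-linearly independent with span
isomorphic to the tensor product of the free `ℤ`-modules on the `A (ι t)`. -/
theorem lazard_decomposition (n : ℕ) (hn : 2 ≤ n) (A : Fin n → Type) :
    (∀ i : Fin n, Function.Injective (phi n A i)) ∧
    (iSupIndep
        (fun o : Option (Fin n) =>
          o.elim (crossIdeal n A).toSubmodule
            (fun i => LinearMap.range (phi n A i).toLinearMap)) ∧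
      ((⨆ i : Fin n, LinearMap.range (phi n A i).toLinearMap) ⊔
          (crossIdeal n A).toSubmodule = ⊤)) ∧
    (Function.Injective (Psi n A) ∧
      Set.range (Psi n A) = ((crossIdeal n A : Set (FreeLieAlgebra ℤ (Σ j, A j))))) ∧
    (∀ (m : ℕ), 2 ≤ m → ∀ ι : Fin m → Fin n,
      (∀ (h1 : (1 : ℕ) < m) (h0 : (0 : ℕ) < m), ι ⟨1, h1⟩ < ι ⟨0, h0⟩) →
      (∀ s t : Fin m, 1 ≤ (s : ℕ) → s ≤ t → ι s ≤ ι t) →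
      (LinearIndependent ℤ
          (fun g : (∀ t : Fin m, A (ι t)) =>
            lnbSigma n A (List.ofFn fun t => ⟨ι t, g t⟩)) ∧
        Nonempty
          ((Submodule.span ℤ
              (Set.range fun g : (∀ t : Fin m, A (ι t)) =>
                lnbSigma n A (List.ofFn fun t => ⟨ι t, g t⟩))) ≃ₗ[ℤ]
            PiTensorProduct ℤ fun t : Fin m => (A (ι t) →₀ ℤ)))) := by
  obtain ⟨E, hE⟩ := Lazard.exists_equiv_Psi n A
  refine ⟨fun i => ?_, ⟨Lazard.iSupIndep_components ℤ A, Lazard.iSup_components ℤ A⟩,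
    ⟨fun x y h => ?_, ?_⟩, fun m hm ι h10 hle => ?_⟩
  · exact Function.LeftInverse.injective (g := Lazard.proj ℤ A i) (Lazard.proj_inclMap_self i)
  · rw [hE, hE] at h
    exact E.injective ((Lazard.stage_all (k := ℤ) le_rfl).1 h)
  · ext z
    refine Iff.trans ?_ (Lazard.mem_mixedIdeal_iff (k := ℤ) z).symm
    constructor
    · rintro ⟨x, rfl⟩
      exact ⟨E x, (hE x).symm⟩
    · rintro ⟨y, rfl⟩
      exact ⟨E.symm y, by rw [hE, E.apply_symm_apply]⟩
  · have hli := Lazard.linearIndependent_lnb ℤ (A := A) hm ι h10 hle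
    have hli' : LinearIndependent ℤ (fun g : (∀ t : Fin m, A (ι t)) =>
        lnbSigma n A (List.ofFn fun t => ⟨ι t, g t⟩)) := by
      simp only [Lazard.lnbSigma_eq]
      exact hli
    exact ⟨hli', Lazard.nonempty_span_equiv ℤ hli'⟩
end
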